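/- arXiv:1206.2424 — 5 statements merged into one kernel-verified Lean document; each statement's English description precedes it below -/
import Mathlib

section
/- For every integer s ≥ 1, ∑_{j=2}^{2s} (-1)^j ζ(j, 2s+1-j) = (4^s - s - 2) ζ(2s+1) - 2 ∑_{k=1}^{s-1} (4^{s-k} - 1) ζ(2k) ζ(2s+1-2k). -/
/-!
Write `w = 2s + 1` and `A n = H_{2n} - H_n`.

*Reduction to a linear Euler sum.* For `m < n` the alternating sum over `j` of `1 / (n^j m^(w-j))` is
geometric and equals `1 / (m^(w-2) n (n+m)) + 1 / (n^(w-1) (n+m))` (`alternating_geometric`). Summing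
the first term over `n > m` telescopes to `A m / m^(2s)` (`hasSum_first_part`); summing the second over
`m < n` gives `A n / n^(2s) - 1 / (2 n^w)` (`second_part`). So the left side is
`2 ∑ A n / n^(2s) - ζ(w) / 2`.

*Evaluation of the Euler sum* (`hasSum_halfHarmonic`). Take the array
`κ(N, K) = (-1)^(K+1) / (K (K² - 4N²))`, zero at `K = 2N`, which is absolutely summable over
`N, K ≥ 1` (`summable_kernel`). Its row sums involve `A N` (`hasSum_kernel_right`), while its column
sums are explicit multiples of `1 / K³` (`hasSum_kernel_left`). With weights `a = 1/N²` and `b = 4/K²`,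
the difference `κ a^(s-1) - κ b^(s-1)` is a finite geometric sum whose terms separate into
`1/N^(2k)` times `(-1)^(K+1) / K^(w-2k)`, hence sums to the products `(4^(s-k) - 1) ζ(2k) ζ(w-2k)`, up
to a diagonal contribution `(s-1) ζ(w)` (`kernel_geometric`). Summing the weighted arrays by rows and
by columns respectively gives a linear equation for `∑ A n / n^(2s)`.
-/

open scoped BigOperators

/-- Riemann zeta value at a natural number `s ≥ 2`: `ζ(s) = ∑_{n≥1} 1/n^s`. -/
noncomputable def rzeta (s : ℕ) : ℝ := ∑' n : ℕ, 1 / (n : ℝ) ^ s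

/-- Double zeta value `ζ(a,b) = ∑_{n≥1} ∑_{m=1}^{n-1} 1/(n^a m^b)`. -/
noncomputable def dzeta (a b : ℕ) : ℝ :=
  ∑' n : ℕ, ∑ m ∈ Finset.Ioo 0 n, 1 / ((n : ℝ) ^ a * (m : ℝ) ^ b)

/-- Witten zeta function `W(r,s,t) = ∑_{n,m ≥ 1} 1/(n^r m^s (n+m)^t)`. -/
noncomputable def wzeta (r s t : ℕ) : ℝ :=
  ∑' n : ℕ+, ∑' m : ℕ+, 1 / ((n : ℝ) ^ r * (m : ℝ) ^ s * ((n : ℝ) + (m : ℝ)) ^ t)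

/-- Alternating double zeta value `ζ(a, b̄)`. -/
noncomputable def dzetaAB (a b : ℕ) : ℝ :=
  ∑' n : ℕ, ∑ m ∈ Finset.Ioo 0 n, (1 / (n : ℝ) ^ a) * ((-1 : ℝ) ^ (m - 1) / (m : ℝ) ^ b)

/-- Alternating double zeta value `ζ(ā, b)`. -/
noncomputable def dzetaBA (a b : ℕ) : ℝ :=
  ∑' n : ℕ, ∑ m ∈ Finset.Ioo 0 n, ((-1 : ℝ) ^ (n - 1) / (n : ℝ) ^ a) * (1 / (m : ℝ) ^ b)

/-- Doubly alternating double zeta value `ζ(ā, b̄)`. -/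
noncomputable def dzetaBB (a b : ℕ) : ℝ :=
  ∑' n : ℕ, ∑ m ∈ Finset.Ioo 0 n,
    ((-1 : ℝ) ^ (n - 1) / (n : ℝ) ^ a) * ((-1 : ℝ) ^ (m - 1) / (m : ℝ) ^ b)

/-- The `n`-th harmonic number `H_n = ∑_{k=1}^n 1/k` (with `H_0 = 0`). -/
noncomputable def H (n : ℕ) : ℝ := ∑ k ∈ Finset.Icc 1 n, 1 / (k : ℝ)

/-! ### Convergence and telescoping -/

theorem hasSum_of_eq {ι : Type*} {f g : ι → ℝ} {a b : ℝ} (h : HasSum f a) (hfg : ∀ i, g i = f i)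
    (hab : b = a) : HasSum g b := by
  obtain rfl : g = f := funext hfg
  rwa [hab]

theorem hasSum_swap {f : ℕ × ℕ → ℝ} {S : ℝ} (h : HasSum f S) :
    HasSum (fun p : ℕ × ℕ => f (p.2, p.1)) S := by
  have h' : HasSum (f ∘ Equiv.prodComm ℕ ℕ) S := (Equiv.prodComm ℕ ℕ).hasSum_iff.2 h
  exact hasSum_of_eq h' (fun p => rfl) rfl

theorem rzeta_eq_shift (r : ℕ) (hr : 2 ≤ r) : rzeta r = ∑' n : ℕ, 1 / ((n : ℝ) + 1) ^ r := by
  have h : Summable (fun n : ℕ => 1 / (n : ℝ) ^ r) := Real.summable_one_div_nat_pow.2 (by omega)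
  rw [rzeta, h.tsum_eq_zero_add]
  have : r ≠ 0 := by omega
  simp [this]

theorem summable_shift (r : ℕ) (hr : 2 ≤ r) : Summable (fun n : ℕ => 1 / ((n : ℝ) + 1) ^ r) := by
  have h : Summable (fun n : ℕ => 1 / (n : ℝ) ^ r) := Real.summable_one_div_nat_pow.2 (by omega)
  simpa using (summable_nat_add_iff 1).2 h

/-- Separating bound: `S ≥ max x y ≥ √(xy)`, so `1/(xyS)` is dominated by a product. -/
theorem one_div_mul_le (x y S : ℝ) (hx : 0 < x) (hy : 0 < y) (hxS : x ≤ S) (hyS : y ≤ S) :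
    1 / (x * y * S) ≤ x ^ (-(3 / 2) : ℝ) * y ^ (-(3 / 2) : ℝ) := by
  have key : ∀ z : ℝ, 0 < z → z ^ (-(3 / 2) : ℝ) = 1 / (z * √z) := by
    intro z hz
    rw [Real.rpow_neg hz.le, show (3 / 2 : ℝ) = 1 + 1 / 2 by norm_num, Real.rpow_add hz,
      Real.rpow_one, Real.sqrt_eq_rpow, ← one_div]
  rw [key x hx, key y hy, div_mul_div_comm, one_mul]
  have hsx : 0 < √x := Real.sqrt_pos.2 hx
  have hsy : 0 < √y := Real.sqrt_pos.2 hy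
  have h : √x * √y ≤ S := by
    have h1 : √x ≤ √S := Real.sqrt_le_sqrt hxS
    have h2 : √y ≤ √S := Real.sqrt_le_sqrt hyS
    have h3 : √S * √S = S := Real.mul_self_sqrt (by linarith)
    nlinarith
  apply one_div_le_one_div_of_le (by positivity)
  calc x * √x * (y * √y) = x * y * (√x * √y) := by ring
    _ ≤ x * y * S := by gcongr

theorem summable_nat_prod :
    Summable (fun p : ℕ × ℕ => (p.1 : ℝ) ^ (-(3 / 2) : ℝ) * (p.2 : ℝ) ^ (-(3 / 2) : ℝ)) := by
  have h : Summable (fun n : ℕ => (n : ℝ) ^ (-(3 / 2) : ℝ)) :=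
    Real.summable_nat_rpow.2 (by norm_num)
  exact h.mul_of_nonneg h (fun n => by positivity) (fun n => by positivity)

/-- Since `|K² - 4N²| = |K - 2N| (K + 2N)` and `(N, K) ↦ (K, K - 2N)` is injective, the double
series is dominated by `∑ K^(-3/2) |d|^(-3/2)` over `K ∈ ℕ`, `d ∈ ℤ`. -/
theorem summable_kernel :
    Summable (fun p : ℕ × ℕ => 1 / (((p.2 : ℝ) + 1) *
      |((p.2 : ℝ) + 1) ^ 2 - 4 * ((p.1 : ℝ) + 1) ^ 2|)) := by
  have h1 : Summable (fun n : ℕ => (n : ℝ) ^ (-(3 / 2) : ℝ)) :=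
    Real.summable_nat_rpow.2 (by norm_num)
  have h2 : Summable (fun n : ℤ => |(n : ℝ)| ^ (-(3 / 2) : ℝ)) :=
    Real.summable_abs_int_rpow (by norm_num)
  have h3 := h1.mul_of_nonneg h2 (fun n => by positivity) (fun n => by positivity)
  let φ : ℕ × ℕ → ℕ × ℤ := fun p => (p.2 + 1, (p.2 : ℤ) + 1 - 2 * ((p.1 : ℤ) + 1))
  have hφ : Function.Injective φ := by
    rintro ⟨a, b⟩ ⟨c, d⟩ h
    simp only [φ, Prod.mk.injEq] at h
    ext <;> simp <;> omega
  refine Summable.of_nonneg_of_le (fun p => by positivity) ?_ (h3.comp_injective hφ)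
  rintro ⟨n, k⟩
  simp only [φ, Function.comp]
  push_cast
  set N : ℝ := (n : ℝ) + 1 with hN
  set K : ℝ := (k : ℝ) + 1 with hK
  have hN0 : 0 < N := by positivity
  have hK0 : 0 < K := by positivity
  have e : |K ^ 2 - 4 * N ^ 2| = |K - 2 * N| * (K + 2 * N) := by
    rw [show K ^ 2 - 4 * N ^ 2 = (K - 2 * N) * (K + 2 * N) by ring, abs_mul,
      abs_of_pos (show 0 < K + 2 * N by positivity)]
  rcases eq_or_ne (K - 2 * N) 0 with h0 | h0
  · rw [e, h0]; simp
  · rw [e, ← mul_assoc]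
    refine one_div_mul_le K _ _ hK0 (abs_pos.2 h0) (by linarith) ?_
    rw [abs_le]; constructor <;> linarith

/-- Telescoping with step `p`. The differences need not be absolutely summable: this identifies a
limit of partial sums. -/
theorem tendsto_telescope (f : ℕ → ℝ) (hf : Filter.Tendsto f Filter.atTop (nhds 0)) (p : ℕ) :
    Filter.Tendsto (fun M => ∑ i ∈ Finset.range M, (f i - f (i + p))) Filter.atTop
      (nhds (∑ i ∈ Finset.range p, f i)) := by
  have e : ∀ M, ∑ i ∈ Finset.range M, (f i - f (i + p))
      = ∑ i ∈ Finset.range p, f i - ∑ i ∈ Finset.range p, f (M + i) := by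
    intro M
    have h1 := Finset.sum_range_add f M p
    have h2 := Finset.sum_range_add f p M
    rw [Finset.sum_sub_distrib]
    rw [add_comm p M] at h2
    have h3 : ∑ i ∈ Finset.range M, f (i + p) = ∑ i ∈ Finset.range M, f (p + i) :=
      Finset.sum_congr rfl fun i _ => by rw [add_comm]
    linarith
  simp_rw [e]
  have h : Filter.Tendsto (fun M => ∑ i ∈ Finset.range p, f (M + i)) Filter.atTop
      (nhds (∑ i ∈ Finset.range p, (0 : ℝ))) :=
    tendsto_finsetSum _ fun i _ => hf.comp (Filter.tendsto_add_atTop_nat i)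
  simpa using tendsto_const_nhds.sub h

/-- `H_{2n} - H_n`, written as `1/(n+1) + ⋯ + 1/(2n)`. -/
noncomputable def halfHarmonic (n : ℕ) : ℝ := ∑ i ∈ Finset.range n, 1 / ((n : ℝ) + i + 1)

/-- The Botez–Catalan identity. -/
theorem alternating_eq_halfHarmonic (n : ℕ) :
    ∑ i ∈ Finset.range (2 * n), (-1 : ℝ) ^ i / ((i : ℝ) + 1) = halfHarmonic n := by
  induction n with
  | zero => simp [halfHarmonic]
  | succ n ih =>
    rw [show 2 * (n + 1) = 2 * n + 1 + 1 by ring, Finset.sum_range_succ, Finset.sum_range_succ, ih,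
      halfHarmonic, halfHarmonic, Finset.sum_range_succ]
    have e : ∑ i ∈ Finset.range n, 1 / (((n + 1 : ℕ) : ℝ) + i + 1) + 1 / ((n : ℝ) + 1)
        = ∑ i ∈ Finset.range n, 1 / ((n : ℝ) + i + 1) + 1 / (2 * n + 1) := by
      have h1 := Finset.sum_range_succ' (fun i : ℕ => 1 / ((n : ℝ) + i + 1)) n
      have h2 := Finset.sum_range_succ (fun i : ℕ => 1 / ((n : ℝ) + i + 1)) n
      rw [h1] at h2
      push_cast at h2 ⊢
      have h3 : ∀ i : ℕ, (n : ℝ) + 1 + i + 1 = n + (i + 1) + 1 := fun i => by ring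
      simp_rw [h3]
      rw [show (n : ℝ) + 0 + 1 = n + 1 by ring, show (n : ℝ) + n + 1 = 2 * n + 1 by ring] at h2
      exact h2
    have e2 : (-1 : ℝ) ^ (2 * n) = 1 := by simp
    rw [pow_succ, e2]
    push_cast
    push_cast at e
    have e3 : 1 / ((n : ℝ) + 1) = 2 / (2 * n + 2) := by field_simp
    have e4 : 1 / ((n : ℝ) + 1 + n + 1) = 1 / (2 * n + 2) := by ring_nf
    have e5 : -1 / (2 * (n : ℝ) + 1 + 1) = -(1 / (2 * n + 2)) := by rw [neg_div]; ring_nf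
    rw [e3] at e
    rw [e4, one_mul, e5]
    have e6 : 2 / (2 * (n : ℝ) + 2) = 1 / (2 * n + 2) + 1 / (2 * n + 2) := by ring
    linarith

theorem tendsto_inv_linear (e c : ℝ) (he : 0 < e) :
    Filter.Tendsto (fun k : ℕ => 1 / (e * (k : ℝ) + c)) Filter.atTop (nhds 0) := by
  have : Filter.Tendsto (fun k : ℕ => e * (k : ℝ) + c) Filter.atTop Filter.atTop :=
    Filter.tendsto_atTop_add_const_right _ _
      (Filter.Tendsto.const_mul_atTop he tendsto_natCast_atTop_atTop)
  simp_rw [one_div]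
  exact this.inv_tendsto_atTop

theorem tendsto_alt_inv (c : ℝ) :
    Filter.Tendsto (fun k : ℕ => (-1 : ℝ) ^ k / ((k : ℝ) + c)) Filter.atTop (nhds 0) := by
  have h := (tendsto_inv_linear 1 c one_pos).norm
  rw [norm_zero] at h
  refine squeeze_zero_norm (fun k => ?_) h
  simp

/-! ### Row and column sums of the kernel -/

/-- The kernel `(-1)^(K+1) / (K (K² - 4N²))` at `N = n + 1`, `K = k + 1`; it is `0` at `K = 2N`
by the convention on division by zero. -/
noncomputable def kernel (n k : ℕ) : ℝ :=
  (-1 : ℝ) ^ k / (((k : ℝ) + 1) * (((k : ℝ) + 1) ^ 2 - 4 * ((n : ℝ) + 1) ^ 2))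

theorem summable_abs_kernel : Summable (fun p : ℕ × ℕ => |kernel p.1 p.2|) := by
  refine summable_kernel.congr fun p => ?_
  have : |(p.2 : ℝ) + 1| = p.2 + 1 := abs_of_pos (by positivity)
  simp [kernel, abs_mul, abs_div, this]

/-- Row sums of the kernel. The partial fraction
`4N² / (K (K² - 4N²)) = (1/(K - 2N) + 1/(K + 2N)) / 2 - 1/K` makes the alternating series a difference
of two telescoping series with the even step `2N`. -/
theorem hasSum_kernel_right (n : ℕ) :
    HasSum (fun k => kernel n k)
      (1 / (4 * ((n : ℝ) + 1) ^ 2) * (-halfHarmonic (n + 1) - 5 / (8 * ((n : ℝ) + 1)))) := by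
  set N : ℝ := (n : ℝ) + 1 with hN
  have hN0 : 0 < N := by positivity
  let f : ℕ → ℝ := fun k => (-1 : ℝ) ^ k / ((k : ℝ) + (1 - 2 * N))
  let h : ℕ → ℝ := fun k => (-1 : ℝ) ^ k / ((k : ℝ) + 1)
  let p : ℕ := 2 * (n + 1)
  have hp : (-1 : ℝ) ^ p = 1 := by simp [p]
  have hpc : (p : ℝ) = 2 * N := by simp [p, hN]
  let T : ℕ → ℝ := fun k => 1 / (4 * N ^ 2) * (1 / 2 * ((f k - f (k + p)) - (h k - h (k + p))))
  -- `c` is the value of the partial fraction at `K = 2N`, where `1 / (K - 2N)` reads `0`.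
  let c : ℝ := 1 / (4 * N ^ 2) * (3 / (8 * N))
  have hG : Summable (fun k => kernel n k) := summable_abs_kernel.of_abs.prod_factor n
  have hI : HasSum (fun k => if k = 2 * n + 1 then c else 0) c := hasSum_ite_eq _ _
  have hT : ∀ k, kernel n k + (if k = 2 * n + 1 then c else 0) = T k := by
    intro k
    have hK : (0 : ℝ) < (k : ℝ) + 1 := by positivity
    have e1 : f (k + p) = (-1 : ℝ) ^ k / ((k : ℝ) + 1) := by
      simp only [f, pow_add, hp, mul_one]; push_cast; rw [hpc]; congr 1; ring
    have e2 : h (k + p) = (-1 : ℝ) ^ k / ((k : ℝ) + 1 + 2 * N) := by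
      simp only [h, pow_add, hp, mul_one]; push_cast; rw [hpc]; congr 1; ring
    simp only [T, e1, e2, kernel]
    simp only [f, h, ← hN]
    split_ifs with hk
    · have hk1 : (k : ℝ) = 2 * N - 1 := by rw [hk, hN]; push_cast; ring
      have hs : (-1 : ℝ) ^ k = -1 := by rw [hk]; simp [pow_succ]
      rw [hk1, hs, show (2 * N - 1 + 1) ^ 2 - 4 * N ^ 2 = 0 by ring,
        show 2 * N - 1 + (1 - 2 * N) = 0 by ring, show 2 * N - 1 + 1 = 2 * N by ring]
      simp only [c, mul_zero, div_zero]
      field_simp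
      ring
    · have hk1 : (k : ℝ) + 1 - 2 * N ≠ 0 := by
        intro h0
        apply hk
        have : ((k + 1 : ℕ) : ℝ) = ((2 * (n + 1) : ℕ) : ℝ) := by push_cast; rw [← hN]; linarith
        have := Nat.cast_injective this
        omega
      have hk2 : (k : ℝ) + 1 + 2 * N ≠ 0 := by positivity
      rw [show ((k : ℝ) + 1) ^ 2 - 4 * N ^ 2 = ((k : ℝ) + 1 - 2 * N) * ((k : ℝ) + 1 + 2 * N) by ring,
        show (k : ℝ) + (1 - 2 * N) = (k : ℝ) + 1 - 2 * N by ring]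
      field_simp
      ring
  have hTs : Summable T := (hG.add hI.summable).congr hT
  have hf : ∑ i ∈ Finset.range p, f i = -halfHarmonic (n + 1) - 1 / (2 * N) := by
    rw [← alternating_eq_halfHarmonic, ← Finset.sum_range_reflect]
    have e : ∀ j ∈ Finset.range p, f (p - 1 - j) = (-1 : ℝ) ^ j / (j : ℝ) := by
      intro j hj
      have hj' : j < p := Finset.mem_range.1 hj
      have h1 : (((p - 1 - j : ℕ) : ℝ)) = 2 * N - 1 - j := by
        rw [← hpc, Nat.sub_sub, Nat.cast_sub (by omega)]; push_cast; ring
      have h2 : (-1 : ℝ) ^ (p - 1 - j) = -(-1 : ℝ) ^ j := by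
        have : (-1 : ℝ) ^ (p - 1 - j) * (-1) ^ (j + 1) = 1 := by
          rw [← pow_add, show p - 1 - j + (j + 1) = p by omega, hp]
        have h3 : (-1 : ℝ) ^ j * (-1) ^ j = 1 := by rw [← mul_pow]; simp
        rw [pow_succ] at this
        linear_combination (-(-1 : ℝ) ^ j) * this - ((-1 : ℝ) ^ (p - 1 - j)) * h3
      simp only [f, h1, h2]
      rw [show 2 * N - 1 - (j : ℝ) + (1 - 2 * N) = -j by ring, neg_div_neg_eq]
    rw [Finset.sum_congr rfl e]
    have hp1 : p = 2 * n + 1 + 1 := by simp only [p]; ring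
    rw [hp1, Finset.sum_range_succ', show 2 * (n + 1) = 2 * n + 1 + 1 by ring,
      Finset.sum_range_succ _ (2 * n + 1)]
    have e2 : (-1 : ℝ) ^ (2 * n + 1) = -1 := by simp [pow_succ]
    rw [e2]
    push_cast
    simp only [pow_succ, div_zero, mul_neg, mul_one, neg_div, Finset.sum_neg_distrib]
    rw [hN]
    ring
  have hh : ∑ i ∈ Finset.range p, h i = halfHarmonic (n + 1) := alternating_eq_halfHarmonic _
  have ht : HasSum T (1 / (4 * N ^ 2) * (-halfHarmonic (n + 1) - 1 / (4 * N))) := by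
    rw [hTs.hasSum_iff_tendsto_nat]
    have t1 := tendsto_telescope f (tendsto_alt_inv _) p
    have t2 := tendsto_telescope h (tendsto_alt_inv _) p
    rw [hf] at t1
    rw [hh] at t2
    have t3 := ((t1.sub t2).const_mul (1 / 2)).const_mul (1 / (4 * N ^ 2))
    simp only [T, ← Finset.mul_sum, Finset.sum_sub_distrib] at t3 ⊢
    convert t3 using 2
    field_simp
    ring
  refine hasSum_of_eq (ht.sub hI) (fun j => by rw [← hT, add_sub_cancel_right]) ?_
  simp only [c]
  field_simp
  ring

/-- Column sums of the kernel. `1/(4N² - K²) = (1/(2N - K) - 1/(2N + K)) / (2K)` telescopes with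
step `K` in `N`, and the terms left over cancel in pairs `±` except for one. The case `Odd k` is that
of even `K = k + 1`, where the vanishing entry `2N = K` must be accounted for. -/
theorem hasSum_kernel_left (k : ℕ) :
    HasSum (fun n => kernel n k)
      (-((-1 : ℝ) ^ k / ((k : ℝ) + 1) ^ 3 * (1 / 2 + if Odd k then 1 / 4 else 0))) := by
  set K : ℝ := (k : ℝ) + 1 with hK
  have hK0 : 0 < K := by positivity
  let f : ℕ → ℝ := fun n => 1 / (2 * (n : ℝ) + (2 - K))
  let p : ℕ := k + 1
  have hpc : (p : ℝ) = K := by simp [p, hK]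
  let T : ℕ → ℝ := fun n => -((-1 : ℝ) ^ k / (2 * K ^ 2)) * (f n - f (n + p))
  -- For even `K`, `c` is the value of the partial fraction at `2N = K`, where `1 / (2N - K)` reads `0`.
  let c : ℝ := if Odd k then (-1 : ℝ) ^ k / (4 * K ^ 3) else 0
  have hG : Summable (fun n => kernel n k) :=
    (summable_abs_kernel.of_abs.prod_symm).prod_factor k
  have hI : HasSum (fun n => if n = (k - 1) / 2 then c else 0) c := hasSum_ite_eq _ _
  have hT : ∀ n, kernel n k + (if n = (k - 1) / 2 then c else 0) = T n := by
    intro n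
    have e1 : f (n + p) = 1 / (2 * ((n : ℝ) + 1) + K) := by
      simp only [f]; push_cast; rw [hpc]; congr 1; ring
    have e2 : f n = 1 / (2 * ((n : ℝ) + 1) - K) := by
      simp only [f]; congr 1; ring
    simp only [T, e1, e2, kernel, ← hK]
    set N : ℝ := (n : ℝ) + 1 with hN
    have hN0 : 0 < N := by positivity
    by_cases hk : k + 1 = 2 * (n + 1)
    · have hodd : Odd k := ⟨n, by omega⟩
      have hn : n = (k - 1) / 2 := by omega
      have hKN : K = 2 * N := by rw [hK, hN]; exact_mod_cast hk
      rw [if_pos hn]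
      simp only [c, if_pos hodd]
      rw [hKN]
      simp only [show (2 * N) ^ 2 - 4 * N ^ 2 = 0 by ring, mul_zero, div_zero, sub_self]
      field_simp
      ring
    · have hz : (if n = (k - 1) / 2 then c else 0) = 0 := by
        split_ifs with hn
        · simp only [c]
          rw [if_neg]
          rintro ⟨j, hj⟩
          omega
        · rfl
      have h1 : 2 * N - K ≠ 0 := by
        intro h0
        apply hk
        have : ((k + 1 : ℕ) : ℝ) = ((2 * (n + 1) : ℕ) : ℝ) := by
          push_cast; rw [← hN, ← hK]; linarith
        exact Nat.cast_injective this
      have h2 : 2 * N + K ≠ 0 := by positivity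
      rw [hz, show K ^ 2 - 4 * N ^ 2 = -((2 * N - K) * (2 * N + K)) by ring]
      field_simp
      ring
  have hTs : Summable T := (hG.add hI.summable).congr hT
  have hf : ∑ i ∈ Finset.range p, f i = 1 / K := by
    simp only [p]
    rw [Finset.sum_range_succ]
    -- `f` is odd under `i ↦ k - 1 - i`.
    have hodd : ∑ i ∈ Finset.range k, f i = 0 := by
      have h1 := Finset.sum_range_reflect f k
      have e : ∀ j ∈ Finset.range k, f (k - 1 - j) = - f j := by
        intro j hj
        have hj' : j < k := Finset.mem_range.1 hj
        have h1 : (((k - 1 - j : ℕ) : ℝ)) = K - 2 - j := by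
          rw [Nat.sub_sub, Nat.cast_sub (by omega), hK]; push_cast; ring
        simp only [f, h1]
        rw [show 2 * (K - 2 - (j : ℝ)) + (2 - K) = -(2 * j + (2 - K)) by ring, one_div_neg_eq_neg_one_div]
      rw [Finset.sum_congr rfl e, Finset.sum_neg_distrib] at h1
      linarith
    rw [hodd, zero_add]
    simp only [f]
    congr 1
    rw [hK]; ring
  have ht : HasSum T (-((-1 : ℝ) ^ k / (2 * K ^ 2)) * (1 / K)) := by
    rw [hTs.hasSum_iff_tendsto_nat]
    have t1 := tendsto_telescope f (tendsto_inv_linear _ _ two_pos) p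
    rw [hf] at t1
    have t3 := t1.const_mul (-((-1 : ℝ) ^ k / (2 * K ^ 2)))
    simpa only [T, ← Finset.mul_sum] using t3
  refine hasSum_of_eq (ht.sub hI) (fun j => by rw [← hT, add_sub_cancel_right]) ?_
  simp only [c]
  split_ifs <;> field_simp <;> ring

/-! ### Evaluation of the Euler sum -/

theorem hasSum_rzeta (r : ℕ) (hr : 2 ≤ r) :
    HasSum (fun n : ℕ => 1 / ((n : ℝ) + 1) ^ r) (rzeta r) := by
  rw [rzeta_eq_shift r hr]
  exact (summable_shift r hr).hasSum

/-- `k` odd means that `k + 1` is even. -/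
theorem hasSum_odd (r : ℕ) (hr : 2 ≤ r) :
    HasSum (fun k : ℕ => if Odd k then 1 / ((k : ℝ) + 1) ^ r else 0) (rzeta r / 2 ^ r) := by
  rw [← zero_add (rzeta r / 2 ^ r)]
  refine HasSum.even_add_odd ?_ ?_
  · have : ∀ k : ℕ, ¬ Odd (2 * k) := fun k => by simp
    simp only [this, if_false]
    exact hasSum_zero
  · have : ∀ k : ℕ, Odd (2 * k + 1) := fun k => ⟨k, rfl⟩
    simp only [this, if_true]
    refine hasSum_of_eq ((hasSum_rzeta r hr).div_const (2 ^ r)) (fun k => ?_) rfl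
    push_cast
    rw [show 2 * (k : ℝ) + 1 + 1 = (k + 1) * 2 by ring, mul_pow, div_div]

theorem hasSum_eta (r : ℕ) (hr : 2 ≤ r) :
    HasSum (fun k : ℕ => (-1 : ℝ) ^ k / ((k : ℝ) + 1) ^ r) ((1 - 2 / 2 ^ r) * rzeta r) := by
  refine hasSum_of_eq ((hasSum_rzeta r hr).sub ((hasSum_odd r hr).mul_left 2)) (fun k => ?_) ?_
  · split_ifs with h
    · rw [h.neg_one_pow]; ring
    · rw [(Nat.not_odd_iff_even.1 h).neg_one_pow]; ring
  · ring

/-- Off the diagonal `K = 2N` this is the finite geometric sum in `a = 1/N²`, `b = 4/K²`, since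
`kernel * (a - b) = ± a b / (4K)`; on the diagonal all `t` terms of the sum coincide. -/
theorem kernel_geometric (t n k : ℕ) :
    8 * (kernel n k * (1 / ((n : ℝ) + 1) ^ 2) ^ t - kernel n k * (4 / ((k : ℝ) + 1) ^ 2) ^ t)
      = ∑ i ∈ Finset.range t, (1 / ((n : ℝ) + 1) ^ (2 * i + 2)) *
          (2 ^ (2 * (t - i) + 1) * ((-1 : ℝ) ^ k / ((k : ℝ) + 1) ^ (2 * (t - i) + 1)))
        + if k = 2 * n + 1 then t * (1 / ((n : ℝ) + 1) ^ (2 * t + 3)) else 0 := by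
  set N : ℝ := (n : ℝ) + 1 with hN
  set K : ℝ := (k : ℝ) + 1 with hK
  have hN0 : 0 < N := by positivity
  have hK0 : 0 < K := by positivity
  split_ifs with hk
  · have hKN : K = 2 * N := by rw [hK, hN, hk]; push_cast; ring
    have hs : (-1 : ℝ) ^ k = -1 := by rw [hk]; simp [pow_succ]
    have e : ∀ i ∈ Finset.range t, (1 / N ^ (2 * i + 2)) *
          (2 ^ (2 * (t - i) + 1) * ((-1 : ℝ) ^ k / K ^ (2 * (t - i) + 1)))
          = -(1 / N ^ (2 * t + 3)) := by
      intro i hi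
      have hi' : i < t := Finset.mem_range.1 hi
      rw [hs, hKN, mul_pow, show 2 * t + 3 = (2 * i + 2) + (2 * (t - i) + 1) by omega,
        pow_add N (2 * i + 2)]
      field_simp
    rw [Finset.sum_congr rfl e]
    have h0 : kernel n k = 0 := by
      simp only [kernel, ← hN, ← hK]
      rw [hKN, show (2 * N) ^ 2 - 4 * N ^ 2 = 0 by ring]; simp
    rw [h0]
    simp
  · have hd : K ^ 2 - 4 * N ^ 2 ≠ 0 := by
      intro h0
      have h1 : (K - 2 * N) * (K + 2 * N) = 0 := by linear_combination h0
      have h2 : K + 2 * N ≠ 0 := by positivity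
      have h3 : K - 2 * N = 0 := by simpa [h2] using h1
      apply hk
      have : ((k + 1 : ℕ) : ℝ) = ((2 * (n + 1) : ℕ) : ℝ) := by
        push_cast; rw [← hN, ← hK]; linarith
      have := Nat.cast_injective this
      omega
    have hg := geom_sum₂_mul (1 / N ^ 2) (4 / K ^ 2) t
    rw [← mul_sub, ← hg, add_zero]
    have hkab : kernel n k * (1 / N ^ 2 - 4 / K ^ 2) = (-1 : ℝ) ^ k / (N ^ 2 * K ^ 3) := by
      simp only [kernel, ← hN, ← hK]
      field_simp
    rw [show ∀ S : ℝ, 8 * (kernel n k * (S * (1 / N ^ 2 - 4 / K ^ 2)))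
      = 8 * ((-1 : ℝ) ^ k / (N ^ 2 * K ^ 3)) * S from fun S => by rw [← hkab]; ring,
      Finset.mul_sum]
    refine Finset.sum_congr rfl fun i hi => ?_
    have hi' : i < t := Finset.mem_range.1 hi
    obtain ⟨j, rfl⟩ : ∃ j, t = i + 1 + j := ⟨t - i - 1, by omega⟩
    rw [show i + 1 + j - 1 - i = j by omega, show i + 1 + j - i = j + 1 by omega,
      show (4 : ℝ) = 2 ^ 2 by norm_num, ← div_pow, ← pow_mul, div_pow, div_pow, one_pow, ← pow_mul]
    rw [show 2 * (j + 1) + 1 = 2 * j + 3 by ring, pow_add, pow_add, pow_add]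
    field_simp
    norm_num

theorem summable_kernel_mul (g : ℕ × ℕ → ℝ) (C : ℝ) (hg : ∀ p, |g p| ≤ C) :
    Summable (fun p : ℕ × ℕ => kernel p.1 p.2 * g p) := by
  refine Summable.of_norm_bounded (summable_abs_kernel.mul_right C) fun p => ?_
  rw [Real.norm_eq_abs, abs_mul]
  exact mul_le_mul_of_nonneg_left (hg p) (abs_nonneg _)

theorem summable_kernel_left_weight (t : ℕ) :
    Summable (fun p : ℕ × ℕ => kernel p.1 p.2 * (1 / ((p.1 : ℝ) + 1) ^ 2) ^ t) := by
  refine summable_kernel_mul _ 1 fun p => ?_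
  rw [abs_of_nonneg (by positivity)]
  refine pow_le_one₀ (by positivity) ?_
  rw [div_le_one (by positivity)]
  exact one_le_pow₀ (by linarith [(Nat.cast_nonneg p.1 : (0 : ℝ) ≤ p.1)])

theorem summable_kernel_right_weight (t : ℕ) :
    Summable (fun p : ℕ × ℕ => kernel p.1 p.2 * (4 / ((p.2 : ℝ) + 1) ^ 2) ^ t) := by
  refine summable_kernel_mul _ (4 ^ t) fun p => ?_
  rw [abs_of_nonneg (by positivity)]
  refine pow_le_pow_left₀ (by positivity) ?_ t
  refine div_le_self (by norm_num) ?_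
  exact one_le_pow₀ (by linarith [(Nat.cast_nonneg p.2 : (0 : ℝ) ≤ p.2)])

/-- Summation by rows. -/
theorem hasSum_left_weight (t : ℕ) :
    HasSum (fun n : ℕ => 1 / (4 * ((n : ℝ) + 1) ^ 2) *
        (-halfHarmonic (n + 1) - 5 / (8 * ((n : ℝ) + 1))) * (1 / ((n : ℝ) + 1) ^ 2) ^ t)
      (∑' p : ℕ × ℕ, kernel p.1 p.2 * (1 / ((p.1 : ℝ) + 1) ^ 2) ^ t) :=
  (summable_kernel_left_weight t).hasSum.prod_fiberwise
    fun n => (hasSum_kernel_right n).mul_right ((1 / ((n : ℝ) + 1) ^ 2) ^ t)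

/-- Summation by columns. -/
theorem tsum_right_weight (t : ℕ) :
    ∑' p : ℕ × ℕ, kernel p.1 p.2 * (4 / ((p.2 : ℝ) + 1) ^ 2) ^ t
      = -((4 : ℝ) ^ t / 2 - 5 / 32) * rzeta (2 * t + 3) := by
  have s2 := (summable_kernel_right_weight t).hasSum
  have s3 : HasSum (fun p : ℕ × ℕ => kernel p.2 p.1 * (4 / ((p.1 : ℝ) + 1) ^ 2) ^ t)
      (∑' p : ℕ × ℕ, kernel p.1 p.2 * (4 / ((p.2 : ℝ) + 1) ^ 2) ^ t) :=
    hasSum_swap s2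
  have h2 : HasSum (fun k : ℕ => -((-1 : ℝ) ^ k / ((k : ℝ) + 1) ^ 3 *
      (1 / 2 + if Odd k then 1 / 4 else 0)) * (4 / ((k : ℝ) + 1) ^ 2) ^ t)
      (∑' p : ℕ × ℕ, kernel p.1 p.2 * (4 / ((p.2 : ℝ) + 1) ^ 2) ^ t) :=
    s3.prod_fiberwise fun k => (hasSum_kernel_left k).mul_right ((4 / ((k : ℝ) + 1) ^ 2) ^ t)
  refine h2.unique (hasSum_of_eq ((((hasSum_eta (2 * t + 3) (by omega)).mul_left (1 / 2)).sub
      ((hasSum_odd (2 * t + 3) (by omega)).mul_left (1 / 4))).mul_left (4 ^ t)).neg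
      (fun k => ?_) ?_)
  · have hK0 : (0 : ℝ) < (k : ℝ) + 1 := by positivity
    rw [div_pow, ← pow_mul, pow_add _ (2 * t) 3]
    split_ifs with h
    · rw [h.neg_one_pow]; field_simp; ring
    · field_simp; ring
  · have e4 : (2 : ℝ) ^ (2 * t + 3) = 8 * 4 ^ t := by
      rw [pow_add, pow_mul]; norm_num; ring
    rw [e4]
    field_simp
    ring

theorem hasSum_mul_prod {f g : ℕ → ℝ} {a b : ℝ} (hf : HasSum f a) (hg : HasSum g b) :
    HasSum (fun p : ℕ × ℕ => f p.1 * g p.2) (a * b) :=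
  hf.mul hg (summable_mul_of_summable_norm hf.summable.norm hg.summable.norm)

/-- The left-hand array is the geometric sum of `kernel_geometric`; the factor
`2^r (1 - 2/2^r) = 2 (4^(t-i) - 1)` with `r = 2(t-i) + 1` comes from `hasSum_eta`. -/
theorem hasSum_zeta_products (t : ℕ) :
    HasSum (fun p : ℕ × ℕ => ∑ i ∈ Finset.range t, (1 / ((p.1 : ℝ) + 1) ^ (2 * i + 2)) *
          (2 ^ (2 * (t - i) + 1) * ((-1 : ℝ) ^ p.2 / ((p.2 : ℝ) + 1) ^ (2 * (t - i) + 1))))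
      (2 * ∑ i ∈ Finset.range t,
        ((4 : ℝ) ^ (t - i) - 1) * rzeta (2 * i + 2) * rzeta (2 * (t - i) + 1)) := by
  rw [Finset.mul_sum]
  refine hasSum_sum fun i hi => ?_
  have hi' : i < t := Finset.mem_range.1 hi
  have a1 := hasSum_rzeta (2 * i + 2) (by omega)
  have a2 := (hasSum_eta (2 * (t - i) + 1) (by omega)).mul_left (2 ^ (2 * (t - i) + 1))
  have e : 2 * (((4 : ℝ) ^ (t - i) - 1) * rzeta (2 * i + 2) * rzeta (2 * (t - i) + 1))
      = rzeta (2 * i + 2) * (2 ^ (2 * (t - i) + 1) *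
        ((1 - 2 / 2 ^ (2 * (t - i) + 1)) * rzeta (2 * (t - i) + 1))) := by
    rw [pow_succ, pow_mul]
    have : (2 : ℝ) ^ 2 = 4 := by norm_num
    rw [this]
    field_simp
  rw [e]
  exact hasSum_mul_prod a1 a2

/-- Evaluation of `∑ (H_{2n} - H_n) / n^(2t+2)`. -/
theorem hasSum_halfHarmonic (t : ℕ) :
    HasSum (fun n : ℕ => halfHarmonic (n + 1) / ((n : ℝ) + 1) ^ (2 * t + 2))
      (((4 : ℝ) ^ (t + 1) - t - 5 / 2) / 2 * rzeta (2 * t + 3)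
        - ∑ i ∈ Finset.range t,
            ((4 : ℝ) ^ (t - i) - 1) * rzeta (2 * i + 2) * rzeta (2 * (t - i) + 1)) := by
  -- the diagonal `K = 2N` is what remains of the weighted kernels after the zeta products
  have hD : HasSum (fun p : ℕ × ℕ =>
      if p.2 = 2 * p.1 + 1 then t * (1 / ((p.1 : ℝ) + 1) ^ (2 * t + 3)) else 0) _ :=
    hasSum_of_eq ((((summable_kernel_left_weight t).hasSum.sub
      (summable_kernel_right_weight t).hasSum).mul_left 8).sub (hasSum_zeta_products t))
      (fun p => by rw [kernel_geometric, add_sub_cancel_left]) rfl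
  have hD1 := hD.prod_fiberwise (g := fun n : ℕ => t * (1 / ((n : ℝ) + 1) ^ (2 * t + 3)))
    fun n => hasSum_ite_eq (2 * n + 1) _
  have vD := hD1.unique ((hasSum_rzeta (2 * t + 3) (by omega)).mul_left (t : ℝ))
  rw [tsum_right_weight] at vD
  refine hasSum_of_eq (((hasSum_left_weight t).mul_left (-4)).sub
    ((hasSum_rzeta (2 * t + 3) (by omega)).mul_left (5 / 8))) (fun n => ?_) ?_
  · have hN0 : (0 : ℝ) < (n : ℝ) + 1 := by positivity
    rw [div_pow, one_pow, ← pow_mul, pow_add _ (2 * t) 3, pow_add _ (2 * t) 2]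
    field_simp
    ring
  · rw [pow_succ]
    linear_combination (1 / 2) * vD

/-! ### Double zeta values -/

theorem hasSum_rzeta_nat (r : ℕ) (hr : 2 ≤ r) :
    HasSum (fun n : ℕ => 1 / (n : ℝ) ^ r) (rzeta r) :=
  (Real.summable_one_div_nat_pow.2 (by omega)).hasSum

/-- The restriction of an array `f n m` to the triangle `0 < m < n`, extended by zero. -/
noncomputable def triangle (f : ℕ → ℕ → ℝ) (n m : ℕ) : ℝ :=
  if m ∈ Finset.Ioo 0 n then f n m else 0

theorem summable_triangle (f : ℕ → ℕ → ℝ)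
    (hf : ∀ n m : ℕ, 0 < m → m < n →
      |f n m| ≤ (n : ℝ) ^ (-(3 / 2) : ℝ) * (m : ℝ) ^ (-(3 / 2) : ℝ)) :
    Summable (fun p : ℕ × ℕ => triangle f p.1 p.2) := by
  refine Summable.of_norm_bounded summable_nat_prod fun p => ?_
  rw [triangle]
  split_ifs with h
  · rw [Finset.mem_Ioo] at h
    exact hf _ _ h.1 h.2
  · rw [norm_zero]; positivity

theorem hasSum_triangle_rows (f : ℕ → ℕ → ℝ) (S : ℝ)
    (h : HasSum (fun p : ℕ × ℕ => triangle f p.1 p.2) S) :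
    HasSum (fun n => ∑ m ∈ Finset.Ioo 0 n, f n m) S := by
  refine h.prod_fiberwise fun n => ?_
  have e : ∑ m ∈ Finset.Ioo 0 n, triangle f n m = ∑ m ∈ Finset.Ioo 0 n, f n m :=
    Finset.sum_congr rfl fun m hm => if_pos hm
  have := hasSum_sum_of_ne_finset_zero (s := Finset.Ioo 0 n) (L := .unconditional ℕ)
    (f := triangle f n) (fun m hm => if_neg hm)
  rwa [e] at this

theorem hasSum_dzeta (a b : ℕ) (ha : 2 ≤ a) (hb : 1 ≤ b) :
    HasSum (fun n : ℕ => ∑ m ∈ Finset.Ioo 0 n, 1 / ((n : ℝ) ^ a * (m : ℝ) ^ b)) (dzeta a b) := by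
  let f : ℕ → ℕ → ℝ := fun n m => 1 / ((n : ℝ) ^ a * (m : ℝ) ^ b)
  suffices hs : Summable (fun p : ℕ × ℕ => triangle f p.1 p.2) from
    (hasSum_triangle_rows f _ hs.hasSum).summable.hasSum
  refine summable_triangle f ?_
  intro n m hm hmn
  simp only [f]
  have hm1 : (1 : ℝ) ≤ m := by exact_mod_cast hm
  have hmn1 : (m : ℝ) ≤ n := by exact_mod_cast hmn.le
  have hn1 : (1 : ℝ) ≤ n := hm1.trans hmn1
  rw [abs_of_nonneg (by positivity)]
  refine le_trans ?_ (one_div_mul_le n m n (by linarith) (by linarith) le_rfl hmn1)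
  apply one_div_le_one_div_of_le (by positivity)
  have h1 : (n : ℝ) ^ 2 ≤ (n : ℝ) ^ a := pow_le_pow_right₀ hn1 ha
  have h2 : (m : ℝ) ^ 1 ≤ (m : ℝ) ^ b := pow_le_pow_right₀ hm1 hb
  calc (n : ℝ) * m * n = (n : ℝ) ^ 2 * (m : ℝ) ^ 1 := by ring
    _ ≤ _ := by gcongr

/-- The sum over `j` is geometric with ratio `-m/n`. -/
theorem alternating_geometric (t n m : ℕ) (hm : 0 < m) (hmn : m < n) :
    ∑ j ∈ Finset.Icc 2 (2 * (t + 1)),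
        (-1 : ℝ) ^ j * (1 / ((n : ℝ) ^ j * (m : ℝ) ^ (2 * (t + 1) + 1 - j)))
      = 1 / ((m : ℝ) ^ (2 * t + 1) * (n * (n + m))) + 1 / ((n : ℝ) ^ (2 * t + 2) * (n + m)) := by
  have hm0 : (0 : ℝ) < m := by exact_mod_cast hm
  have hn0 : (0 : ℝ) < n := by exact_mod_cast hm.trans hmn
  have hg := geom_sum₂_mul (-1 / (n : ℝ)) (1 / (m : ℝ)) (2 * t + 1)
  have hI : Finset.Icc 2 (2 * (t + 1)) = Finset.Ico 2 (2 * t + 1 + 2) := by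
    ext x; simp only [Finset.mem_Icc, Finset.mem_Ico]; omega
  rw [hI, Finset.sum_Ico_eq_sum_range, show 2 * t + 1 + 2 - 2 = 2 * t + 1 by omega]
  have e : ∀ i ∈ Finset.range (2 * t + 1),
      (-1 : ℝ) ^ (2 + i) * (1 / ((n : ℝ) ^ (2 + i) * (m : ℝ) ^ (2 * (t + 1) + 1 - (2 + i))))
      = (1 / ((n : ℝ) ^ 2 * m)) * ((-1 / (n : ℝ)) ^ i * (1 / (m : ℝ)) ^ (2 * t + 1 - 1 - i)) := by
    intro i hi
    have hi' : i < 2 * t + 1 := Finset.mem_range.1 hi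
    rw [show 2 * (t + 1) + 1 - (2 + i) = 2 * t + 1 - 1 - i + 1 by omega, pow_succ, pow_add, pow_add,
      div_pow, div_pow, one_pow]
    field_simp
  rw [Finset.sum_congr rfl e, ← Finset.mul_sum]
  set G := ∑ i ∈ Finset.range (2 * t + 1),
    (-1 / (n : ℝ)) ^ i * (1 / (m : ℝ)) ^ (2 * t + 1 - 1 - i)
  have hodd : (-1 : ℝ) ^ (2 * t + 1) = -1 := by simp [pow_succ]
  rw [div_pow, div_pow, one_pow, hodd] at hg
  have hnm : (n : ℝ) + m ≠ 0 := by positivity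
  have hG : G = (1 / (n : ℝ) ^ (2 * t + 1) + 1 / (m : ℝ) ^ (2 * t + 1)) * (n * m / (n + m)) := by
    have h1 : -1 / (n : ℝ) - 1 / m = -((n + m) / (n * m)) := by field_simp; ring
    rw [h1] at hg
    have h2 : G * ((n + m) / (n * m)) = 1 / (n : ℝ) ^ (2 * t + 1) + 1 / (m : ℝ) ^ (2 * t + 1) := by
      linear_combination -hg
    rw [← h2]
    field_simp
  rw [hG, pow_succ _ (2 * t + 1)]
  field_simp
  ring

theorem summable_first_part (t : ℕ) :
    Summable (fun p : ℕ × ℕ => triangle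
      (fun n m => 1 / ((m : ℝ) ^ (2 * t + 1) * ((n : ℝ) * (n + m)))) p.1 p.2) := by
  refine summable_triangle _ fun n m hm hmn => ?_
  have hm1 : (1 : ℝ) ≤ m := by exact_mod_cast hm
  have hmn1 : (m : ℝ) ≤ n := by exact_mod_cast hmn.le
  have hn1 : (1 : ℝ) ≤ n := hm1.trans hmn1
  rw [abs_of_nonneg (by positivity)]
  refine le_trans ?_ (one_div_mul_le n m (n + m) (by linarith) (by linarith) (by linarith)
    (by linarith))
  apply one_div_le_one_div_of_le (by positivity)
  have h2 : (m : ℝ) ≤ (m : ℝ) ^ (2 * t + 1) := le_self_pow₀ hm1 (by omega)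
  have h3 : (0 : ℝ) ≤ n * (n + m) := by positivity
  calc (n : ℝ) * m * (n + m) = m * (n * (n + m)) := by ring
    _ ≤ (m : ℝ) ^ (2 * t + 1) * (n * (n + m)) := mul_le_mul_of_nonneg_right h2 h3

/-- Summing over `n > m` first, `m / (n (n + m)) = 1/n - 1/(n + m)` telescopes to `H_{2m} - H_m`. -/
theorem hasSum_first_part (t : ℕ) (v : ℝ)
    (hv : HasSum (fun n : ℕ => halfHarmonic n / (n : ℝ) ^ (2 * t + 2)) v) :
    HasSum (fun n : ℕ => ∑ m ∈ Finset.Ioo 0 n, 1 / ((m : ℝ) ^ (2 * t + 1) * (n * (n + m)))) v := by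
  let q : ℕ → ℕ → ℝ := fun n m => 1 / ((m : ℝ) ^ (2 * t + 1) * ((n : ℝ) * (n + m)))
  have hs : Summable (fun p : ℕ × ℕ => triangle q p.1 p.2) := summable_first_part t
  have hswap := hasSum_swap hs.hasSum
  have hcol : ∀ m : ℕ, HasSum (fun n : ℕ => triangle q n m)
      (halfHarmonic m / (m : ℝ) ^ (2 * t + 2)) := by
    intro m
    rcases Nat.eq_zero_or_pos m with rfl | hm
    · exact hasSum_of_eq hasSum_zero (fun n => by simp [triangle]) (by simp [halfHarmonic])
    have hm0 : (0 : ℝ) < m := by exact_mod_cast hm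
    have hsm : Summable (fun n : ℕ => triangle q n m) := hswap.summable.prod_factor m
    let f : ℕ → ℝ := fun i => 1 / (1 * (i : ℝ) + (m + 1))
    have e : ∀ i : ℕ, triangle q (i + (m + 1)) m = 1 / (m : ℝ) ^ (2 * t + 2) * (f i - f (i + m)) := by
      intro i
      rw [triangle, if_pos (Finset.mem_Ioo.2 ⟨hm, by omega⟩)]
      simp only [f, q]
      push_cast
      rw [pow_succ _ (2 * t + 1)]
      have : (0 : ℝ) < i + (m + 1) := by positivity
      field_simp
      ring
    have h0 : ∑ i ∈ Finset.range (m + 1), triangle q i m = 0 := by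
      refine Finset.sum_eq_zero fun i hi => if_neg ?_
      rw [Finset.mem_range] at hi
      rw [Finset.mem_Ioo]
      omega
    rw [← add_zero (halfHarmonic m / (m : ℝ) ^ (2 * t + 2)), ← h0]
    refine (hasSum_nat_add_iff (m + 1)).1 ?_
    have hsh := (summable_nat_add_iff (m + 1)).2 hsm
    rw [hsh.hasSum_iff_tendsto_nat]
    simp only [e, ← Finset.mul_sum]
    have ht := (tendsto_telescope f (tendsto_inv_linear _ _ one_pos) m).const_mul
      (1 / (m : ℝ) ^ (2 * t + 2))
    have hh : ∑ i ∈ Finset.range m, f i = halfHarmonic m := by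
      refine Finset.sum_congr rfl fun i _ => ?_
      simp only [f]
      congr 1
      ring
    rwa [hh, one_div_mul_eq_div] at ht
  have hval := (hswap.prod_fiberwise hcol).unique hv
  rw [← hval]
  exact hasSum_triangle_rows q _ hs.hasSum

theorem second_part (t n : ℕ) :
    ∑ m ∈ Finset.Ioo 0 n, 1 / ((n : ℝ) ^ (2 * t + 2) * (n + m))
      = halfHarmonic n / (n : ℝ) ^ (2 * t + 2) - 1 / 2 * (1 / (n : ℝ) ^ (2 * t + 3)) := by
  rcases n with _ | n
  · simp
  have hI : Finset.Ioo 0 (n + 1) = Finset.Ico 1 (n + 1) := by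
    ext x; simp only [Finset.mem_Ioo, Finset.mem_Ico]; omega
  rw [hI, Finset.sum_Ico_eq_sum_range, Nat.add_sub_cancel, halfHarmonic, Finset.sum_range_succ,
    add_div, Finset.sum_div, add_sub_assoc]
  have h0 : (0 : ℝ) < ((n + 1 : ℕ) : ℝ) := by positivity
  have h1 : 1 / (((n + 1 : ℕ) : ℝ) + n + 1) / ((n + 1 : ℕ) : ℝ) ^ (2 * t + 2)
      - 1 / 2 * (1 / ((n + 1 : ℕ) : ℝ) ^ (2 * t + 3)) = 0 := by
    rw [pow_succ _ (2 * t + 2), show ((n + 1 : ℕ) : ℝ) + n + 1 = 2 * ((n + 1 : ℕ) : ℝ) by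
      push_cast; ring]
    field_simp
    ring
  rw [h1, add_zero]
  refine Finset.sum_congr rfl fun i _ => ?_
  rw [div_div, mul_comm]
  push_cast
  congr 2
  ring

theorem stmt10 (s : ℕ) (hs : 1 ≤ s) :
    ∑ j ∈ Finset.Icc 2 (2 * s), (-1 : ℝ) ^ j * dzeta j (2 * s + 1 - j)
      = ((4 : ℝ) ^ s - (s : ℝ) - 2) * rzeta (2 * s + 1)
        - 2 * ∑ k ∈ Finset.Icc 1 (s - 1),
            ((4 : ℝ) ^ (s - k) - 1) * rzeta (2 * k) * rzeta (2 * s + 1 - 2 * k) := by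
  obtain ⟨t, rfl⟩ : ∃ t, s = t + 1 := ⟨s - 1, by omega⟩
  have hv : HasSum (fun n : ℕ => halfHarmonic n / (n : ℝ) ^ (2 * t + 2)) _ :=
    (hasSum_nat_add_iff 1).1
      (hasSum_of_eq (hasSum_halfHarmonic t) (fun n => by push_cast; rfl) rfl)
  have hS := hasSum_sum fun j (hj : j ∈ Finset.Icc 2 (2 * (t + 1))) =>
    (hasSum_dzeta j (2 * (t + 1) + 1 - j) (Finset.mem_Icc.1 hj).1
      (by have := (Finset.mem_Icc.1 hj).2; omega)).mul_left ((-1 : ℝ) ^ j)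
  have hPQ := (hasSum_first_part t _ hv).add
    (hv.sub ((hasSum_rzeta_nat (2 * t + 3) (by omega)).mul_left (1 / 2)))
  have hval := hS.unique (hasSum_of_eq hPQ (fun n => ?_) rfl)
  swap
  · rw [← second_part, ← Finset.sum_add_distrib]
    simp only [Finset.mul_sum]
    rw [Finset.sum_comm]
    refine Finset.sum_congr rfl fun m hm => ?_
    rw [Finset.mem_Ioo] at hm
    exact alternating_geometric t n m hm.1 hm.2
  rw [hval]
  have hI : ∑ k ∈ Finset.Icc 1 (t + 1 - 1), ((4 : ℝ) ^ (t + 1 - k) - 1) * rzeta (2 * k)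
      * rzeta (2 * (t + 1) + 1 - 2 * k)
      = ∑ i ∈ Finset.range t,
            ((4 : ℝ) ^ (t - i) - 1) * rzeta (2 * i + 2) * rzeta (2 * (t - i) + 1) := by
    have hI' : Finset.Icc 1 (t + 1 - 1) = Finset.Ico 1 (t + 1) := by
      ext x; simp only [Finset.mem_Icc, Finset.mem_Ico]; omega
    rw [hI', Finset.sum_Ico_eq_sum_range, Nat.add_sub_cancel]
    refine Finset.sum_congr rfl fun i hi => ?_
    have hi' : i < t := Finset.mem_range.1 hi
    rw [show t + 1 - (1 + i) = t - i by omega, show 2 * (1 + i) = 2 * i + 2 by ring,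
      show 2 * (t + 1) + 1 - (2 * i + 2) = 2 * (t - i) + 1 by omega]
  rw [hI, show 2 * (t + 1) + 1 = 2 * t + 3 by ring]
  simp only [Finset.sum_range_one, halfHarmonic, Finset.range_zero, Finset.sum_empty, zero_div]
  push_cast
  ring
end

section
/- For every integer s ≥ 3, ∑_{j=2}^{s-1} 2^{1-j} ζ(j, s-j) = (2^{1-s} - 1)(ζ(s-1, 1) - 2 log(2) ζ(s-1)) + (2^{2-s} - 1) ζ(s) + ∑_{n=0}^∞ H_n/(2n+1)^{s-1}. -/
/-!
Write `s = p + 1` with `p ≥ 2`. For `0 < m < n` the sum over `j` is geometric, and partial fractions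
turn it into (`geom_term`)
`∑_j 2^(1-j) / (n^j m^(s-j)) = 2 m^(-p) (1/(2n-m) - 1/(2n)) - 2 (2n)^(-p) / (2n-m)`.

The second piece is summed over `m` first and gives `2 (2n)^(-p) (H (2n-1) - H n)`. The first piece
is nonnegative and summable over pairs, so it may be summed over `n > m` first. The inner series
`∑_{n>m} (1/(2n-m) - 1/(2n))` has partial sums that are explicit combinations of harmonic numbers,
and `H N - log N → γ` yields the value `(H (2k) - H k) / 2` for `m = 2k` and
`log 2 - H (2k+1) / 2 + H k / 2` for `m = 2k + 1` (`hasSum_inner`).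

Splitting the resulting single series by parity and using `∑ H n / n^p = ζ(p,1) + ζ(p+1)`
gives the claim.
-/


open scoped BigOperators

open Filter Topology Finset

/-! ### Harmonic numbers and summability -/

lemma H_succ (n : ℕ) : H (n + 1) = H n + 1 / ((n : ℝ) + 1) := by
  unfold H
  rw [Finset.sum_Icc_succ_top (by omega)]
  push_cast
  rfl

lemma H_zero : H 0 = 0 := by simp [H]

lemma H_nonneg (n : ℕ) : 0 ≤ H n := by
  unfold H
  positivity

lemma H_mono : Monotone H :=
  monotone_nat_of_le_succ fun n => by
    rw [H_succ]
    have : 0 ≤ 1 / ((n : ℝ) + 1) := by positivity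
    linarith

lemma H_eq_harmonic (n : ℕ) : H n = (harmonic n : ℝ) := by
  induction n with
  | zero => simp [H_zero]
  | succ n ih => rw [H_succ, harmonic_succ, ih]; push_cast; simp

/-- The crude bound that makes `∑ H n / n^2` comparable with `∑ n^(-3/2)`. -/
lemma H_le_sqrt (n : ℕ) : H n ≤ 2 * √(n : ℝ) := by
  induction n with
  | zero => simp [H_zero]
  | succ n ih =>
    rw [H_succ]
    push_cast
    have h1 : 0 ≤ √(n : ℝ) := Real.sqrt_nonneg _
    have h2 : 1 ≤ √((n : ℝ) + 1) := by
      rw [Real.one_le_sqrt]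
      have : (0 : ℝ) ≤ n := Nat.cast_nonneg n
      linarith
    have h3 : √(n : ℝ) ^ 2 = n := Real.sq_sqrt (Nat.cast_nonneg n)
    have h4 : √((n : ℝ) + 1) ^ 2 = n + 1 := Real.sq_sqrt (by positivity)
    set a := √(n : ℝ)
    set b := √((n : ℝ) + 1)
    have h5 : 1 / ((n : ℝ) + 1) ≤ 2 * b - 2 * a := by
      rw [← h4, div_le_iff₀ (by positivity)]
      have hab : a ≤ b := by nlinarith
      have : (b - a) * (b + a) = 1 := by nlinarith
      nlinarith [mul_nonneg (sub_nonneg.2 hab) (sub_nonneg.2 h2),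
        mul_nonneg (mul_nonneg (sub_nonneg.2 hab) (sub_nonneg.2 h2)) (by linarith : 0 ≤ b)]
    linarith

lemma summable_H_div_sq : Summable fun n : ℕ => H n / (n : ℝ) ^ 2 := by
  have h : Summable fun n : ℕ => 2 * (1 / (n : ℝ) ^ (3 / 2 : ℝ)) :=
    (Real.summable_one_div_nat_rpow.2 (by norm_num)).mul_left 2
  refine Summable.of_nonneg_of_le (fun n => div_nonneg (H_nonneg n) (by positivity)) ?_ h
  intro n
  rcases Nat.eq_zero_or_pos n with rfl | hn
  · simp
  have hn' : (0 : ℝ) < n := by exact_mod_cast hn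
  have e : (n : ℝ) ^ 2 = (n : ℝ) ^ (3 / 2 : ℝ) * √(n : ℝ) := by
    rw [Real.sqrt_eq_rpow, ← Real.rpow_add hn', ← Real.rpow_natCast]
    norm_num
  have h1 : 0 < √(n : ℝ) := Real.sqrt_pos.2 hn'
  have h2 : 0 < (n : ℝ) ^ (3 / 2 : ℝ) := Real.rpow_pos_of_pos hn' _
  rw [e, div_le_iff₀ (by positivity)]
  calc H n ≤ 2 * √(n : ℝ) := H_le_sqrt n
    _ = _ := by field_simp

lemma summable_H_div_pow {p : ℕ} (hp : 2 ≤ p) : Summable fun n : ℕ => H n / (n : ℝ) ^ p := by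
  refine Summable.of_nonneg_of_le (fun n => div_nonneg (H_nonneg n) (by positivity)) ?_
    summable_H_div_sq
  intro n
  rcases Nat.eq_zero_or_pos n with rfl | hn
  · simp [H_zero]
  have hn' : (1 : ℝ) ≤ n := by exact_mod_cast hn
  have := H_nonneg n
  gcongr

lemma sum_Ioo_inv_le (n : ℕ) : ∑ m ∈ Ioo 0 n, 1 / (m : ℝ) ≤ H n := by
  unfold H
  refine Finset.sum_le_sum_of_subset_of_nonneg ?_ (fun _ _ _ => by positivity)
  intro m
  simp only [mem_Ioo, mem_Icc]
  omega

/-- A family over pairs `0 < m < n` dominated by `1 / (n^2 m)` has summable row sums. -/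
lemma summable_rows {f : ℕ → ℕ → ℝ} (h0 : ∀ n m, 0 < m → m < n → 0 ≤ f n m)
    (h1 : ∀ n m, 0 < m → m < n → f n m ≤ 1 / ((n : ℝ) ^ 2 * m)) :
    Summable fun n => ∑ m ∈ Ioo 0 n, f n m := by
  refine Summable.of_nonneg_of_le ?_ ?_ summable_H_div_sq
  · intro n
    refine Finset.sum_nonneg fun m hm => ?_
    rw [mem_Ioo] at hm
    exact h0 n m hm.1 hm.2
  · intro n
    calc ∑ m ∈ Ioo 0 n, f n m ≤ ∑ m ∈ Ioo 0 n, (1 / (m : ℝ)) / (n : ℝ) ^ 2 := by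
          refine Finset.sum_le_sum fun m hm => ?_
          rw [mem_Ioo] at hm
          refine (h1 n m hm.1 hm.2).trans (le_of_eq ?_)
          rw [div_div, mul_comm]
      _ = (∑ m ∈ Ioo 0 n, 1 / (m : ℝ)) / (n : ℝ) ^ 2 := by rw [Finset.sum_div]
      _ ≤ _ := by gcongr; exact sum_Ioo_inv_le n

lemma summable_dzeta {a b : ℕ} (ha : 2 ≤ a) (hb : 1 ≤ b) :
    Summable fun n : ℕ => ∑ m ∈ Ioo 0 n, 1 / ((n : ℝ) ^ a * (m : ℝ) ^ b) := by
  refine summable_rows (fun n m _ _ => by positivity) ?_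
  intro n m hm hmn
  have hm' : (1 : ℝ) ≤ m := by exact_mod_cast hm
  have hn' : (1 : ℝ) ≤ n := by exact_mod_cast (by omega : 1 ≤ n)
  have e1 : (n : ℝ) ^ 2 ≤ (n : ℝ) ^ a := pow_le_pow_right₀ hn' ha
  have e2 : (m : ℝ) ≤ (m : ℝ) ^ b := le_self_pow₀ hm' (by omega)
  gcongr

/-! ### Partial fractions and the second piece -/

lemma geom_term (p : ℕ) (hp : 1 ≤ p) (n m : ℕ) (hm : 0 < m) (hmn : m < n) :
    ∑ j ∈ Icc 2 p, (2 : ℝ) ^ (1 - (j : ℤ)) * (1 / ((n : ℝ) ^ j * (m : ℝ) ^ (p + 1 - j)))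
      = 2 / (m : ℝ) ^ p * (1 / (2 * n - m) - 1 / (2 * n)) - 2 / (2 * n : ℝ) ^ p * (1 / (2 * n - m)) := by
  have hm' : (0 : ℝ) < m := by exact_mod_cast hm
  have hmn' : (m : ℝ) < n := by exact_mod_cast hmn
  have hn' : (0 : ℝ) < n := by linarith
  have hd : (0 : ℝ) < 2 * n - m := by linarith
  induction p, hp using Nat.le_induction with
  | base =>
    simp
    field_simp
    ring
  | succ p hp ih =>
    rw [Finset.sum_Icc_succ_top (by omega)]
    have e : ∑ j ∈ Icc 2 p, (2 : ℝ) ^ (1 - (j : ℤ)) *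
          (1 / ((n : ℝ) ^ j * (m : ℝ) ^ (p + 1 + 1 - j)))
        = 1 / m * ∑ j ∈ Icc 2 p, (2 : ℝ) ^ (1 - (j : ℤ)) *
          (1 / ((n : ℝ) ^ j * (m : ℝ) ^ (p + 1 - j))) := by
      rw [Finset.mul_sum]
      refine Finset.sum_congr rfl fun j hj => ?_
      rw [mem_Icc] at hj
      rw [show p + 1 + 1 - j = (p + 1 - j) + 1 by omega, pow_succ]
      field_simp
    rw [e, ih, show p + 1 + 1 - (p + 1) = 1 by omega,
      show (1 - ((p + 1 : ℕ) : ℤ)) = -(p : ℤ) by push_cast; ring, zpow_neg, zpow_natCast,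
      mul_pow, mul_pow, pow_succ, pow_succ, pow_succ]
    field_simp
    ring

lemma sum_reflect (k r : ℕ) :
    ∑ m ∈ Icc 1 k, 1 / (((r : ℝ) + k + 1) - m) = H (r + k) - H r := by
  induction k generalizing r with
  | zero => simp
  | succ k ih =>
    rw [Finset.sum_Icc_succ_top (by omega)]
    have := ih (r + 1)
    rw [H_succ] at this
    push_cast at this ⊢
    rw [show r + (k + 1) = r + 1 + k by ring]
    rw [show (r : ℝ) + (k + 1) + 1 = r + 1 + k + 1 by ring, this]
    rw [show (r : ℝ) + 1 + k + 1 - (k + 1) = r + 1 by ring]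
    ring

lemma sum_second {p : ℕ} (hp : 1 ≤ p) (n : ℕ) :
    ∑ m ∈ Ioo 0 n, 2 / (2 * n : ℝ) ^ p * (1 / (2 * n - m))
      = 2 / (2 * n : ℝ) ^ p * (H (2 * n) - H n - 1 / (2 * n)) := by
  rw [← Finset.mul_sum]
  rcases n with _ | q
  · simp [show p ≠ 0 by omega]
  congr 1
  have h := sum_reflect q (q + 1)
  rw [show Ioo 0 (q + 1) = Icc 1 q by ext; simp; omega,
    show 2 * (q + 1) = q + 1 + q + 1 by ring, H_succ (q + 1 + q)]
  push_cast at h ⊢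
  rw [show (2 : ℝ) * (q + 1) = q + 1 + q + 1 by ring, h]
  ring

/-! ### The inner series over `n > m` -/

lemma tendsto_H_add (a : ℕ) :
    Tendsto (fun I : ℕ => H (I + a) - Real.log I) atTop (𝓝 Real.eulerMascheroniConstant) := by
  have h0 : Tendsto (fun I : ℕ => H I - Real.log I) atTop (𝓝 Real.eulerMascheroniConstant) := by
    simpa only [H_eq_harmonic] using Real.tendsto_harmonic_sub_log
  induction a with
  | zero => simpa using h0
  | succ a ih =>
    have h1 : Tendsto (fun I : ℕ => 1 / (((I + a : ℕ) : ℝ) + 1)) atTop (𝓝 0) :=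
      tendsto_one_div_add_atTop_nhds_zero_nat.comp (tendsto_add_atTop_nat a)
    have := ih.add h1
    rw [add_zero] at this
    refine this.congr fun I => ?_
    rw [← add_assoc, H_succ]
    ring

lemma tendsto_H_two_mul_add (a : ℕ) :
    Tendsto (fun I : ℕ => H (2 * I + a) - Real.log I) atTop
      (𝓝 (Real.eulerMascheroniConstant + Real.log 2)) := by
  have h1 : Tendsto (fun I : ℕ => 2 * I) atTop atTop :=
    tendsto_id.const_mul_atTop' (by norm_num)
  have h2 := ((tendsto_H_add a).comp h1).add_const (Real.log 2)
  refine h2.congr' ?_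
  filter_upwards [eventually_gt_atTop 0] with I hI
  have : (I : ℝ) ≠ 0 := by positivity
  simp only [Function.comp]
  push_cast
  rw [Real.log_mul (by norm_num) this]
  ring

/-- The value of `∑_{n > m} (1/(2n-m) - 1/(2n))`; it depends on the parity of `m`. -/
noncomputable def innerVal (m : ℕ) : ℝ :=
  if Even m then (H m - H (m / 2)) / 2 else Real.log 2 - H m / 2 + H (m / 2) / 2

lemma innerVal_even (k : ℕ) : innerVal (2 * k) = (H (2 * k) - H k) / 2 := by
  simp [innerVal]

lemma innerVal_odd (k : ℕ) :
    innerVal (2 * k + 1) = Real.log 2 - H (2 * k + 1) / 2 + H k / 2 := by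
  rw [innerVal, if_neg (by simp), show (2 * k + 1) / 2 = k by omega]

lemma partial_even (k I : ℕ) :
    ∑ i ∈ range I, (1 / (((2 * k : ℕ) : ℝ) + 2 + 2 * i) - 1 / (2 * ((2 * k : ℕ) : ℝ) + 2 + 2 * i))
      = (H (I + k) - H k) / 2 - (H (I + 2 * k) - H (2 * k)) / 2 := by
  induction I with
  | zero => simp
  | succ I ih =>
    rw [Finset.sum_range_succ, ih, show I + 1 + k = I + k + 1 by ring,
      show I + 1 + 2 * k = I + 2 * k + 1 by ring, H_succ, H_succ]
    push_cast
    field_simp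
    ring

lemma partial_odd (k I : ℕ) :
    ∑ i ∈ range I,
        (1 / (((2 * k + 1 : ℕ) : ℝ) + 2 + 2 * i) - 1 / (2 * ((2 * k + 1 : ℕ) : ℝ) + 2 + 2 * i))
      = (H (2 * I + (2 * k + 1)) - H (I + k) / 2) - (H (2 * k + 1) - H k / 2)
        - (H (I + (2 * k + 1)) - H (2 * k + 1)) / 2 := by
  induction I with
  | zero => simp
  | succ I ih =>
    rw [Finset.sum_range_succ, ih, show I + 1 + k = I + k + 1 by ring,
      show I + 1 + (2 * k + 1) = I + (2 * k + 1) + 1 by ring,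
      show 2 * (I + 1) + (2 * k + 1) = 2 * I + (2 * k + 1) + 1 + 1 by ring,
      H_succ (I + k), H_succ (I + (2 * k + 1)), H_succ (2 * I + (2 * k + 1) + 1),
      H_succ (2 * I + (2 * k + 1))]
    push_cast
    have e1 : (2 * (I : ℝ) + (2 * k + 1) + 1) = 2 * (I + k + 1) := by ring
    have e2 : (2 * (2 * (k : ℝ) + 1) + 2 + 2 * I) = 2 * (I + (2 * k + 1) + 1) := by ring
    have e3 : (2 * (k : ℝ) + 1 + 2 + 2 * I) = 2 * (I + k + 1) + 1 := by ring
    rw [e1, e2, e3]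
    generalize (I : ℝ) + k + 1 = x
    generalize (I : ℝ) + (2 * k + 1) + 1 = y
    ring

lemma hasSum_inner (m : ℕ) :
    HasSum (fun i : ℕ => 1 / ((m : ℝ) + 2 + 2 * i) - 1 / (2 * (m : ℝ) + 2 + 2 * i))
      (innerVal m) := by
  rw [hasSum_iff_tendsto_nat_of_nonneg]
  · obtain ⟨k, rfl | rfl⟩ := m.even_or_odd'
    · rw [innerVal_even]
      have h := (((tendsto_H_add k).sub_const (H k)).div_const 2).sub
        (((tendsto_H_add (2 * k)).sub_const (H (2 * k))).div_const 2)
      convert h using 2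
      · rw [partial_even]; ring
      · ring
    · rw [innerVal_odd]
      have h := (((tendsto_H_two_mul_add (2 * k + 1)).sub ((tendsto_H_add k).div_const 2)).sub_const
        (H (2 * k + 1) - H k / 2)).sub
        (((tendsto_H_add (2 * k + 1)).sub_const (H (2 * k + 1))).div_const 2)
      convert h using 2
      · rw [partial_odd]; ring
      · ring
  · intro i
    have : 1 / (2 * (m : ℝ) + 2 + 2 * i) ≤ 1 / ((m : ℝ) + 2 + 2 * i) := by
      have : (0 : ℝ) ≤ m := Nat.cast_nonneg m
      gcongr
      linarith
    linarith

/-! ### Interchange of summation for the first piece -/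

/-- The first piece of the partial fraction decomposition, extended by zero to all pairs.
At `m = 0` it vanishes because `2 / 0 ^ p = 0`. -/
noncomputable def firstTerm (p n m : ℕ) : ℝ :=
  if m < n then 2 / (m : ℝ) ^ p * (1 / (2 * n - m) - 1 / (2 * n)) else 0

lemma firstTerm_nonneg (p n m : ℕ) : 0 ≤ firstTerm p n m := by
  unfold firstTerm
  split_ifs with h
  · have h' : (m : ℝ) < n := by exact_mod_cast h
    have hm : (0 : ℝ) ≤ m := Nat.cast_nonneg m
    have : 1 / (2 * (n : ℝ)) ≤ 1 / (2 * n - m) := by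
      apply one_div_le_one_div_of_le <;> linarith
    have : 0 ≤ 1 / (2 * (n : ℝ) - m) - 1 / (2 * n) := by linarith
    positivity
  · exact le_rfl

lemma firstTerm_le {p : ℕ} (hp : 2 ≤ p) (n m : ℕ) (hm : 0 < m) (hmn : m < n) :
    firstTerm p n m ≤ 1 / ((n : ℝ) ^ 2 * m) := by
  rw [firstTerm, if_pos hmn]
  have hm1 : (1 : ℝ) ≤ m := by exact_mod_cast hm
  have hmn' : (m : ℝ) < n := by exact_mod_cast hmn
  have hn' : (0 : ℝ) < n := by linarith
  have hd : (0 : ℝ) < 2 * n - m := by linarith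
  have e : 1 / (2 * (n : ℝ) - m) - 1 / (2 * n) = m / (2 * n * (2 * n - m)) := by
    field_simp
    ring
  rw [e]
  calc 2 / (m : ℝ) ^ p * (m / (2 * n * (2 * n - m)))
      ≤ 2 / (m : ℝ) ^ 2 * (m / (2 * n * n)) := by
        gcongr
        linarith
    _ = _ := by field_simp

lemma sum_firstTerm (p n : ℕ) :
    ∑ m ∈ Ioo 0 n, 2 / (m : ℝ) ^ p * (1 / (2 * n - m) - 1 / (2 * n))
      = ∑ m ∈ Ioo 0 n, firstTerm p n m := by
  refine Finset.sum_congr rfl fun m hm => ?_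
  rw [mem_Ioo] at hm
  rw [firstTerm, if_pos hm.2]

lemma hasSum_firstTerm_row {p : ℕ} (hp : 2 ≤ p) (n : ℕ) :
    HasSum (firstTerm p n) (∑ m ∈ Ioo 0 n, firstTerm p n m) := by
  refine hasSum_sum_of_ne_finset_zero fun m hm => ?_
  rw [mem_Ioo] at hm
  unfold firstTerm
  split_ifs with h
  · obtain rfl : m = 0 := by omega
    simp [show p ≠ 0 by omega]
  · rfl

lemma hasSum_firstTerm_col (p m : ℕ) :
    HasSum (fun n => firstTerm p n m) (2 / (m : ℝ) ^ p * innerVal m) := by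
  have h : HasSum (fun i => firstTerm p (i + (m + 1)) m) (2 / (m : ℝ) ^ p * innerVal m) := by
    have h := (hasSum_inner m).mul_left (2 / (m : ℝ) ^ p)
    refine (congrArg (fun f : ℕ → ℝ => HasSum f _) (funext fun i => ?_)).mpr h
    rw [firstTerm, if_pos (by omega)]
    push_cast
    congr 3 <;> ring
  rw [hasSum_nat_add_iff (f := fun n => firstTerm p n m)] at h
  rw [Finset.sum_eq_zero, add_zero] at h
  · exact h
  intro n hn
  rw [mem_range] at hn
  rw [firstTerm, if_neg (by omega)]

lemma summable_firstTerm {p : ℕ} (hp : 2 ≤ p) :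
    Summable fun x : ℕ × ℕ => firstTerm p x.1 x.2 := by
  rw [summable_prod_of_nonneg (fun x => firstTerm_nonneg p x.1 x.2)]
  refine ⟨fun n => (hasSum_firstTerm_row hp n).summable, ?_⟩
  simp only [(hasSum_firstTerm_row hp _).tsum_eq]
  exact summable_rows (fun n m _ _ => firstTerm_nonneg p n m) (firstTerm_le hp)

lemma tsum_first {p : ℕ} (hp : 2 ≤ p) :
    ∑' n, ∑ m ∈ Ioo 0 n, firstTerm p n m = ∑' m : ℕ, 2 / (m : ℝ) ^ p * innerVal m := by
  have h := (summable_firstTerm hp).tsum_comm (f := fun n m => firstTerm p n m)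
  simp only [(hasSum_firstTerm_row hp _).tsum_eq, (hasSum_firstTerm_col p _).tsum_eq] at h
  exact h.symm

lemma summable_inner {p : ℕ} (hp : 2 ≤ p) :
    Summable fun m : ℕ => 2 / (m : ℝ) ^ p * innerVal m := by
  have h := (summable_firstTerm hp).prod_symm.prod
  simpa only [Prod.swap, (hasSum_firstTerm_col p _).tsum_eq] using h

/-! ### Assembly -/

lemma tsum_H_div_pow {p : ℕ} (hp : 2 ≤ p) :
    ∑' n : ℕ, H n / (n : ℝ) ^ p = dzeta p 1 + rzeta (p + 1) := by
  unfold dzeta rzeta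
  rw [← (summable_dzeta hp le_rfl).tsum_add (Real.summable_one_div_nat_pow.2 (by omega))]
  refine tsum_congr fun n => ?_
  rcases n with _ | q
  · simp [H_zero]
  rw [show Ioo 0 (q + 1) = Icc 1 q by ext; simp; omega, H_succ, H]
  push_cast
  rw [add_div, Finset.sum_div]
  congr 1
  · refine Finset.sum_congr rfl fun m _ => ?_
    rw [pow_one, div_div, mul_comm]
  · rw [div_div, pow_succ, mul_comm]

lemma tsum_parity {f : ℕ → ℝ} (hf : Summable f) :
    ∑' n, f n = ∑' k, f (2 * k) + ∑' k, f (2 * k + 1) :=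
  (tsum_even_add_odd (hf.comp_injective fun a b h => by simpa using h)
    (hf.comp_injective fun a b h => by simpa using h)).symm

lemma lhs_eq {p : ℕ} (hp : 2 ≤ p)
    (hb : Summable fun n : ℕ => 2 / (2 * n : ℝ) ^ p * (H (2 * n) - H n - 1 / (2 * n))) :
    ∑ j ∈ Icc 2 p, (2 : ℝ) ^ (1 - (j : ℤ)) * dzeta j (p + 1 - j)
      = ∑' m : ℕ, 2 / (m : ℝ) ^ p * innerVal m
        - ∑' n : ℕ, 2 / (2 * n : ℝ) ^ p * (H (2 * n) - H n - 1 / (2 * n)) := by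
  rw [← tsum_first hp]
  rw [← (summable_rows (fun n m _ _ => firstTerm_nonneg p n m) (firstTerm_le hp)).tsum_sub hb]
  unfold dzeta
  simp only [← tsum_mul_left]
  rw [← Summable.tsum_finsetSum]
  · refine tsum_congr fun n => ?_
    rw [← sum_second (by omega), ← sum_firstTerm, ← Finset.sum_sub_distrib]
    simp only [Finset.mul_sum]
    rw [Finset.sum_comm]
    refine Finset.sum_congr rfl fun m hm => ?_
    rw [mem_Ioo] at hm
    exact geom_term p (by omega) n m hm.1 hm.2
  · intro j hj
    rw [mem_Icc] at hj
    exact (summable_dzeta hj.1 (by omega)).mul_left _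

theorem stmt11 (s : ℕ) (hs : 3 ≤ s) :
    ∑ j ∈ Finset.Icc 2 (s - 1), (2 : ℝ) ^ (1 - (j : ℤ)) * dzeta j (s - j)
      = ((2 : ℝ) ^ (1 - (s : ℤ)) - 1) * (dzeta (s - 1) 1 - 2 * Real.log 2 * rzeta (s - 1))
        + ((2 : ℝ) ^ (2 - (s : ℤ)) - 1) * rzeta s
        + ∑' n : ℕ, H n / (2 * (n : ℝ) + 1) ^ (s - 1) := by
  obtain ⟨p, rfl⟩ : ∃ p, s = p + 1 := ⟨s - 1, by omega⟩
  have hp : 2 ≤ p := by omega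
  rw [Nat.add_sub_cancel]
  have inj0 : Function.Injective fun k : ℕ => 2 * k := fun a b h => by simpa using h
  have inj1 : Function.Injective fun k : ℕ => 2 * k + 1 := fun a b h => by simpa using h
  have sH := summable_H_div_pow hp
  have sHe : Summable fun k : ℕ => H (2 * k) / (2 * k : ℝ) ^ p := by
    simpa [Function.comp_def] using sH.comp_injective inj0
  have sHo : Summable fun k : ℕ => H (2 * k + 1) / (2 * k + 1 : ℝ) ^ p := by
    simpa [Function.comp_def] using sH.comp_injective inj1
  have sHk : Summable fun k : ℕ => H k / (2 * k + 1 : ℝ) ^ p := by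
    refine Summable.of_nonneg_of_le (fun k => div_nonneg (H_nonneg k) (by positivity)) ?_ sHo
    intro k
    gcongr
    exact H_mono (by omega)
  have sz : Summable fun n : ℕ => 1 / (n : ℝ) ^ p := Real.summable_one_div_nat_pow.2 (by omega)
  have sz1 : Summable fun n : ℕ => 1 / (n : ℝ) ^ (p + 1) :=
    Real.summable_one_div_nat_pow.2 (by omega)
  have szo : Summable fun k : ℕ => 1 / (2 * k + 1 : ℝ) ^ p := by
    simpa [Function.comp_def] using sz.comp_injective inj1
  have sze : Summable fun k : ℕ => 1 / (2 * k : ℝ) ^ p := by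
    simpa [Function.comp_def] using sz.comp_injective inj0
  -- the single series attached to the second piece of the partial fractions
  have eb : ∀ n : ℕ, 2 / (2 * n : ℝ) ^ p * (H (2 * n) - H n - 1 / (2 * n))
      = 2 * (H (2 * n) / (2 * n : ℝ) ^ p) - 2 / 2 ^ p * (H n / (n : ℝ) ^ p)
        - 1 / 2 ^ p * (1 / (n : ℝ) ^ (p + 1)) := by
    intro n
    rcases Nat.eq_zero_or_pos n with rfl | hn
    · simp [H_zero]
    have hn' : (0 : ℝ) < n := by exact_mod_cast hn
    rw [mul_pow, pow_succ]
    field_simp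
  have sb1 := (sHe.mul_left 2).sub (sH.mul_left (2 / 2 ^ p))
  have sb2 := sz1.mul_left (1 / 2 ^ p : ℝ)
  have hb : Summable fun n : ℕ => 2 / (2 * n : ℝ) ^ p * (H (2 * n) - H n - 1 / (2 * n)) := by
    simp only [eb]
    exact sb1.sub sb2
  have tb : ∑' n : ℕ, 2 / (2 * n : ℝ) ^ p * (H (2 * n) - H n - 1 / (2 * n))
      = 2 * ∑' k : ℕ, H (2 * k) / (2 * k : ℝ) ^ p - 2 / 2 ^ p * ∑' n : ℕ, H n / (n : ℝ) ^ p
        - 1 / 2 ^ p * rzeta (p + 1) := by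
    simp only [eb]
    rw [sb1.tsum_sub sb2, (sHe.mul_left 2).tsum_sub (sH.mul_left (2 / 2 ^ p)), tsum_mul_left,
      tsum_mul_left, tsum_mul_left, rzeta]
  -- the series attached to the first piece, split by parity
  have ta : ∑' m : ℕ, 2 / (m : ℝ) ^ p * innerVal m
      = (∑' k : ℕ, H (2 * k) / (2 * k : ℝ) ^ p - 1 / 2 ^ p * ∑' n : ℕ, H n / (n : ℝ) ^ p)
        + (2 * Real.log 2 * ∑' k : ℕ, 1 / (2 * k + 1 : ℝ) ^ p
          - ∑' k : ℕ, H (2 * k + 1) / (2 * k + 1 : ℝ) ^ p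
          + ∑' k : ℕ, H k / (2 * k + 1 : ℝ) ^ p) := by
    rw [tsum_parity (summable_inner hp)]
    congr 1
    · rw [← tsum_mul_left, ← sHe.tsum_sub (sH.mul_left _)]
      refine tsum_congr fun k => ?_
      rw [innerVal_even]
      push_cast
      rw [mul_pow, one_div_mul_eq_div, div_div, mul_comm ((k : ℝ) ^ p)]
      ring
    · rw [← tsum_mul_left, ← (szo.mul_left _).tsum_sub sHo,
        ← ((szo.mul_left _).sub sHo).tsum_add sHk]
      refine tsum_congr fun k => ?_
      rw [innerVal_odd]
      push_cast
      ring
  have tH : ∑' n : ℕ, H n / (n : ℝ) ^ p = ∑' k : ℕ, H (2 * k) / (2 * k : ℝ) ^ p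
      + ∑' k : ℕ, H (2 * k + 1) / (2 * k + 1 : ℝ) ^ p := by
    rw [tsum_parity sH]
    push_cast
    rfl
  have tz : rzeta p = 1 / 2 ^ p * rzeta p + ∑' k : ℕ, 1 / (2 * k + 1 : ℝ) ^ p := by
    conv_lhs => rw [rzeta, tsum_parity sz]
    rw [rzeta, ← tsum_mul_left]
    push_cast
    congr 1
    refine tsum_congr fun k => ?_
    rw [mul_pow, one_div_mul_one_div]
  have tE := tsum_H_div_pow hp
  rw [lhs_eq hp hb, ta, tb]
  have z1 : (2 : ℝ) ^ (1 - ((p + 1 : ℕ) : ℤ)) = 1 / 2 ^ p := by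
    rw [show (1 - ((p + 1 : ℕ) : ℤ)) = -(p : ℤ) by push_cast; ring, zpow_neg, zpow_natCast, one_div]
  have z2 : (2 : ℝ) ^ (2 - ((p + 1 : ℕ) : ℤ)) = 2 * (1 / 2 ^ p) := by
    rw [show (2 - ((p + 1 : ℕ) : ℤ)) = 1 + -(p : ℤ) by push_cast; ring,
      zpow_add₀ (by norm_num), zpow_neg, zpow_natCast, zpow_one, one_div]
  rw [z1, z2, show (2 : ℝ) / 2 ^ p = 2 * (1 / 2 ^ p) by ring]
  generalize (1 : ℝ) / 2 ^ p = c at *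
  generalize ∑' k : ℕ, 1 / (2 * k + 1 : ℝ) ^ p = zo at *
  linear_combination (-2 * Real.log 2) * tz + tH + (c - 1) * tE
end

section
/- For every integer s ≥ 1, ∑_{j=2}^{2s} 2^{1-j} ζ(j, 2s+1-j) = (s - 1 + 2^{1-2s}) ζ(2s+1) - ∑_{k=1}^{s-1} (4^{-k} - 4^{-s})(4^k - 2) ζ(2k) ζ(2s+1-2k). -/
/-!
Write `h(n) = ∑_{i ≤ n} (-1)^{i-1}/i`, `L = lim h(n)`, and `η(p) = ∑ (-1)^{n-1}/n^p`, so that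
`η(p) = (1 - 2^{1-p}) ζ(p)` for `p ≥ 2` and `η(1) = L`.

The coefficient in the theorem factors as
`(4^{-k} - 4^{-s})(4^k - 2) = (1 - 2^{1-2k})(1 - 2^{1-(2s+1-2k)})`, so the sum on the right is
`∑_{k=1}^{s-1} η(2k) η(2s+1-2k)`. Both sides are related to the Euler sum `E = ∑ h(n)/n^{2s}`.

* Left-hand side (`partial_weighted`, `partial_weighted_tendsto`). For fixed `m < n` the sum over `j`
  is geometric and equals
  `2 m^{-2s} (1/(2n-m) - 1/(2n)) - 2 (2n)^{-2s}/(2n-m)`. Summing the first part over `n` and the second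
  over `m` gives harmonic and alternating harmonic numbers, and in the limit the left-hand side is
  `L ζ(2s) + L η(2s) - E + 2^{-2s} ζ(2s+1)`.
* Euler sum (`finite_identity`, `tsum_altH`). In `∑_{k=1}^s η(2k) η(2s+1-2k)`, truncated to
  `m, n ≤ M`, the sum over `k` is geometric. The diagonal contributes `s ζ(2s+1)`; off the diagonal,
  symmetrising in `m` and `n` leaves `∑_n n^{-2s} ∑_{m ≠ n} (-1)^{m-n}/(m-n)`, whose inner sum is
  `h(n-1) - h(M-n)`. Letting `M → ∞` gives
  `∑_{k=1}^s η(2k) η(2s+1-2k) = s ζ(2s+1) - η(2s+1) + E - L ζ(2s)`.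

Eliminating `E` cancels every occurrence of `L`. Working with finite truncations and passing to the
limit by Tannery's theorem (`tannery`) handles the conditionally convergent series.
-/

open scoped BigOperators

open Filter Topology Finset

namespace AltEuler

/-! ### Alternating harmonic numbers -/

/-- The alternating harmonic number `∑_{i=1}^n (-1)^{i-1}/i`. -/
noncomputable def altH (n : ℕ) : ℝ := ∑ i ∈ range n, (-1 : ℝ) ^ i / ((i : ℝ) + 1)

/-- The partial sum `∑_{n=1}^M (-1)^n/n^p`. It approximates `-η(p)`, the sign being opposite to the usual
convention for the Dirichlet eta function. -/
noncomputable def altZ (M p : ℕ) : ℝ := ∑ n ∈ Icc 1 M, (-1 : ℝ) ^ n / (n : ℝ) ^ p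

lemma altH_succ (n : ℕ) : altH (n + 1) = altH n + (-1 : ℝ) ^ n / ((n : ℝ) + 1) := by
  simp [altH, sum_range_succ]

lemma H_succ (n : ℕ) : H (n + 1) = H n + 1 / ((n : ℝ) + 1) := by
  simp [H, sum_Icc_succ_top]

/-- The limit is `log 2`, but its value plays no role: it cancels in the final formula. -/
lemma exists_altH_tendsto : ∃ L : ℝ, Tendsto altH atTop (𝓝 L) := by
  have hanti : Antitone (fun i : ℕ => 1 / ((i : ℝ) + 1)) := by
    intro a b hab
    have : (a : ℝ) ≤ b := by exact_mod_cast hab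
    dsimp only
    gcongr
  obtain ⟨L, hL⟩ := hanti.tendsto_alternating_series_of_tendsto_zero
    tendsto_one_div_add_atTop_nhds_zero_nat
  refine ⟨L, hL.congr fun n => ?_⟩
  simp [altH, div_eq_mul_inv]

lemma altZ_one (M : ℕ) : altZ M 1 = -altH M := by
  induction M with
  | zero => simp [altZ, altH]
  | succ M ih =>
    rw [altH_succ, altZ, sum_Icc_succ_top (by omega), ← altZ, ih]
    push_cast
    ring

/-! ### Finite geometric sums and the truncated Euler sum identity -/

lemma geom_pair (x y : ℝ) (hx : x ≠ 0) (hy : y ≠ 0) (hxy : x - y ≠ 0) (K : ℕ) (hK : 1 ≤ K) :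
    ∑ j ∈ Icc 2 K, 1 / (x ^ j * y ^ (K + 1 - j))
      = (1 / y ^ K - 1 / x ^ K) / (x - y) - 1 / (x * y ^ K) := by
  induction K, hK using Nat.le_induction with
  | base => simp; field_simp; ring
  | succ K hK ih =>
    rw [sum_Icc_succ_top (by omega)]
    have : ∑ j ∈ Icc 2 K, 1 / (x ^ j * y ^ (K + 1 + 1 - j))
        = (∑ j ∈ Icc 2 K, 1 / (x ^ j * y ^ (K + 1 - j))) / y := by
      rw [sum_div]
      refine sum_congr rfl fun j hj => ?_
      rw [mem_Icc] at hj
      rw [show K + 1 + 1 - j = (K + 1 - j) + 1 by omega, pow_succ]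
      field_simp
    rw [this, ih, show K + 1 + 1 - (K + 1) = 1 by omega]
    field_simp
    ring

lemma geom_sq (m n : ℝ) (hm : m ≠ 0) (hn : n ≠ 0) (h1 : m - n ≠ 0) (h2 : m + n ≠ 0) (s : ℕ) :
    ∑ k ∈ Icc 1 s, 1 / (m ^ (2 * k) * n ^ (2 * s + 1 - 2 * k))
      = n * (1 / n ^ (2 * s) - 1 / m ^ (2 * s)) / ((m - n) * (m + n)) := by
  induction s with
  | zero => simp
  | succ s ih =>
    rw [sum_Icc_succ_top (by omega)]
    have : ∑ k ∈ Icc 1 s, 1 / (m ^ (2 * k) * n ^ (2 * (s + 1) + 1 - 2 * k))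
        = (∑ k ∈ Icc 1 s, 1 / (m ^ (2 * k) * n ^ (2 * s + 1 - 2 * k))) / n ^ 2 := by
      rw [sum_div]
      refine sum_congr rfl fun k hk => ?_
      rw [mem_Icc] at hk
      rw [show 2 * (s + 1) + 1 - 2 * k = (2 * s + 1 - 2 * k) + 2 by omega, pow_add]
      field_simp
    rw [this, ih, show 2 * (s + 1) + 1 - 2 * (s + 1) = 1 by omega, show 2 * (s + 1) = 2 * s + 2 by ring,
      pow_add, pow_add]
    field_simp
    ring

/-- The sum of `(-1)^{m-N}/(m-N)` over `1 ≤ m ≤ N + d`, `m ≠ N`, where `N = n + 1`; the summand at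
`m = N` vanishes since `x / 0 = 0`. -/
lemma inner_alt (n d : ℕ) :
    ∑ m ∈ Icc 1 (n + 1 + d), (-1 : ℝ) ^ (m + (n + 1)) / ((m : ℝ) - ((n + 1 : ℕ) : ℝ))
      = altH n - altH d := by
  induction d with
  | zero =>
    rw [add_zero, sum_Icc_succ_top (by omega)]
    have : altH n = ∑ m ∈ Icc 1 n, (-1 : ℝ) ^ (m + (n + 1)) / ((m : ℝ) - ((n + 1 : ℕ) : ℝ)) := by
      rw [altH, ← sum_range_reflect, ← Ico_add_one_right_eq_Icc, sum_Ico_eq_sum_range]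
      refine sum_congr (by simp) fun i hi => ?_
      rw [mem_range] at hi
      obtain ⟨c, rfl⟩ : ∃ c, n = i + 1 + c := ⟨n - (i + 1), by omega⟩
      rw [show i + 1 + c - 1 - i = c by omega,
        show 1 + i + (i + 1 + c + 1) = c + 1 + 2 * (i + 1) by omega, pow_add _ (c + 1), pow_mul]
      push_cast
      rw [show (1 + (i : ℝ) - (i + 1 + c + 1)) = -((c : ℝ) + 1) by ring, div_neg, pow_succ]
      simp [neg_div]
    rw [← this]
    simp [altH]
  | succ d ih =>
    rw [← add_assoc, sum_Icc_succ_top (by omega), ih, altH_succ,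
      show n + 1 + d + 1 + (n + 1) = d + 1 + 2 * (n + 1) by ring, pow_add, pow_mul, pow_succ]
    push_cast
    rw [show ((n : ℝ) + 1 + d + 1 - (n + 1)) = d + 1 by ring]
    simp
    ring

/-- Geometric summation over `k`. On the diagonal `m = n` the last term is `0` by the convention
`x / 0 = 0`, and off the diagonal the first one is. -/
lemma pair_sum (s m n : ℕ) (hm : 1 ≤ m) (hn : 1 ≤ n) :
    ∑ k ∈ Icc 1 s, 1 / ((m : ℝ) ^ (2 * k) * (n : ℝ) ^ (2 * s + 1 - 2 * k))
      = (if m = n then (s : ℝ) / (n : ℝ) ^ (2 * s + 1) else 0)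
        + (n : ℝ) * (1 / (n : ℝ) ^ (2 * s) - 1 / (m : ℝ) ^ (2 * s)) / (((m : ℝ) - n) * (m + n)) := by
  have hm' : (m : ℝ) ≠ 0 := by positivity
  have hn' : (n : ℝ) ≠ 0 := by positivity
  split_ifs with h
  · subst h
    rw [sum_congr rfl (g := fun _ => 1 / (m : ℝ) ^ (2 * s + 1))]
    · simp [div_eq_mul_inv]
    · intro k hk
      rw [mem_Icc] at hk
      rw [← pow_add, show 2 * k + (2 * s + 1 - 2 * k) = 2 * s + 1 by omega]
  · rw [zero_add]
    exact geom_sq _ _ hm' hn' (sub_ne_zero.2 (by exact_mod_cast h)) (by positivity) s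

/-- The truncated form of the evaluation of `∑ altH n / n^{2s}`: summing the geometric progressions in
`k` and symmetrising in the two summation variables leaves only the differences `1/(m - n)`. -/
lemma finite_identity (s M : ℕ) :
    ∑ k ∈ Icc 1 s, altZ M (2 * k) * altZ M (2 * s + 1 - 2 * k)
      = s * ∑ n ∈ Icc 1 M, 1 / (n : ℝ) ^ (2 * s + 1) + altZ M (2 * s + 1)
        + ∑ n ∈ Icc 1 M, 1 / (n : ℝ) ^ (2 * s) * (altH n - altH (M - n)) := by
  have h1 : ∑ k ∈ Icc 1 s, altZ M (2 * k) * altZ M (2 * s + 1 - 2 * k)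
      = ∑ n ∈ Icc 1 M, ∑ m ∈ Icc 1 M, (-1 : ℝ) ^ (m + n) *
        ∑ k ∈ Icc 1 s, 1 / ((m : ℝ) ^ (2 * k) * (n : ℝ) ^ (2 * s + 1 - 2 * k)) := by
    simp_rw [altZ, sum_mul_sum, mul_sum]
    rw [sum_comm]
    conv_rhs => rw [sum_comm]
    refine sum_congr rfl fun m _ => ?_
    rw [sum_comm]
    refine sum_congr rfl fun n _ => sum_congr rfl fun k _ => ?_
    rw [pow_add, div_mul_div_comm, mul_one_div]
  have h2 : ∀ n ∈ Icc 1 M, ∀ m ∈ Icc 1 M, (-1 : ℝ) ^ (m + n) *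
        ∑ k ∈ Icc 1 s, 1 / ((m : ℝ) ^ (2 * k) * (n : ℝ) ^ (2 * s + 1 - 2 * k))
      = (if m = n then (s : ℝ) / (n : ℝ) ^ (2 * s + 1) else 0)
        + ((-1 : ℝ) ^ (m + n) * (1 / (n : ℝ) ^ (2 * s)) * (n / (((m : ℝ) - n) * (m + n)))
        - (-1 : ℝ) ^ (m + n) * (1 / (m : ℝ) ^ (2 * s)) * (n / (((m : ℝ) - n) * (m + n)))) := by
    intro n hn m hm
    rw [mem_Icc] at hn hm
    rw [pair_sum s m n hm.1 hn.1, mul_add]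
    congr 1
    · split_ifs with h
      · subst h
        rw [← two_mul, pow_mul]; simp
      · simp
    · ring
  rw [h1, sum_congr rfl fun n hn => sum_congr rfl (h2 n hn)]
  simp_rw [sum_add_distrib, sum_sub_distrib]
  -- exchanging the names of the two variables turns both halves into multiples of `n ^ (-2 s)`
  rw [sum_comm (f := fun n m : ℕ => (-1 : ℝ) ^ (m + n) * (1 / (m : ℝ) ^ (2 * s)) *
    (n / (((m : ℝ) - n) * (m + n))))]
  rw [add_assoc, altZ, mul_sum, ← sum_add_distrib, ← sum_sub_distrib]
  congr 1
  · refine sum_congr rfl fun n hn => ?_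
    rw [sum_ite_eq' (Icc 1 M) n, if_pos hn, mul_one_div]
  · refine sum_congr rfl fun n hn => ?_
    rw [mem_Icc] at hn
    obtain ⟨n, rfl⟩ : ∃ c, n = c + 1 := ⟨n - 1, by omega⟩
    obtain ⟨d, rfl⟩ : ∃ d, M = n + 1 + d := ⟨M - (n + 1), by omega⟩
    rw [show n + 1 + d - (n + 1) = d by omega, altH_succ]
    have h3 := inner_alt n d
    rw [← sum_sub_distrib]
    have h4 : ∀ m ∈ Icc 1 (n + 1 + d),
        ((-1 : ℝ) ^ (m + (n + 1)) * (1 / ((n + 1 : ℕ) : ℝ) ^ (2 * s)) *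
            (((n + 1 : ℕ) : ℝ) / (((m : ℝ) - (n + 1 : ℕ)) * (m + (n + 1 : ℕ))))
          - (-1 : ℝ) ^ (n + 1 + m) * (1 / ((n + 1 : ℕ) : ℝ) ^ (2 * s)) *
            ((m : ℝ) / ((((n + 1 : ℕ) : ℝ) - m) * ((n + 1 : ℕ) + m))))
        = 1 / ((n + 1 : ℕ) : ℝ) ^ (2 * s) *
          ((-1 : ℝ) ^ (m + (n + 1)) / ((m : ℝ) - ((n + 1 : ℕ) : ℝ))) := by
      intro m hm
      rw [add_comm (n + 1) m]
      by_cases h : m = n + 1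
      · subst h; simp
      · have h5 : (m : ℝ) - (n + 1 : ℕ) ≠ 0 := sub_ne_zero.2 (by exact_mod_cast h)
        have h6 : (m : ℝ) + (n + 1 : ℕ) ≠ 0 := by positivity
        have h7 : ((n + 1 : ℕ) : ℝ) ≠ 0 := by positivity
        rw [show (((n + 1 : ℕ) : ℝ) - m) * ((n + 1 : ℕ) + m)
          = -(((m : ℝ) - (n + 1 : ℕ)) * (m + (n + 1 : ℕ))) by ring]
        generalize ((n + 1 : ℕ) : ℝ) = y at *
        field_simp
        ring
    rw [sum_congr rfl h4, ← mul_sum, h3]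
    push_cast
    rw [pow_succ, pow_succ]
    have : (n : ℝ) + 1 ≠ 0 := by positivity
    field_simp
    ring


/-! ### Passage to the limit and the Euler sum -/

/-- Tannery's theorem for sums over `1 ≤ n ≤ M` whose coefficients depend on `M`. -/
lemma tannery {a : ℕ → ℝ} (ha : Summable a) (ha0 : a 0 = 0) (hnn : ∀ n, 0 ≤ a n)
    {c : ℕ → ℕ → ℝ} {l : ℕ → ℝ} {C : ℝ} (hC : ∀ M n, n ≤ M → |c M n| ≤ C)
    (hl : ∀ n, Tendsto (fun M => c M n) atTop (𝓝 (l n))) :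
    Tendsto (fun M => ∑ n ∈ Icc 1 M, a n * c M n) atTop (𝓝 (∑' n, a n * l n)) := by
  have h := tendsto_tsum_of_dominated_convergence (𝓕 := atTop)
    (f := fun M n => if n ∈ Icc 1 M then a n * c M n else 0) (g := fun n => a n * l n)
    (bound := fun n => a n * C) (ha.mul_right C) ?_ ?_
  · refine h.congr fun M => ?_
    rw [tsum_eq_sum (s := Icc 1 M) fun n hn => if_neg hn]
    exact sum_congr rfl fun n hn => if_pos hn
  · intro n
    rcases Nat.eq_zero_or_pos n with rfl | hn
    · simp [ha0]
    · refine ((hl n).const_mul (a n)).congr' ?_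
      filter_upwards [eventually_ge_atTop n] with M hM
      rw [if_pos (mem_Icc.2 ⟨hn, hM⟩)]
  · refine Eventually.of_forall fun M n => ?_
    have hC0 : 0 ≤ C := (abs_nonneg _).trans (hC 0 0 le_rfl)
    split_ifs with h
    · rw [mem_Icc] at h
      rw [norm_mul, Real.norm_of_nonneg (hnn n)]
      exact mul_le_mul_of_nonneg_left (hC M n h.2) (hnn n)
    · simpa using mul_nonneg (hnn n) hC0

lemma summable_zeta {p : ℕ} (hp : 2 ≤ p) : Summable fun n : ℕ => 1 / (n : ℝ) ^ p :=
  Real.summable_one_div_nat_pow.2 (by omega)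

lemma zeta_tendsto {p : ℕ} (hp : 2 ≤ p) :
    Tendsto (fun M : ℕ => ∑ n ∈ Icc 1 M, 1 / (n : ℝ) ^ p) atTop (𝓝 (rzeta p)) := by
  have := tannery (c := fun _ _ => 1) (l := fun _ => 1) (C := 1) (summable_zeta hp)
    (by simp; omega) (fun n => by positivity) (by simp) (fun _ => tendsto_const_nhds)
  simpa [rzeta] using this

lemma tsum_one_add_alt {f : ℕ → ℝ} (hf : Summable f) :
    ∑' n, f n + ∑' n, f n * (-1) ^ n = 2 * ∑' n, f (2 * n) := by
  have hf' : Summable fun n => f n * (-1 : ℝ) ^ n :=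
    Summable.of_norm (by simpa [abs_mul] using hf.abs)
  rw [← hf.tsum_add hf', ← tsum_even_add_odd, ← tsum_mul_left]
  · simp [pow_succ, two_mul]
  · exact (hf.add hf').comp_injective fun a b h => by simpa using h
  · exact (hf.add hf').comp_injective fun a b h => by simpa using h

lemma rzeta_double (p : ℕ) : ∑' n : ℕ, 1 / ((2 * n : ℕ) : ℝ) ^ p = rzeta p / 2 ^ p := by
  rw [rzeta, ← tsum_div_const]
  congr 1; ext n
  push_cast
  rw [mul_pow]; field_simp

lemma tsum_alt {p : ℕ} (hp : 2 ≤ p) :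
    ∑' n : ℕ, 1 / (n : ℝ) ^ p * (-1) ^ n = -((1 - 2 / 2 ^ p) * rzeta p) := by
  have := tsum_one_add_alt (summable_zeta hp)
  rw [rzeta_double p, ← rzeta] at this
  linear_combination this

lemma altZ_tendsto {p : ℕ} (hp : 2 ≤ p) :
    Tendsto (fun M => altZ M p) atTop (𝓝 (-((1 - 2 / 2 ^ p) * rzeta p))) := by
  rw [← tsum_alt hp]
  have := tannery (c := fun _ n => (-1) ^ n) (l := fun n => (-1) ^ n) (C := 1) (summable_zeta hp)
    (by simp; omega) (fun n => by positivity) (by simp) (fun _ => tendsto_const_nhds)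
  refine this.congr fun M => sum_congr rfl fun n _ => by ring

lemma exists_altH_bound : ∃ C : ℝ, ∀ n, |altH n| ≤ C := by
  obtain ⟨L, hL⟩ := exists_altH_tendsto
  obtain ⟨C, hC⟩ := hL.abs.bddAbove_range
  exact ⟨C, fun n => hC ⟨n, rfl⟩⟩

/-- Evaluation of the alternating Euler sum `∑ altH n / n^{2s}`, the limit of `finite_identity`; the
term `k = s` there supplies the product of `L` and `η(2s)`. -/
lemma tsum_altH {L : ℝ} (hL : Tendsto altH atTop (𝓝 L)) (s : ℕ) (hs : 1 ≤ s) :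
    ∑' n : ℕ, 1 / (n : ℝ) ^ (2 * s) * altH n
      = L * rzeta (2 * s) + L * ((1 - 2 / 2 ^ (2 * s)) * rzeta (2 * s))
        + ∑ k ∈ Icc 1 (s - 1), ((1 - 2 / 2 ^ (2 * k)) * rzeta (2 * k)) *
          ((1 - 2 / 2 ^ (2 * s + 1 - 2 * k)) * rzeta (2 * s + 1 - 2 * k))
        - s * rzeta (2 * s + 1) + (1 - 2 / 2 ^ (2 * s + 1)) * rzeta (2 * s + 1) := by
  obtain ⟨C, hC⟩ := exists_altH_bound
  have hlhs : Tendsto (fun M => ∑ k ∈ Icc 1 s, altZ M (2 * k) * altZ M (2 * s + 1 - 2 * k)) atTop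
      (𝓝 (∑ k ∈ Icc 1 (s - 1), (-((1 - 2 / 2 ^ (2 * k)) * rzeta (2 * k))) *
          (-((1 - 2 / 2 ^ (2 * s + 1 - 2 * k)) * rzeta (2 * s + 1 - 2 * k)))
        + (-((1 - 2 / 2 ^ (2 * s)) * rzeta (2 * s))) * (-L))) := by
    have : ∀ M, ∑ k ∈ Icc 1 s, altZ M (2 * k) * altZ M (2 * s + 1 - 2 * k)
        = ∑ k ∈ Icc 1 (s - 1), altZ M (2 * k) * altZ M (2 * s + 1 - 2 * k)
          + altZ M (2 * s) * (-altH M) := by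
      intro M
      obtain ⟨t, rfl⟩ : ∃ t, s = t + 1 := ⟨s - 1, by omega⟩
      rw [sum_Icc_succ_top (by omega), ← altZ_one, Nat.add_sub_cancel,
        show 2 * (t + 1) + 1 - 2 * (t + 1) = 1 by omega]
    simp_rw [this]
    refine (tendsto_finsetSum _ fun k hk => ?_).add ((altZ_tendsto (by omega)).mul hL.neg)
    rw [mem_Icc] at hk
    exact (altZ_tendsto (by omega)).mul (altZ_tendsto (by omega))
  have h1 := tannery (a := fun n : ℕ => 1 / (n : ℝ) ^ (2 * s)) (c := fun M n => altH n)
    (l := altH) (C := C) (summable_zeta (by omega)) (by simp; omega) (fun n => by positivity)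
    (fun _ n _ => hC n) (fun _ => tendsto_const_nhds)
  have h2 := tannery (a := fun n : ℕ => 1 / (n : ℝ) ^ (2 * s)) (c := fun M n => altH (M - n))
    (l := fun _ => L) (C := C) (summable_zeta (by omega)) (by simp; omega) (fun n => by positivity)
    (fun _ n _ => hC _) (fun n => hL.comp (tendsto_sub_atTop_nat n))
  have hrhs := (((zeta_tendsto (p := 2 * s + 1) (by omega)).const_mul (s : ℝ)).add
    (altZ_tendsto (p := 2 * s + 1) (by omega))).add (h1.sub h2)
  have := tendsto_nhds_unique hlhs (hrhs.congr fun M => by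
    rw [finite_identity, ← sum_sub_distrib]
    simp_rw [mul_sub])
  rw [tsum_mul_right, ← rzeta] at this
  simp_rw [neg_mul_neg] at this
  linear_combination -this

/-! ### The weighted sum of double zeta values -/

lemma H_two_mul_sub (n : ℕ) : H (2 * n) - H n = altH (2 * n) := by
  induction n with
  | zero => simp [H, altH]
  | succ n ih =>
    rw [show 2 * (n + 1) = 2 * n + 1 + 1 by ring, H_succ, H_succ, H_succ, altH_succ, altH_succ,
      ← ih, pow_succ, pow_mul]
    push_cast
    field_simp
    norm_num
    ring

lemma H_add_sub_bound (M d : ℕ) : |H (M + d) - H M| ≤ d / ((M : ℝ) + 1) := by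
  induction d with
  | zero => simp
  | succ d ih =>
    rw [← add_assoc, H_succ, add_sub_right_comm]
    refine (abs_add_le _ _).trans ?_
    push_cast
    rw [add_div]
    refine add_le_add ih ?_
    rw [abs_of_nonneg (by positivity)]
    gcongr
    linarith [(Nat.cast_nonneg d : (0 : ℝ) ≤ d)]

lemma H_tendsto {L : ℝ} (hL : Tendsto altH atTop (𝓝 L)) (m : ℕ) :
    Tendsto (fun M => H (2 * M - m) - H M) atTop (𝓝 L) := by
  have h2 : ∀ m, Tendsto (fun M : ℕ => 2 * M - m) atTop atTop := fun m =>
    tendsto_atTop_atTop.2 fun b => ⟨b + m, fun a ha => by omega⟩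
  induction m with
  | zero => exact (hL.comp (h2 0)).congr fun M => by simp [H_two_mul_sub]
  | succ m ih =>
    have h3 : Tendsto (fun M : ℕ => 1 / (((2 * M - (m + 1) : ℕ) : ℝ) + 1)) atTop (𝓝 0) :=
      tendsto_one_div_add_atTop_nhds_zero_nat.comp (h2 (m + 1))
    have := ih.sub h3
    rw [sub_zero] at this
    refine this.congr' ?_
    filter_upwards [eventually_gt_atTop m] with M hM
    rw [show 2 * M - m = 2 * M - (m + 1) + 1 by omega, H_succ]
    ring

/-- The summand `1/(2n - m)` runs over the reciprocals of the integers in `(m, m + 2d]` of the parity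
of `m`, which the sign `(-1)^m` in front of the alternating sum selects. -/
lemma inner_first (m d : ℕ) :
    ∑ n ∈ Ioc m (m + d), 2 * (1 / (2 * (n : ℝ) - m) - 1 / (2 * n))
      = H (m + 2 * d) - H (m + d) - (-1) ^ m * (altH (m + 2 * d) - altH m) := by
  induction d with
  | zero => simp
  | succ d ih =>
    rw [← add_assoc, sum_Ioc_succ_top (by omega), ih, show m + 2 * (d + 1) = m + 2 * d + 1 + 1 by ring,
      H_succ, H_succ, H_succ, altH_succ, altH_succ]
    have e : (-1 : ℝ) ^ m * (-1) ^ m = 1 := by rw [← mul_pow]; simp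
    have e1 : (-1 : ℝ) ^ m * ((-1) ^ (m + 2 * d)) = 1 := by
      rw [pow_add, pow_mul, ← mul_assoc, e]; simp
    have e2 : (-1 : ℝ) ^ m * ((-1) ^ (m + 2 * d + 1)) = -1 := by
      rw [pow_succ, ← mul_assoc, e1]; simp
    push_cast
    rw [show 2 * ((m : ℝ) + d + 1) - m = m + 2 * d + 1 + 1 by ring]
    have h3 : 2 * (1 / (2 * ((m : ℝ) + d + 1))) = 1 / (m + d + 1) := by field_simp
    linear_combination -h3 + (1 / ((m : ℝ) + 2 * d + 1)) * e1
      + (1 / ((m : ℝ) + 2 * d + 1 + 1)) * e2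

lemma inner_second_aux (j e : ℕ) :
    ∑ m ∈ Icc 1 j, 1 / (((j + e + 1 : ℕ) : ℝ) - m) = H (j + e) - H e := by
  induction j generalizing e with
  | zero => simp
  | succ j ih =>
    rw [sum_Icc_succ_top (by omega), show j + 1 + e + 1 = j + (e + 1) + 1 by ring, ih (e + 1),
      show j + 1 + e = j + (e + 1) by ring, H_succ e]
    push_cast
    rw [show (j : ℝ) + (e + 1) + 1 - (j + 1) = e + 1 by ring]
    ring

lemma inner_second (n : ℕ) (hn : 1 ≤ n) :
    ∑ m ∈ Ioo 0 n, 1 / (2 * (n : ℝ) - m) = altH (2 * n) - 1 / (2 * n) := by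
  obtain ⟨c, rfl⟩ : ∃ c, n = c + 1 := ⟨n - 1, by omega⟩
  have h := inner_second_aux c (c + 1)
  have hI : Ioo 0 (c + 1) = Icc 1 c := by ext x; simp; omega
  rw [← H_two_mul_sub, hI, show 2 * (c + 1) = c + (c + 1) + 1 by ring, H_succ]
  push_cast at h ⊢
  rw [show 2 * ((c : ℝ) + 1) = c + (c + 1) + 1 by ring, h]
  ring

/-- Geometric summation over `j`, with the divergent `j = 1` term subtracted. -/
lemma pair_weighted (s m n : ℕ) (hs : 1 ≤ s) (hm : 1 ≤ m) (hmn : m < n) :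
    ∑ j ∈ Icc 2 (2 * s), (2 : ℝ) ^ (1 - (j : ℤ)) * (1 / ((n : ℝ) ^ j * (m : ℝ) ^ (2 * s + 1 - j)))
      = 1 / (m : ℝ) ^ (2 * s) * (2 * (1 / (2 * (n : ℝ) - m) - 1 / (2 * n)))
        - 2 * (1 / ((2 * n : ℕ) : ℝ) ^ (2 * s) * (1 / (2 * (n : ℝ) - m))) := by
  have hm' : (0 : ℝ) < m := by exact_mod_cast hm
  have hn' : (m : ℝ) < n := by exact_mod_cast hmn
  have hg := geom_pair (2 * (n : ℝ)) m (by linarith) hm'.ne' (by linarith) (2 * s) (by omega)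
  have : ∀ j ∈ Icc 2 (2 * s),
      (2 : ℝ) ^ (1 - (j : ℤ)) * (1 / ((n : ℝ) ^ j * (m : ℝ) ^ (2 * s + 1 - j)))
        = 2 * (1 / ((2 * (n : ℝ)) ^ j * (m : ℝ) ^ (2 * s + 1 - j))) := by
    intro j _
    rw [zpow_sub₀ (by norm_num), zpow_natCast, zpow_one, mul_pow]
    field_simp
  rw [sum_congr rfl this, ← mul_sum, hg]
  push_cast
  have h1 : 2 * (n : ℝ) - m ≠ 0 := by linarith
  have h2 : (n : ℝ) ≠ 0 := by linarith
  generalize (2 * (n : ℝ)) ^ (2 * s) = u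
  field_simp
  ring

lemma partial_weighted (s M : ℕ) (hs : 1 ≤ s) :
    ∑ j ∈ Icc 2 (2 * s), (2 : ℝ) ^ (1 - (j : ℤ)) * ∑ n ∈ range (M + 1), ∑ m ∈ Ioo 0 n,
        1 / ((n : ℝ) ^ j * (m : ℝ) ^ (2 * s + 1 - j))
      = ∑ m ∈ Icc 1 M, 1 / (m : ℝ) ^ (2 * s) *
          (H (2 * M - m) - H M - (-1) ^ m * (altH (2 * M - m) - altH m))
        - 2 * ∑ n ∈ Icc 1 M, 1 / ((2 * n : ℕ) : ℝ) ^ (2 * s) * (altH (2 * n) - 1 / (2 * n)) := by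
  have h1 : ∑ j ∈ Icc 2 (2 * s), (2 : ℝ) ^ (1 - (j : ℤ)) * ∑ n ∈ range (M + 1), ∑ m ∈ Ioo 0 n,
        1 / ((n : ℝ) ^ j * (m : ℝ) ^ (2 * s + 1 - j))
      = ∑ n ∈ range (M + 1), ∑ m ∈ Ioo 0 n,
        (1 / (m : ℝ) ^ (2 * s) * (2 * (1 / (2 * (n : ℝ) - m) - 1 / (2 * n)))
        - 2 * (1 / ((2 * n : ℕ) : ℝ) ^ (2 * s) * (1 / (2 * (n : ℝ) - m)))) := by
    simp_rw [mul_sum]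
    rw [sum_comm]
    refine sum_congr rfl fun n _ => ?_
    rw [sum_comm]
    refine sum_congr rfl fun m hm => ?_
    rw [mem_Ioo] at hm
    exact pair_weighted s m n hs hm.1 hm.2
  rw [h1]
  simp_rw [sum_sub_distrib]
  congr 1
  · rw [sum_comm' (t' := Icc 1 M) (s' := fun m => Ioc m M)
      (by intro n m; simp only [mem_range, mem_Ioo, mem_Ioc, mem_Icc]; omega)]
    refine sum_congr rfl fun m hm => ?_
    rw [mem_Icc] at hm
    obtain ⟨d, rfl⟩ : ∃ d, M = m + d := ⟨M - m, by omega⟩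
    rw [← mul_sum, inner_first, show 2 * (m + d) - m = m + 2 * d by omega]
  · rw [mul_sum, range_eq_Ico, sum_eq_sum_Ico_succ_bot (by omega)]
    simp only [Ioo_self, sum_empty, zero_add]
    rw [Ico_add_one_right_eq_Icc]
    refine sum_congr rfl fun n hn => ?_
    rw [mem_Icc] at hn
    rw [← mul_sum, ← mul_sum, inner_second n hn.1]

/-- The weighted sum of double zeta values is expressed through the Euler sum `∑ altH n / n^{2s}`. -/
lemma partial_weighted_tendsto {L : ℝ} (hL : Tendsto altH atTop (𝓝 L)) (s : ℕ) (hs : 1 ≤ s) :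
    Tendsto (fun M => ∑ j ∈ Icc 2 (2 * s), (2 : ℝ) ^ (1 - (j : ℤ)) *
        ∑ n ∈ range (M + 1), ∑ m ∈ Ioo 0 n, 1 / ((n : ℝ) ^ j * (m : ℝ) ^ (2 * s + 1 - j))) atTop
      (𝓝 (L * rzeta (2 * s) + L * ((1 - 2 / 2 ^ (2 * s)) * rzeta (2 * s))
        - ∑' n : ℕ, 1 / (n : ℝ) ^ (2 * s) * altH n
        + 2 / 2 ^ (2 * s + 1) * rzeta (2 * s + 1))) := by
  obtain ⟨C, hC⟩ := exists_altH_bound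
  have hsum : Summable fun n : ℕ => 1 / (n : ℝ) ^ (2 * s) := summable_zeta (by omega)
  have hsumH : Summable fun n : ℕ => 1 / (n : ℝ) ^ (2 * s) * altH n := by
    refine Summable.of_norm_bounded (hsum.mul_right C) fun n => ?_
    rw [norm_mul, Real.norm_of_nonneg (by positivity)]
    exact mul_le_mul_of_nonneg_left (hC n) (by positivity)
  have hsumA : Summable fun n : ℕ => 1 / (n : ℝ) ^ (2 * s) * (-1) ^ n :=
    Summable.of_norm (by simpa [abs_mul] using hsum)
  have hsumHA : Summable fun n : ℕ => 1 / (n : ℝ) ^ (2 * s) * altH n * (-1) ^ n :=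
    Summable.of_norm (by simpa [abs_mul] using hsumH.abs)
  have hinj : Function.Injective fun n : ℕ => 2 * n := fun a b h => by simpa using h
  have h1 := tannery (a := fun n : ℕ => 1 / (n : ℝ) ^ (2 * s))
    (c := fun M m => H (2 * M - m) - H M - (-1) ^ m * (altH (2 * M - m) - altH m))
    (l := fun m => L - (-1) ^ m * (L - altH m)) (C := 1 + (C + C)) hsum
    (by simp; omega) (fun n => by positivity) ?_ ?_
  · have h2 := tannery (a := fun n : ℕ => 1 / ((2 * n : ℕ) : ℝ) ^ (2 * s))
      (c := fun M n => altH (2 * n) - 1 / (2 * n)) (l := fun n => altH (2 * n) - 1 / (2 * n))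
      (C := C + 1) (hsum.comp_injective hinj) (by simp; omega) (fun n => by positivity) ?_
      (fun _ => tendsto_const_nhds)
    · have h3 := (h1.sub (h2.const_mul 2)).congr fun M => (partial_weighted s M hs).symm
      convert h3 using 2
      have e1 : ∑' n : ℕ, 1 / (n : ℝ) ^ (2 * s) * (L - (-1) ^ n * (L - altH n))
          = L * rzeta (2 * s) - L * ∑' n : ℕ, 1 / (n : ℝ) ^ (2 * s) * (-1) ^ n
            + ∑' n : ℕ, 1 / (n : ℝ) ^ (2 * s) * altH n * (-1) ^ n := by
        rw [rzeta, ← tsum_mul_left, ← tsum_mul_left,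
          ← (hsum.mul_left L).tsum_sub (hsumA.mul_left L),
          ← ((hsum.mul_left L).sub (hsumA.mul_left L)).tsum_add hsumHA]
        congr 1; ext n; ring
      have e2 : ∑' n : ℕ, 1 / ((2 * n : ℕ) : ℝ) ^ (2 * s) * (altH (2 * n) - 1 / (2 * n))
          = ∑' n : ℕ, 1 / ((2 * n : ℕ) : ℝ) ^ (2 * s) * altH (2 * n)
            - rzeta (2 * s + 1) / 2 ^ (2 * s + 1) := by
        have e3 := (hsumH.comp_injective hinj).tsum_sub
          ((summable_zeta (p := 2 * s + 1) (by omega)).comp_injective hinj)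
        simp only [Function.comp] at e3
        rw [← rzeta_double, ← e3]
        congr 1; ext n
        rw [mul_sub, one_div_mul_one_div, pow_succ]
        push_cast
        rfl
      rw [e1, e2, tsum_alt (by omega)]
      linear_combination -(tsum_one_add_alt hsumH)
    · intro M n _
      refine (abs_sub _ _).trans (add_le_add (hC _) ?_)
      rcases Nat.eq_zero_or_pos n with rfl | hn
      · simp
      · have : (1 : ℝ) ≤ n := by exact_mod_cast hn
        rw [abs_of_nonneg (by positivity), div_le_one (by positivity)]
        linarith
  · intro M m hm
    refine (abs_sub _ _).trans (add_le_add ?_ ?_)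
    · rw [show 2 * M - m = M + (M - m) by omega]
      refine (H_add_sub_bound _ _).trans ?_
      rw [div_le_one (by positivity)]
      exact_mod_cast (by omega : M - m ≤ M + 1)
    · rw [abs_mul, abs_pow, abs_neg, abs_one, one_pow, one_mul]
      exact (abs_sub _ _).trans (add_le_add (hC _) (hC _))
  · intro m
    have h2 : Tendsto (fun M : ℕ => 2 * M - m) atTop atTop :=
      tendsto_atTop_atTop.2 fun b => ⟨b + m, fun a ha => by omega⟩
    exact (H_tendsto hL m).sub (((hL.comp h2).sub_const _).const_mul _)

/-- All summands are nonnegative, so convergence of the weighted sum of truncations already yields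
summability of every double series involved. -/
lemma weighted_dzeta_eq {s : ℕ} {l : ℝ}
    (h : Tendsto (fun M => ∑ j ∈ Icc 2 (2 * s), (2 : ℝ) ^ (1 - (j : ℤ)) *
        ∑ n ∈ range (M + 1), ∑ m ∈ Ioo 0 n, 1 / ((n : ℝ) ^ j * (m : ℝ) ^ (2 * s + 1 - j))) atTop
      (𝓝 l)) :
    ∑ j ∈ Icc 2 (2 * s), (2 : ℝ) ^ (1 - (j : ℤ)) * dzeta j (2 * s + 1 - j) = l := by
  obtain ⟨B, hB⟩ := h.bddAbove_range
  refine tendsto_nhds_unique (tendsto_finsetSum _ fun j hj => Tendsto.const_mul _ ?_) h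
  have hpos : (0 : ℝ) < (2 : ℝ) ^ (1 - (j : ℤ)) := by positivity
  have hnn : ∀ (j n : ℕ), 0 ≤ ∑ m ∈ Ioo 0 n, 1 / ((n : ℝ) ^ j * (m : ℝ) ^ (2 * s + 1 - j)) :=
    fun j n => sum_nonneg fun m _ => by positivity
  have hsum : Summable fun n : ℕ =>
      ∑ m ∈ Ioo 0 n, 1 / ((n : ℝ) ^ j * (m : ℝ) ^ (2 * s + 1 - j)) := by
    refine summable_of_sum_range_le (c := B / (2 : ℝ) ^ (1 - (j : ℤ))) (hnn j) fun M => ?_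
    rw [le_div_iff₀' hpos]
    refine le_trans ?_ (hB ⟨M, rfl⟩)
    refine le_trans ?_ (single_le_sum (f := fun j : ℕ => (2 : ℝ) ^ (1 - (j : ℤ)) *
        ∑ n ∈ range (M + 1), ∑ m ∈ Ioo 0 n, 1 / ((n : ℝ) ^ j * (m : ℝ) ^ (2 * s + 1 - j)))
      (fun i _ => mul_nonneg (by positivity) (sum_nonneg fun n _ => hnn i n)) hj)
    refine mul_le_mul_of_nonneg_left ?_ hpos.le
    rw [sum_range_succ]
    exact le_add_of_nonneg_right (hnn j M)
  exact hsum.hasSum.tendsto_sum_nat.comp (tendsto_add_atTop_nat 1)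

end AltEuler

theorem stmt12 (s : ℕ) (hs : 1 ≤ s) :
    ∑ j ∈ Finset.Icc 2 (2 * s), (2 : ℝ) ^ (1 - (j : ℤ)) * dzeta j (2 * s + 1 - j)
      = ((s : ℝ) - 1 + (2 : ℝ) ^ (1 - 2 * (s : ℤ))) * rzeta (2 * s + 1)
        - ∑ k ∈ Finset.Icc 1 (s - 1),
            ((4 : ℝ) ^ (-(k : ℤ)) - (4 : ℝ) ^ (-(s : ℤ))) * ((4 : ℝ) ^ k - 2)
              * rzeta (2 * k) * rzeta (2 * s + 1 - 2 * k) := by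
  obtain ⟨L, hL⟩ := AltEuler.exists_altH_tendsto
  rw [AltEuler.weighted_dzeta_eq (AltEuler.partial_weighted_tendsto hL s hs), AltEuler.tsum_altH hL s hs]
  have hk : ∑ k ∈ Finset.Icc 1 (s - 1),
      ((4 : ℝ) ^ (-(k : ℤ)) - (4 : ℝ) ^ (-(s : ℤ))) * ((4 : ℝ) ^ k - 2)
        * rzeta (2 * k) * rzeta (2 * s + 1 - 2 * k)
      = ∑ k ∈ Finset.Icc 1 (s - 1), ((1 - 2 / 2 ^ (2 * k)) * rzeta (2 * k)) *
          ((1 - 2 / 2 ^ (2 * s + 1 - 2 * k)) * rzeta (2 * s + 1 - 2 * k)) := by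
    refine Finset.sum_congr rfl fun k hk => ?_
    rw [Finset.mem_Icc] at hk
    obtain ⟨d, rfl⟩ : ∃ d, s = k + d := ⟨s - k, by omega⟩
    rw [show 2 * (k + d) + 1 - 2 * k = 2 * d + 1 by omega, pow_succ, pow_mul, pow_mul,
      zpow_neg, zpow_neg, zpow_natCast, zpow_natCast, pow_add]
    norm_num
    field_simp
  rw [hk, zpow_sub₀ (by norm_num), zpow_one, show (2 * (s : ℤ)) = ((2 * s : ℕ) : ℤ) by push_cast; rfl,
    zpow_natCast, pow_succ]
  field_simp
  ring
end

section
/- For every integer s ≥ 2, ∑_{n=0}^∞ H_n/(2n+1)^{2s-1} = (1 - 4^{-s})(2s-1) ζ(2s) - (2 - 4^{1-s}) log(2) ζ(2s-1) + (1 - 2^{-s})^2 ζ(s)^2 - ∑_{k=2}^{s} 2(1 - 2^{-k})(1 - 2^{k-2s}) ζ(k) ζ(2s-k). -/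
/-! Write `λ(k) = ∑ 1/(2n+1)^k = (1 - 2^{-k}) ζ(k)`. In terms of `λ` the claim is the Euler-type formula
`∑ H_n/(2n+1)^q = q λ(q+1) - 2 log 2 · λ(q) - ∑_{k=2}^{q-1} λ(k) λ(q+1-k)` at `q = 2s - 1`, with the
symmetric convolution folded about `k = s` (`sum_fold`).

The Euler-type formula (`euler_odd`, with `q = m + 2`) holds for every `q ≥ 3`. Expand the convolution as a
double series over odd `a = 2i+1`, `b = 2j+1`. The diagonal gives `(q-2) λ(q+1)`. Off the diagonal
the sum over `k` is geometric and equals `F(a,b) + F(b,a)` with `F(a,b) = 1/(a^{q-1} b (b-a))`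
(`geom_kernel`). The double series of `F` converges absolutely (`summable_kernel`), and its inner
sum over `b` is `a^{-q} (-log 2 - H_i/2 + 1/a)` (`tsum_kernel_inner`), by partial fractions and the
asymptotics `H_n = log n + γ + o(1)`. -/

open scoped BigOperators

open Filter Topology Finset

/-- The odd zeta value `λ(k) = ∑_{n ≥ 0} 1/(2n+1)^k`, which equals `(1 - 2^{-k}) ζ(k)`. -/
noncomputable def oddZeta (k : ℕ) : ℝ := ∑' n : ℕ, 1 / (2 * (n : ℝ) + 1) ^ k

/-- The kernel `1/(a^{m+1} b (b - a))` at `a = 2i+1`, `b = 2j+1`. On the diagonal its value is `0`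
by the convention `1 / 0 = 0`, so unrestricted sums of it are sums over `i ≠ j`. -/
noncomputable def kernelTerm (m i j : ℕ) : ℝ :=
  1 / ((2 * (i : ℝ) + 1) ^ (m + 1) * (2 * (j : ℝ) + 1) * ((2 * (j : ℝ) + 1) - (2 * (i : ℝ) + 1)))

lemma summable_odd (k : ℕ) (hk : 2 ≤ k) : Summable fun n : ℕ => 1 / (2 * (n : ℝ) + 1) ^ k := by
  have h := (Real.summable_one_div_nat_pow (p := k)).2 (by omega)
  have h2 := h.comp_injective (i := fun n : ℕ => 2 * n + 1) (fun a b hab => by simpa using hab)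
  refine h2.congr fun n => ?_
  simp

lemma summable_odd_mul (k l : ℕ) (hk : 2 ≤ k) (hl : 2 ≤ l) :
    Summable fun p : ℕ × ℕ => 1 / (2 * (p.1 : ℝ) + 1) ^ k * (1 / (2 * (p.2 : ℝ) + 1) ^ l) := by
  have h := (summable_odd k hk).mul_of_nonneg (summable_odd l hl)
    (fun n => by positivity) (fun n => by positivity)
  exact h

lemma oddZeta_eq (k : ℕ) (hk : 2 ≤ k) : oddZeta k = (1 - (2 : ℝ) ^ (-(k : ℤ))) * rzeta k := by
  have h := (Real.summable_one_div_nat_pow (p := k)).2 (by omega)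
  have h1 := h.comp_injective (i := fun n : ℕ => 2 * n) (fun a b hab => by simpa using hab)
  have h2 := h.comp_injective (i := fun n : ℕ => 2 * n + 1) (fun a b hab => by simpa using hab)
  have key := tsum_even_add_odd (f := fun n : ℕ => 1 / (n : ℝ) ^ k) h1 h2
  have e1 : ∑' n : ℕ, 1 / ((2 * n : ℕ) : ℝ) ^ k = (2 : ℝ) ^ (-(k : ℤ)) * rzeta k := by
    rw [rzeta, ← tsum_mul_left]
    refine tsum_congr fun n => ?_
    rw [zpow_neg, zpow_natCast]
    push_cast
    rw [mul_pow]
    ring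
  have e2 : ∑' n : ℕ, 1 / ((2 * n + 1 : ℕ) : ℝ) ^ k = oddZeta k := by
    simp [oddZeta]
  have key' : (2 : ℝ) ^ (-(k : ℤ)) * rzeta k + oddZeta k = rzeta k := by
    rw [← e1, ← e2]
    exact key
  linarith

/-- Absolute convergence: `1/(b|b-a|) ≤ 1/b² + 1/(b-a)²` bounds the kernel by a sum of two
terms which factor, in the coordinates `(i, j)` and `(i, j - i)` respectively. -/
lemma summable_kernel_s13 (m : ℕ) (hm : 1 ≤ m) :
    Summable fun p : ℕ × ℕ => kernelTerm m p.1 p.2 := by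
  have hA := summable_odd 2 le_rfl
  have hZ : Summable fun n : ℤ => 1 / (n : ℝ) ^ 2 := Real.summable_one_div_int_pow.2 (by norm_num)
  have h1 := hA.mul_of_nonneg hA (fun n => by positivity) (fun n => by positivity)
  have h2 := hA.mul_of_nonneg hZ (fun n => by positivity) (fun n => by positivity)
  have h3 := h2.comp_injective (i := fun p : ℕ × ℕ => (p.1, (p.2 : ℤ) - p.1))
    (by
      rintro ⟨a, b⟩ ⟨c, d⟩ h
      simp only [Prod.mk.injEq] at h ⊢
      omega)
  refine Summable.of_norm_bounded (h1.add h3) ?_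
  rintro ⟨i, j⟩
  simp only [Function.comp, kernelTerm]
  push_cast
  rw [Real.norm_eq_abs, abs_div, abs_mul, abs_mul, abs_one]
  have ha : (1 : ℝ) ≤ 2 * (i : ℝ) + 1 := by linarith [Nat.cast_nonneg (α := ℝ) i]
  have hb : (1 : ℝ) ≤ 2 * (j : ℝ) + 1 := by linarith [Nat.cast_nonneg (α := ℝ) j]
  have hd : (2 * (j : ℝ) + 1) - (2 * (i : ℝ) + 1) = 2 * ((j : ℝ) - i) := by ring
  rw [hd, abs_of_nonneg (by positivity : (0 : ℝ) ≤ (2 * (i : ℝ) + 1) ^ (m + 1)),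
    abs_of_nonneg (by positivity : (0 : ℝ) ≤ 2 * (j : ℝ) + 1), abs_mul, ← sq_abs ((j : ℝ) - i)]
  have hpow : 1 / (2 * (i : ℝ) + 1) ^ (m + 1) ≤ 1 / (2 * (i : ℝ) + 1) ^ 2 :=
    one_div_le_one_div_of_le (by positivity) (pow_le_pow_right₀ ha (by omega))
  generalize |(j : ℝ) - i| = d
  generalize 1 / (2 * (i : ℝ) + 1) ^ 2 = u at *
  have e : 1 / ((2 * (i : ℝ) + 1) ^ (m + 1) * (2 * (j : ℝ) + 1) * (|(2 : ℝ)| * d))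
      = 1 / (2 * (i : ℝ) + 1) ^ (m + 1) * (1 / (2 * (j : ℝ) + 1) * (1 / d) / 2) := by
    rw [abs_two]; simp only [mul_inv, div_eq_mul_inv]; ring
  have e3 : 1 / (2 * (j : ℝ) + 1) ^ 2 = (1 / (2 * (j : ℝ) + 1)) ^ 2 := by simp
  have e4 : 1 / d ^ 2 = (1 / d) ^ 2 := by simp
  rw [e, e3, e4, ← mul_add]
  generalize 1 / (2 * (j : ℝ) + 1) = y at *
  generalize 1 / d = z at *
  have hv : 0 ≤ 1 / (2 * (i : ℝ) + 1) ^ (m + 1) := by positivity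
  calc _ ≤ 1 / (2 * (i : ℝ) + 1) ^ (m + 1) * (y ^ 2 + z ^ 2) := by
        gcongr
        nlinarith [sq_nonneg (y - z), sq_nonneg y, sq_nonneg z]
    _ ≤ _ := by gcongr

lemma sum_odd_recip (N : ℕ) :
    ∑ j ∈ range N, 1 / (2 * (j : ℝ) + 1) = H (2 * N) - H N / 2 := by
  induction N with
  | zero => simp [H]
  | succ N ih =>
    rw [sum_range_succ, ih, show 2 * (N + 1) = 2 * N + 1 + 1 by ring, H_succ, H_succ, H_succ]
    push_cast
    field_simp
    ring

lemma sum_recip_diff_lt (i : ℕ) :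
    ∑ j ∈ range i, 1 / ((2 * (j : ℝ) + 1) - (2 * (i : ℝ) + 1)) = - H i / 2 := by
  rw [← sum_range_reflect]
  have : ∀ n ≤ i, ∑ j ∈ range n, 1 / ((2 * ((i - 1 - j : ℕ) : ℝ) + 1) - (2 * (i : ℝ) + 1))
      = - H n / 2 := by
    intro n hn
    induction n with
    | zero => simp [H]
    | succ n ih =>
      rw [sum_range_succ, ih (by omega), H_succ]
      have : ((i - 1 - n : ℕ) : ℝ) = i - 1 - n := by
        rw [Nat.cast_sub (by omega), Nat.cast_sub (by omega)]; simp
      rw [this, show (2 * ((i : ℝ) - 1 - n) + 1) - (2 * (i : ℝ) + 1) = -(2 * (n + 1)) by ring]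
      field_simp
      ring
  exact this i le_rfl

lemma sum_recip_diff (i M : ℕ) :
    ∑ j ∈ range (M + (i + 1)), 1 / ((2 * (j : ℝ) + 1) - (2 * (i : ℝ) + 1))
      = H M / 2 - H i / 2 := by
  induction M with
  | zero =>
    rw [zero_add, sum_range_succ, sum_recip_diff_lt]
    simp [H]
    ring
  | succ M ih =>
    rw [show M + 1 + (i + 1) = M + (i + 1) + 1 by ring, sum_range_succ, ih, H_succ]
    push_cast
    rw [show 2 * ((M : ℝ) + (i + 1)) + 1 - (2 * (i : ℝ) + 1) = 2 * (M + 1) by ring]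
    field_simp
    ring

/-- The Euler–Mascheroni constants cancel here, leaving `-log 2`. -/
lemma tendsto_harmonic_diff (c : ℕ) :
    Tendsto (fun M : ℕ => H M / 2 - (H (2 * (M + c)) - H (M + c) / 2)) atTop
      (𝓝 (-Real.log 2)) := by
  have h0 := Real.tendsto_harmonic_sub_log
  have hc : Tendsto (fun M : ℕ => M + c) atTop atTop := tendsto_add_atTop_nat c
  have h2c : Tendsto (fun M : ℕ => 2 * (M + c)) atTop atTop :=
    tendsto_atTop_mono (fun M => by simp only [id]; omega) tendsto_id
  have h1 := h0.comp hc
  have h2 := h0.comp h2c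
  have hr : Tendsto (fun M : ℕ => (M : ℝ) / (M + c)) atTop (𝓝 1) :=
    tendsto_natCast_div_add_atTop (c : ℝ)
  have hl := (Real.continuousAt_log one_ne_zero).tendsto.comp hr
  rw [Real.log_one] at hl
  have key := (((h0.div_const 2).sub h2).add (h1.div_const 2)).add (hl.div_const 2)
  have key := key.sub_const (Real.log 2)
  have e : Real.eulerMascheroniConstant / 2 - Real.eulerMascheroniConstant
      + Real.eulerMascheroniConstant / 2 + 0 / 2 - Real.log 2 = - Real.log 2 := by ring
  rw [e] at key
  refine key.congr' ?_
  filter_upwards [eventually_ge_atTop 1] with M hM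
  have hM' : (0 : ℝ) < M := by exact_mod_cast hM
  have hMc : (0 : ℝ) < (M : ℝ) + c := by positivity
  simp only [Function.comp, H_eq_harmonic]
  push_cast
  rw [Real.log_div hM'.ne' hMc.ne', Real.log_mul two_ne_zero hMc.ne']
  ring

/-- Partial fractions `1/(b(b-a)) = (1/(b-a) - 1/b)/a` make the inner sum nearly telescope. -/
lemma tsum_kernel_inner (m : ℕ) (hm : 1 ≤ m) (i : ℕ) :
    ∑' j, kernelTerm m i j = 1 / (2 * (i : ℝ) + 1) ^ (m + 2)
      * (-Real.log 2 - H i / 2 + 1 / (2 * (i : ℝ) + 1)) := by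
  have hs : Summable fun j => kernelTerm m i j := (summable_kernel_s13 m hm).prod_factor i
  have hlim := hs.hasSum.tendsto_sum_nat.comp (tendsto_add_atTop_nat (i + 1))
  refine tendsto_nhds_unique hlim ?_
  have h := ((tendsto_harmonic_diff (i + 1)).add_const
    (- H i / 2 + 1 / (2 * (i : ℝ) + 1))).const_mul (1 / (2 * (i : ℝ) + 1) ^ (m + 2))
  rw [show -Real.log 2 - H i / 2 + 1 / (2 * (i : ℝ) + 1)
    = -Real.log 2 + (- H i / 2 + 1 / (2 * (i : ℝ) + 1)) by ring]
  refine h.congr fun M => ?_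
  have ha : (2 * (i : ℝ) + 1) ≠ 0 := by positivity
  -- On the diagonal the kernel is `0` but the partial fractions give `0 - 1/a`; the last term cancels it.
  have hterm : ∀ j : ℕ, kernelTerm m i j = 1 / (2 * (i : ℝ) + 1) ^ (m + 2)
      * (1 / ((2 * (j : ℝ) + 1) - (2 * (i : ℝ) + 1)) - 1 / (2 * (j : ℝ) + 1)
        + if j = i then 1 / (2 * (i : ℝ) + 1) else 0) := by
    intro j
    have hb : (2 * (j : ℝ) + 1) ≠ 0 := by positivity
    by_cases hji : j = i
    · subst hji
      simp [kernelTerm]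
    · have hd : (2 * (j : ℝ) + 1) - (2 * (i : ℝ) + 1) ≠ 0 := by
        intro h
        apply hji
        have : (j : ℝ) = i := by linarith
        exact_mod_cast this
      rw [if_neg hji, kernelTerm]
      generalize 2 * (j : ℝ) + 1 = b at *
      generalize 2 * (i : ℝ) + 1 = a at *
      field_simp
      ring
  simp only [Function.comp]
  rw [sum_congr rfl fun j _ => hterm j, ← mul_sum, sum_add_distrib, sum_sub_distrib,
    sum_recip_diff, sum_odd_recip, sum_ite_eq' (range _), if_pos (by simp; omega)]
  ring

/-- The geometric sum `∑ x^(k+2) y^(m+1-k)` with `x = 1/a`, `y = 1/b`, split into two kernels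
off the diagonal. -/
lemma geom_kernel (m i j : ℕ) :
    ∑ k ∈ range m, 1 / (2 * (i : ℝ) + 1) ^ (k + 2) * (1 / (2 * (j : ℝ) + 1) ^ (m - 1 - k + 2))
      = kernelTerm m i j + kernelTerm m j i
        + if i = j then (m : ℝ) * (1 / (2 * (i : ℝ) + 1) ^ (m + 3)) else 0 := by
  by_cases hij : i = j
  · subst hij
    have ha : (2 * (i : ℝ) + 1) ≠ 0 := by positivity
    have : ∀ k ∈ range m, 1 / (2 * (i : ℝ) + 1) ^ (k + 2)
        * (1 / (2 * (i : ℝ) + 1) ^ (m - 1 - k + 2)) = 1 / (2 * (i : ℝ) + 1) ^ (m + 3) := by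
      intro k hk
      have := mem_range.1 hk
      rw [one_div_mul_one_div, ← pow_add]
      congr 2
      omega
    rw [sum_congr rfl this]
    simp [kernelTerm]
  · have hd : (2 * (j : ℝ) + 1) - (2 * (i : ℝ) + 1) ≠ 0 := by
      intro h
      apply hij
      have : (i : ℝ) = j := by linarith
      exact_mod_cast this
    have ha : (2 * (i : ℝ) + 1) ≠ 0 := by positivity
    have hb : (2 * (j : ℝ) + 1) ≠ 0 := by positivity
    rw [if_neg hij, kernelTerm, kernelTerm]
    generalize 2 * (j : ℝ) + 1 = b at *
    generalize 2 * (i : ℝ) + 1 = a at *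
    have hd' : a - b ≠ 0 := by
      intro h; apply hd; linarith
    have g := geom_sum₂_mul (1 / a) (1 / b) m
    have hxy : 1 / a - 1 / b = (b - a) / (a * b) := by field_simp
    have e : ∑ k ∈ range m, 1 / a ^ (k + 2) * (1 / b ^ (m - 1 - k + 2))
        = 1 / a ^ 2 * (1 / b ^ 2) * ∑ k ∈ range m, (1 / a) ^ k * (1 / b) ^ (m - 1 - k) := by
      rw [mul_sum]
      refine sum_congr rfl fun k _ => ?_
      simp only [one_div, pow_add, mul_inv, inv_pow]
      ring
    rw [e]
    have g' : ∑ k ∈ range m, (1 / a) ^ k * (1 / b) ^ (m - 1 - k)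
        = ((1 / a) ^ m - (1 / b) ^ m) * (a * b) / (b - a) := by
      rw [← g, hxy]
      field_simp
    rw [g', show a - b = -(b - a) by ring, one_div_pow, one_div_pow]
    field_simp
    ring

lemma euler_odd (m : ℕ) (hm : 1 ≤ m) :
    ∑' n : ℕ, H n / (2 * (n : ℝ) + 1) ^ (m + 2)
      = ((m : ℝ) + 2) * oddZeta (m + 3) - 2 * Real.log 2 * oddZeta (m + 2)
        - ∑ k ∈ range m, oddZeta (k + 2) * oddZeta (m - 1 - k + 2) := by
  have hK := summable_kernel_s13 m hm
  have hK' : Summable fun p : ℕ × ℕ => kernelTerm m p.2 p.1 :=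
    (Equiv.prodComm ℕ ℕ).summable_iff.2 hK
  have hprod : ∀ k ∈ range m, Summable fun p : ℕ × ℕ => 1 / (2 * (p.1 : ℝ) + 1) ^ (k + 2)
      * (1 / (2 * (p.2 : ℝ) + 1) ^ (m - 1 - k + 2)) := fun k _ =>
    summable_odd_mul (k + 2) (m - 1 - k + 2) (by omega) (by omega)
  have hL : ∑' p : ℕ × ℕ, ∑ k ∈ range m, 1 / (2 * (p.1 : ℝ) + 1) ^ (k + 2)
      * (1 / (2 * (p.2 : ℝ) + 1) ^ (m - 1 - k + 2))
      = ∑ k ∈ range m, oddZeta (k + 2) * oddZeta (m - 1 - k + 2) := by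
    rw [Summable.tsum_finsetSum hprod]
    refine sum_congr rfl fun k hk => ?_
    rw [oddZeta, oddZeta, (summable_odd (k + 2) (by omega)).tsum_mul_tsum
      (summable_odd (m - 1 - k + 2) (by omega)) (hprod k hk)]
  -- The diagonal part of the double series.
  have hdiag : HasSum (fun p : ℕ × ℕ =>
      if p.1 = p.2 then (m : ℝ) * (1 / (2 * (p.1 : ℝ) + 1) ^ (m + 3)) else 0)
      (m * oddZeta (m + 3)) := by
    have h := (summable_odd (m + 3) (by omega)).hasSum.mul_left (m : ℝ)
    have hinj : Function.Injective fun n : ℕ => (n, n) := fun a b hab => by simpa using hab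
    rw [← hinj.hasSum_iff]
    · simpa [Function.comp_def, oddZeta] using h
    · rintro ⟨a, b⟩ hab
      refine if_neg fun h => hab ⟨a, ?_⟩
      simp only at h
      simp [h]
  have hswap : ∑' p : ℕ × ℕ, kernelTerm m p.2 p.1 = ∑' p : ℕ × ℕ, kernelTerm m p.1 p.2 :=
    (Equiv.prodComm ℕ ℕ).tsum_eq fun p : ℕ × ℕ => kernelTerm m p.1 p.2
  have htot : ∑ k ∈ range m, oddZeta (k + 2) * oddZeta (m - 1 - k + 2)
      = 2 * ∑' p : ℕ × ℕ, kernelTerm m p.1 p.2 + m * oddZeta (m + 3) := by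
    rw [← hL, tsum_congr fun p : ℕ × ℕ => geom_kernel m p.1 p.2,
      (hK.add hK').tsum_add hdiag.summable, hK.tsum_add hK', hswap, hdiag.tsum_eq]
    ring
  have hG : Summable fun i => ∑' j, kernelTerm m i j := hK.prod
  rw [htot, hK.tsum_prod]
  have hterm : ∀ n : ℕ, H n / (2 * (n : ℝ) + 1) ^ (m + 2)
      = 2 * (1 / (2 * (n : ℝ) + 1) ^ (m + 3))
        - 2 * Real.log 2 * (1 / (2 * (n : ℝ) + 1) ^ (m + 2)) - 2 * ∑' j, kernelTerm m n j := by
    intro n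
    rw [tsum_kernel_inner m hm]
    have ha : (2 * (n : ℝ) + 1) ≠ 0 := by positivity
    field_simp
    ring
  have s3 := (summable_odd (m + 3) (by omega)).mul_left 2
  have s2 := (summable_odd (m + 2) (by omega)).mul_left (2 * Real.log 2)
  rw [tsum_congr hterm, (s3.sub s2).tsum_sub (hG.mul_left 2), s3.tsum_sub s2, tsum_mul_left,
    tsum_mul_left, tsum_mul_left, oddZeta, oddZeta]
  ring

/-- Folding a symmetric convolution about its midpoint `k = s`. -/
lemma sum_fold (f : ℕ → ℝ) (s : ℕ) (hs : 2 ≤ s) :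
    ∑ k ∈ range (2 * s - 3), f (k + 2) * f (2 * s - 3 - 1 - k + 2)
      = 2 * ∑ k ∈ Icc 2 s, f k * f (2 * s - k) - f s ^ 2 := by
  have h1 : ∑ k ∈ range (2 * s - 3), f (k + 2) * f (2 * s - 3 - 1 - k + 2)
      = ∑ k ∈ Ico 2 (2 * s - 1), f k * f (2 * s - k) := by
    rw [sum_Ico_eq_sum_range]
    refine sum_congr rfl fun k hk => ?_
    have := mem_range.1 hk
    rw [add_comm 2 k, show 2 * s - 3 - 1 - k + 2 = 2 * s - (k + 2) by omega]
  have h2 : ∑ k ∈ Ico s (2 * s - 1), f k * f (2 * s - k)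
      = ∑ k ∈ Ico 2 (s + 1), f k * f (2 * s - k) := by
    have h := sum_Ico_reflect (fun k => f k * f (2 * s - k)) 2
      (show s + 1 ≤ 2 * s + 1 by omega)
    rw [show 2 * s + 1 - (s + 1) = s by omega, show 2 * s + 1 - 2 = 2 * s - 1 by omega] at h
    rw [← h]
    refine sum_congr rfl fun k hk => ?_
    have := mem_Ico.1 hk
    rw [show 2 * s - (2 * s - k) = k by omega, mul_comm]
  have h3 : Icc 2 s = Ico 2 (s + 1) := by ext; simp
  rw [h1, ← sum_Ico_consecutive _ hs (by omega : s ≤ 2 * s - 1), h2, h3,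
    sum_Ico_succ_top hs, show 2 * s - s = s by omega]
  ring

theorem stmt13 (s : ℕ) (hs : 2 ≤ s) :
    ∑' n : ℕ, H n / (2 * (n : ℝ) + 1) ^ (2 * s - 1)
      = (1 - (4 : ℝ) ^ (-(s : ℤ))) * (2 * (s : ℝ) - 1) * rzeta (2 * s)
        - (2 - (4 : ℝ) ^ (1 - (s : ℤ))) * Real.log 2 * rzeta (2 * s - 1)
        + (1 - (2 : ℝ) ^ (-(s : ℤ))) ^ 2 * rzeta s ^ 2
        - ∑ k ∈ Finset.Icc 2 s,
            2 * (1 - (2 : ℝ) ^ (-(k : ℤ))) * (1 - (2 : ℝ) ^ ((k : ℤ) - 2 * (s : ℤ)))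
              * rzeta k * rzeta (2 * s - k) := by
  have h := euler_odd (2 * s - 3) (by omega)
  rw [sum_fold oddZeta s hs, show 2 * s - 3 + 2 = 2 * s - 1 by omega,
    show 2 * s - 3 + 3 = 2 * s by omega, Nat.cast_sub (by omega : 3 ≤ 2 * s)] at h
  rw [h, oddZeta_eq (2 * s) (by omega), oddZeta_eq (2 * s - 1) (by omega), oddZeta_eq s hs]
  have hsum : ∑ k ∈ Icc 2 s, 2 * (1 - (2 : ℝ) ^ (-(k : ℤ)))
      * (1 - (2 : ℝ) ^ ((k : ℤ) - 2 * (s : ℤ))) * rzeta k * rzeta (2 * s - k)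
      = 2 * ∑ k ∈ Icc 2 s, oddZeta k * oddZeta (2 * s - k) := by
    rw [mul_sum]
    refine sum_congr rfl fun k hk => ?_
    have := mem_Icc.1 hk
    rw [oddZeta_eq k (by omega), oddZeta_eq (2 * s - k) (by omega),
      show (-((2 * s - k : ℕ) : ℤ)) = (k : ℤ) - 2 * (s : ℤ) by omega]
    ring
  have e4 : (4 : ℝ) ^ (-(s : ℤ)) = (2 : ℝ) ^ (-((2 * s : ℕ) : ℤ)) := by
    rw [show (4 : ℝ) = 2 ^ (2 : ℤ) by norm_num, ← zpow_mul]
    congr 1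
    push_cast
    ring
  have e4' : (4 : ℝ) ^ (1 - (s : ℤ)) = 2 * (2 : ℝ) ^ (-((2 * s - 1 : ℕ) : ℤ)) := by
    rw [show (4 : ℝ) = 2 ^ (2 : ℤ) by norm_num, ← zpow_mul, ← zpow_one_add₀ two_ne_zero]
    congr 1
    omega
  rw [hsum, e4, e4']
  push_cast
  ring
end

section
/- For every integer s ≥ 2, ∑_{j=2}^{2s-1} 2^{1-j} ζ(j, 2s-j) = (1/2)(1 - 2^{1-s})^2 ζ(s)^2 + (1/2)(2^{3-2s} + 2s - 3) ζ(2s) - ∑_{k=2}^{s} (2^{k-1} - 1)(2^{1-k} - 4^{1-s}) ζ(k) ζ(2s-k). -/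
/-!
Write `η(k) = (1 - 2^(1-k)) ζ(k)` and `w = 2s`. The coefficient of `ζ(k) ζ(w-k)` on the right factors so
that the term is `η(k) η(w-k)`, and by the symmetry `k ↔ w-k` the claim becomes
`2 ∑_{j=2}^{w-1} 2^(1-j) ζ(j,w-j) = (2^(3-w) + w - 3) ζ(w) - ∑_{k=2}^{w-2} η(k) η(w-k)`.

Expanding each product by the stuffle relation (`stuffle`) turns this into a relation (`core`) between
the weighted double sum `S` and the alternating double sum
`T = ∑_{m<n} (-1)^(m+n) ∑_k n^(-k) m^(k-w)`, namely `S + T = 2^(2-w) ζ(w)`. Both inner sums are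
geometric; with `e = w - 1` they split into a part with `m^(-e)` and a part with `n^(-e)`.

* The `m^(-e)` part vanishes: `∑_{n>m} [(-1)^(n-m) (1/(n-m) - 1/n) + 2/(2n-m) - 1/n] = 0` for every `m`
  (`pairKer_tsum`). This sum does not change under `m ↦ m + 2` by telescoping, is trivially zero for
  `m = 0`, and for `m = 1` reduces to the convergence of the alternating harmonic series.
* The `n^(-e)` part involves only even indices and finite harmonic-type sums, evaluated in
  `altH_two_mul`.
-/

open scoped BigOperators

/-! ### Sums over the triangle `0 < m < n` -/

lemma sum_Ioo_eq_range (f : ℕ → ℝ) (h0 : f 0 = 0) (n : ℕ) :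
    ∑ m ∈ Finset.Ioo 0 n, f m = ∑ m ∈ Finset.range n, f m := by
  cases n with
  | zero => simp
  | succ n =>
    apply Finset.sum_subset
    · intro x hx
      simp only [Finset.mem_Ioo, Finset.mem_range] at *
      omega
    · intro x hx hx'
      have : x = 0 := by
        simp only [Finset.mem_Ioo, Finset.mem_range] at *
        omega
      rw [this, h0]

/-- An absolutely convergent sum over the triangle `0 < m < n` may be summed over `n` first.
The triangle is parametrised by `m = i + 1`, `n - m = j + 1`. -/
lemma hasSum_triangle (g : ℕ → ℕ → ℝ)
    (hg : Summable fun p : ℕ × ℕ => g (p.1 + 1) (p.1 + 1 + (p.2 + 1))) :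
    HasSum (fun n => ∑ m ∈ Finset.Ioo 0 n, g m n)
      (∑' i, ∑' j, g (i + 1) (i + 1 + (j + 1))) := by
  have h1 := hg.hasSum
  rw [hg.tsum_prod] at h1
  rw [← (Finset.HasAntidiagonal.sigmaAntidiagonalEquivProd (A := ℕ)).hasSum_iff] at h1
  have h2 := h1.sigma (fun N => hasSum_fintype _)
  have h0 : ∑ n ∈ Finset.range 2, ∑ m ∈ Finset.Ioo 0 n, g m n = 0 := by
    rw [Finset.sum_range_succ, Finset.sum_range_one]
    simp [show Finset.Ioo 0 1 = ∅ from rfl]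
  rw [← hasSum_nat_add_iff' 2, h0, sub_zero]
  have hf : (fun N => ∑ m ∈ Finset.Ioo 0 (N + 2), g m (N + 2)) = fun N =>
      ∑ b, ((fun p : ℕ × ℕ => g (p.1 + 1) (p.1 + 1 + (p.2 + 1))) ∘
        Finset.HasAntidiagonal.sigmaAntidiagonalEquivProd) ⟨N, b⟩ := by
    ext N
    rw [Finset.univ_eq_attach]
    have h3 := Finset.sum_attach (Finset.HasAntidiagonal.antidiagonal N)
      (fun c => g (c.1 + 1) (c.1 + 1 + (c.2 + 1)))
    refine Eq.trans ?_ h3.symm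
    rw [Finset.Nat.sum_antidiagonal_eq_sum_range_succ_mk]
    symm
    refine Finset.sum_bij (fun i _ => i + 1) ?_ ?_ ?_ ?_
    · intro i hi
      simp only [Finset.mem_range, Finset.mem_Ioo] at *
      omega
    · intro i _ j _ h
      omega
    · intro m hm
      simp only [Finset.mem_range, Finset.mem_Ioo] at *
      exact ⟨m - 1, by omega, by omega⟩
    · intro i hi
      simp only [Finset.mem_range] at hi
      congr 1
      omega
  rw [hf]
  exact h2

/-- With `n = m + d`, the term `n⁻ᵃ m⁻ᵇ` is dominated by `m⁻² d⁻²`; when `b = 1` one factor `n⁻¹`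
is traded for `m⁻¹`. -/
lemma bound_pow (a b m d : ℕ) (ha : 2 ≤ a) (hb : 1 ≤ b) (hab : 4 ≤ a + b) :
    1 / (((m + 1 + (d + 1) : ℕ) : ℝ) ^ a * ((m + 1 : ℕ) : ℝ) ^ b)
      ≤ 1 / ((m + 1 : ℕ) : ℝ) ^ 2 * (1 / ((d + 1 : ℕ) : ℝ) ^ 2) := by
  rw [one_div_mul_one_div_rev]
  apply one_div_le_one_div_of_le (by positivity)
  norm_cast
  rcases Nat.lt_or_ge b 2 with h | h
  · obtain rfl : b = 1 := by omega
    calc (d + 1) ^ 2 * (m + 1) ^ 2 = (d + 1) ^ 2 * (m + 1) * (m + 1) := by ring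
      _ ≤ (m + 1 + (d + 1)) ^ 2 * (m + 1 + (d + 1)) * (m + 1) := by
        have h1 : d + 1 ≤ m + 1 + (d + 1) := by omega
        have h2 : m + 1 ≤ m + 1 + (d + 1) := by omega
        gcongr
      _ = (m + 1 + (d + 1)) ^ 3 * (m + 1) := by ring
      _ ≤ (m + 1 + (d + 1)) ^ a * (m + 1) ^ 1 := by
        rw [pow_one]; gcongr <;> omega
  · have h1 : d + 1 ≤ m + 1 + (d + 1) := by omega
    calc (d + 1) ^ 2 * (m + 1) ^ 2 ≤ (m + 1 + (d + 1)) ^ 2 * (m + 1) ^ 2 := by gcongr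
      _ ≤ _ := by gcongr <;> omega

lemma summable_sq_prod : Summable fun p : ℕ × ℕ =>
    1 / ((p.1 + 1 : ℕ) : ℝ) ^ 2 * (1 / ((p.2 + 1 : ℕ) : ℝ) ^ 2) := by
  have h : Summable fun n : ℕ => 1 / ((n + 1 : ℕ) : ℝ) ^ 2 :=
    (summable_nat_add_iff 1).2 (Real.summable_one_div_nat_pow.2 one_lt_two)
  exact h.mul_of_nonneg h (fun _ => by positivity) (fun _ => by positivity)

lemma summable_dbl (a b : ℕ) (ε : ℕ → ℕ → ℝ) (hε : ∀ m n, |ε m n| ≤ 1)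
    (ha : 2 ≤ a) (hb : 1 ≤ b) (hab : 4 ≤ a + b) :
    Summable fun n : ℕ => ∑ m ∈ Finset.Ioo 0 n, ε m n * (1 / ((n : ℝ) ^ a * (m : ℝ) ^ b)) := by
  refine (hasSum_triangle (fun m n => ε m n * (1 / ((n : ℝ) ^ a * (m : ℝ) ^ b))) ?_).summable
  refine Summable.of_norm_bounded summable_sq_prod fun p => ?_
  refine le_trans ?_ (bound_pow a b p.1 p.2 ha hb hab)
  rw [norm_mul, Real.norm_eq_abs, Real.norm_of_nonneg (by positivity)]
  exact mul_le_of_le_one_left (by positivity) (hε _ _)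

/-! ### Alternating zeta values -/

/-- The stuffle product of two alternating zeta values: the double sum is split according to
`m = n`, `m < n` and `m > n`. -/
lemma stuffle (a b : ℕ) (ha : 2 ≤ a) (hb : 2 ≤ b) :
    (∑' n : ℕ, (-1 : ℝ) ^ n / (n : ℝ) ^ a) * (∑' n : ℕ, (-1 : ℝ) ^ n / (n : ℝ) ^ b)
      = rzeta (a + b)
        + (∑' n : ℕ, ∑ m ∈ Finset.Ioo 0 n, (-1 : ℝ) ^ (m + n) * (1 / ((n : ℝ) ^ a * (m : ℝ) ^ b)))
        + (∑' n : ℕ, ∑ m ∈ Finset.Ioo 0 n,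
            (-1 : ℝ) ^ (m + n) * (1 / ((n : ℝ) ^ b * (m : ℝ) ^ a))) := by
  have hs : ∀ k : ℕ, 2 ≤ k → Summable fun n : ℕ => (-1 : ℝ) ^ n / (n : ℝ) ^ k := fun k hk => by
    refine Summable.of_norm_bounded (Real.summable_one_div_nat_pow.2 (by omega : 1 < k)) fun n => ?_
    simp
  have hD : ∀ a b : ℕ, 2 ≤ a → 2 ≤ b → Summable fun n : ℕ =>
      ∑ m ∈ Finset.Ioo 0 n, (-1 : ℝ) ^ (m + n) * (1 / ((n : ℝ) ^ a * (m : ℝ) ^ b)) :=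
    fun a b ha hb => summable_dbl a b (fun m n => (-1) ^ (m + n)) (by simp) ha (by omega) (by omega)
  have hz : Summable fun n : ℕ => 1 / (n : ℝ) ^ (a + b) :=
    Real.summable_one_div_nat_pow.2 (by omega)
  have h1 := (hs a ha).tendsto_sum_tsum_nat.mul (hs b hb).tendsto_sum_tsum_nat
  have h2 := ((hz.add (hD a b ha hb)).add (hD b a hb ha)).tendsto_sum_tsum_nat
  rw [(hz.add (hD a b ha hb)).tsum_add (hD b a hb ha), hz.tsum_add (hD a b ha hb)] at h2
  refine tendsto_nhds_unique h1 (h2.congr fun N => ?_)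
  induction N with
  | zero => simp
  | succ N ih =>
    rw [Finset.sum_range_succ, ih, Finset.sum_range_succ, Finset.sum_range_succ]
    rw [sum_Ioo_eq_range _ (by simp [show b ≠ 0 by omega]),
      sum_Ioo_eq_range _ (by simp [show a ≠ 0 by omega])]
    have e : ∀ a b : ℕ, ∑ m ∈ Finset.range N,
        (-1 : ℝ) ^ (m + N) * (1 / ((N : ℝ) ^ a * (m : ℝ) ^ b))
        = (-1 : ℝ) ^ N / (N : ℝ) ^ a * ∑ m ∈ Finset.range N, (-1 : ℝ) ^ m / (m : ℝ) ^ b := by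
      intro a b
      rw [Finset.mul_sum]
      refine Finset.sum_congr rfl fun m _ => ?_
      rw [pow_add, ← one_div_mul_one_div]
      ring
    rw [e, e]
    have : 1 / (N : ℝ) ^ (a + b) = (-1 : ℝ) ^ N / (N : ℝ) ^ a * ((-1 : ℝ) ^ N / (N : ℝ) ^ b) := by
      rw [pow_add, div_mul_div_comm, ← mul_pow]
      norm_num
    rw [this]
    ring

/-- The alternating zeta value in terms of `ζ(k)`: adding `ζ(k)` leaves twice the even terms. -/
lemma alt_zeta (k : ℕ) (hk : 2 ≤ k) :
    ∑' n : ℕ, (-1 : ℝ) ^ n / (n : ℝ) ^ k = -((1 - 2 / 2 ^ k) * rzeta k) := by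
  have hz : Summable fun n : ℕ => 1 / (n : ℝ) ^ k :=
    Real.summable_one_div_nat_pow.2 (by omega)
  have hs : Summable fun n : ℕ => (-1 : ℝ) ^ n / (n : ℝ) ^ k := by
    refine Summable.of_norm_bounded hz fun n => ?_
    simp
  have inj : Function.Injective fun n : ℕ => 2 * n := fun a b h => by simpa using h
  have h := inj.tsum_eq (f := fun n : ℕ => (-1 : ℝ) ^ n / (n : ℝ) ^ k + 1 / (n : ℝ) ^ k) (by
    intro n hn
    rcases Nat.even_or_odd n with ⟨c, hc⟩ | hc
    · exact ⟨c, by simp; omega⟩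
    · exact absurd (by simp only [hc.neg_one_pow]; ring) hn)
  rw [hs.tsum_add hz] at h
  have h2 : ∀ n : ℕ, (-1 : ℝ) ^ (2 * n) / ((2 * n : ℕ) : ℝ) ^ k + 1 / ((2 * n : ℕ) : ℝ) ^ k
      = 2 / 2 ^ k * (1 / (n : ℝ) ^ k) := by
    intro n
    rw [(even_two_mul n).neg_one_pow]
    push_cast
    rw [mul_pow, ← one_div_mul_one_div]
    ring
  simp only [h2] at h
  rw [tsum_mul_left] at h
  unfold rzeta
  linarith
/-! ### Vanishing of the coefficient of `m⁻ᵉ` -/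

open Filter Topology in
lemma tendsto_one_div_add (c : ℝ) :
    Tendsto (fun K : ℕ => 1 / ((K : ℝ) + c)) atTop (𝓝 0) := by
  simp only [one_div]
  exact (tendsto_atTop_add_const_right _ c tendsto_natCast_atTop_atTop).inv_tendsto_atTop

/-- The coefficient of `m⁻ᵉ` contributed by the pair `(m, n)`, `n = m + d`, in the sum of the
weighted and the alternating double sums:
`(-1)^(n-m) (1/(n-m) - 1/n) + 2/(2n-m) - 1/n`. -/
noncomputable def pairKer (m d : ℕ) : ℝ :=
  (-1) ^ d * (1 / (d : ℝ) - 1 / ((m : ℝ) + d)) + 2 / ((m : ℝ) + 2 * d) - 1 / ((m : ℝ) + d)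

open Filter Topology in
lemma tendsto_alt_mul (f : ℕ → ℝ) (hf : Tendsto f atTop (𝓝 0)) :
    Tendsto (fun K : ℕ => (-1 : ℝ) ^ K * f K) atTop (𝓝 0) := by
  rw [tendsto_zero_iff_norm_tendsto_zero] at hf ⊢
  simpa using hf

/-- For `m = 1` the partial sums are differences of partial sums of the alternating harmonic
series. -/
lemma pairKer_one_sum (K : ℕ) :
    ∑ d ∈ Finset.range K, pairKer 1 (d + 1)
      = 2 * (∑ i ∈ Finset.range (2 * K + 2), (-1 : ℝ) ^ i * (1 / ((i : ℝ) + 1))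
          - ∑ i ∈ Finset.range K, (-1 : ℝ) ^ i * (1 / ((i : ℝ) + 1)))
        - (-1) ^ K * (1 / ((K : ℝ) + 1)) := by
  induction K with
  | zero => norm_num [Finset.sum_range_succ]
  | succ K ih =>
    rw [Finset.sum_range_succ, ih, show 2 * (K + 1) + 2 = 2 * K + 2 + 1 + 1 by ring,
      Finset.sum_range_succ _ (2 * K + 2 + 1), Finset.sum_range_succ _ (2 * K + 2),
      Finset.sum_range_succ _ K, pairKer]
    have e1 : (-1 : ℝ) ^ (2 * K + 2) = 1 := Even.neg_one_pow ⟨K + 1, by ring⟩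
    rw [pow_succ (-1 : ℝ) (2 * K + 2), e1, pow_succ (-1 : ℝ) K]
    generalize (-1 : ℝ) ^ K = σ
    push_cast
    have h1 : (K : ℝ) + 1 ≠ 0 := by positivity
    have h2 : (1 : ℝ) + (K + 1) ≠ 0 := by positivity
    have h3 : (K : ℝ) + 1 + 1 ≠ 0 := by positivity
    have h4 : (1 : ℝ) + 2 * (K + 1) ≠ 0 := by positivity
    have h5 : (2 : ℝ) * K + 2 + 1 ≠ 0 := by positivity
    have h6 : (2 : ℝ) * K + 2 + 1 + 1 ≠ 0 := by positivity
    field_simp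
    ring

/-- The difference between `m + 2` and `m` telescopes, leaving only a boundary term at `K`. -/
lemma pairKer_step_sum (m K : ℕ) :
    ∑ d ∈ Finset.range K, pairKer (m + 2) (d + 1)
      = ∑ d ∈ Finset.range K, pairKer m (d + 1)
        + ((-1) ^ K * (1 / ((K : ℝ) + (m + 1)) - 1 / ((K : ℝ) + (m + 2)))
          + 1 / ((K : ℝ) + (m / 2 + 1)) - 1 / ((K : ℝ) + (m + 1)) - 1 / ((K : ℝ) + (m + 2))) := by
  induction K with
  | zero =>
    have : 1 / ((m : ℝ) / 2 + 1) = 2 * (1 / ((m : ℝ) + 2)) := by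
      field_simp
    simp only [Finset.range_zero, Finset.sum_empty, pow_zero, Nat.cast_zero, zero_add, this]
    ring
  | succ K ih =>
    rw [Finset.sum_range_succ, ih, Finset.sum_range_succ, pairKer, pairKer, pow_succ (-1 : ℝ) K]
    generalize (-1 : ℝ) ^ K = σ
    have e : ∀ x : ℝ, 1 / (x + ((m : ℝ) / 2 + 1)) = 2 / (2 * x + m + 2) := by
      intro x
      rw [show 2 * x + m + 2 = 2 * (x + ((m : ℝ) / 2 + 1)) by ring, ← div_div]
      norm_num
    rw [e, e]
    push_cast
    rw [show (m : ℝ) + 2 + (K + 1) = K + m + 3 by ring, show (m : ℝ) + (K + 1) = K + m + 1 by ring,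
      show (K : ℝ) + 1 + (m + 1) = K + m + 2 by ring, show (K : ℝ) + 1 + (m + 2) = K + m + 3 by ring,
      show (K : ℝ) + (m + 1) = K + m + 1 by ring, show (K : ℝ) + (m + 2) = K + m + 2 by ring,
      show (m : ℝ) + 2 + 2 * (K + 1) = 2 * K + m + 4 by ring,
      show (m : ℝ) + 2 * (K + 1) = 2 * K + m + 2 by ring,
      show 2 * ((K : ℝ) + 1) + m + 2 = 2 * K + m + 4 by ring]
    ring

open Filter Topology in
/-- Induction on `m` in steps of two. -/
lemma pairKer_tendsto (m : ℕ) :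
    Tendsto (fun K => ∑ d ∈ Finset.range K, pairKer m (d + 1)) atTop (𝓝 0) := by
  induction m using Nat.twoStepInduction with
  | zero =>
    have : ∀ d : ℕ, pairKer 0 (d + 1) = 0 := by
      intro d
      rw [pairKer]
      push_cast
      field_simp
      ring
    simp [this]
  | one =>
    simp only [pairKer_one_sum]
    obtain ⟨l, hl⟩ := Antitone.tendsto_alternating_series_of_tendsto_zero
      (f := fun i : ℕ => 1 / ((i : ℝ) + 1))
      (antitone_iff_forall_lt.mpr fun _ _ _ ↦ by gcongr) (tendsto_one_div_add 1)
    have h2 : Tendsto (fun K : ℕ => 2 * K + 2) atTop atTop :=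
      tendsto_atTop_mono (fun K => by simp only [id]; omega) tendsto_id
    simpa using (((hl.comp h2).sub hl).const_mul 2).sub
      (tendsto_alt_mul _ (tendsto_one_div_add 1))
  | more m ih _ =>
    simp only [pairKer_step_sum]
    have h := tendsto_alt_mul _ (by
      simpa using (tendsto_one_div_add (m + 1)).sub (tendsto_one_div_add (m + 2)))
    simpa using ih.add (((h.add (tendsto_one_div_add (m / 2 + 1))).sub
      (tendsto_one_div_add (m + 1))).sub (tendsto_one_div_add (m + 2)))

lemma pairKer_bound (m d : ℕ) :
    |pairKer (m + 1) (d + 1)| ≤ 2 * ((m + 1 : ℕ) : ℝ) * (1 / ((d + 1 : ℕ) : ℝ) ^ 2) := by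
  have e : pairKer (m + 1) (d + 1) = (-1) ^ (d + 1) * (((m + 1 : ℕ) : ℝ) /
      (((d + 1 : ℕ) : ℝ) * (((m + 1 : ℕ) : ℝ) + ((d + 1 : ℕ) : ℝ)))) + ((m + 1 : ℕ) : ℝ) /
      ((((m + 1 : ℕ) : ℝ) + 2 * ((d + 1 : ℕ) : ℝ)) * (((m + 1 : ℕ) : ℝ) + ((d + 1 : ℕ) : ℝ))) := by
    rw [pairKer, add_sub_assoc]
    have h1 : ((m + 1 : ℕ) : ℝ) ≠ 0 := by positivity
    have h2 : ((d + 1 : ℕ) : ℝ) ≠ 0 := by positivity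
    have h3 : ((m + 1 : ℕ) : ℝ) + ((d + 1 : ℕ) : ℝ) ≠ 0 := by positivity
    have h4 : ((m + 1 : ℕ) : ℝ) + 2 * ((d + 1 : ℕ) : ℝ) ≠ 0 := by positivity
    generalize ((m + 1 : ℕ) : ℝ) = x at *
    generalize ((d + 1 : ℕ) : ℝ) = y at *
    congr 1
    · field_simp
      ring
    · rw [div_sub_div _ _ h4 h3]
      congr 1
      ring
  have hx : 0 < ((m + 1 : ℕ) : ℝ) := by positivity
  have hy : 0 < ((d + 1 : ℕ) : ℝ) := by positivity
  rw [e]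
  generalize ((m + 1 : ℕ) : ℝ) = x at *
  generalize ((d + 1 : ℕ) : ℝ) = y at *
  refine (abs_add_le _ _).trans ?_
  rw [abs_mul, abs_pow, abs_neg, abs_one, one_pow, one_mul, abs_of_pos (by positivity),
    abs_of_pos (by positivity)]
  have h1 : x / (y * (x + y)) ≤ x / y ^ 2 := by
    gcongr; nlinarith
  have h2 : x / ((x + 2 * y) * (x + y)) ≤ x / y ^ 2 := by
    gcongr; nlinarith
  calc _ ≤ x / y ^ 2 + x / y ^ 2 := add_le_add h1 h2
    _ = _ := by ring

lemma pairKer_tsum (m : ℕ) : ∑' d, pairKer (m + 1) (d + 1) = 0 := by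
  have hs : Summable fun d => pairKer (m + 1) (d + 1) := by
    refine Summable.of_norm_bounded (Summable.mul_left _ ?_) (pairKer_bound m)
    exact (summable_nat_add_iff 1).2 (Real.summable_one_div_nat_pow.2 one_lt_two)
  exact tendsto_nhds_unique hs.tendsto_sum_tsum_nat (pairKer_tendsto (m + 1))

/-- Summing over `n` first, every coefficient of `m⁻ᵉ` vanishes by `pairKer_tsum`. -/
lemma hasSum_U (e : ℕ) (he : 3 ≤ e) :
    HasSum (fun n : ℕ => ∑ m ∈ Finset.Ioo 0 n, 1 / (m : ℝ) ^ e * pairKer m (n - m)) 0 := by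
  have h := hasSum_triangle (fun m n : ℕ => 1 / (m : ℝ) ^ e * pairKer m (n - m)) ?_
  · simpa only [Nat.add_sub_cancel_left, tsum_mul_left, pairKer_tsum, mul_zero, tsum_zero] using h
  · refine Summable.of_norm_bounded (summable_sq_prod.mul_left 2) fun p => ?_
    simp only [Nat.add_sub_cancel_left]
    rw [norm_mul, Real.norm_of_nonneg (by positivity), Real.norm_eq_abs]
    calc _ ≤ 1 / ((p.1 + 1 : ℕ) : ℝ) ^ 3 *
          (2 * ((p.1 + 1 : ℕ) : ℝ) * (1 / ((p.2 + 1 : ℕ) : ℝ) ^ 2)) := by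
          refine mul_le_mul ?_ (pairKer_bound _ _) (abs_nonneg _) (by positivity)
          apply one_div_le_one_div_of_le (by positivity)
          exact pow_le_pow_right₀ (by simp) he
      _ = _ := by field_simp

/-! ### Partial fractions -/

lemma geom (e : ℕ) (x y : ℝ) (hx : 0 < x) (hxy : x < y) :
    ∑ j ∈ Finset.Icc 1 e, 1 / (y ^ j * x ^ (e + 1 - j)) = (1 / x ^ e - 1 / y ^ e) / (y - x) := by
  have hy : 0 < y := hx.trans hxy
  have hd : y - x ≠ 0 := by linarith
  induction e with
  | zero => simp
  | succ e ih =>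
    rw [Finset.sum_Icc_succ_top (by omega)]
    have : ∑ j ∈ Finset.Icc 1 e, 1 / (y ^ j * x ^ (e + 1 + 1 - j))
        = (∑ j ∈ Finset.Icc 1 e, 1 / (y ^ j * x ^ (e + 1 - j))) / x := by
      rw [Finset.sum_div]
      refine Finset.sum_congr rfl fun j hj => ?_
      rw [Finset.mem_Icc] at hj
      rw [show e + 1 + 1 - j = e + 1 - j + 1 by omega, pow_succ, div_div, mul_assoc]
    rw [this, ih, show e + 1 + 1 - (e + 1) = 1 by omega]
    field_simp
    ring

/-- Partial fractions of the summand of the alternating double sum. -/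
lemma sum_T (e m n : ℕ) (he : 3 ≤ e) (hm : 0 < m) (hmn : m < n) :
    ∑ k ∈ Finset.Icc 2 (e - 1), 1 / ((n : ℝ) ^ k * (m : ℝ) ^ (e + 1 - k))
      = 1 / (m : ℝ) ^ e * (1 / ((n : ℝ) - m) - 1 / n)
        - 1 / (n : ℝ) ^ e * (1 / ((n : ℝ) - m) + 1 / m) := by
  have h := geom e m n (by exact_mod_cast hm) (by exact_mod_cast hmn)
  obtain ⟨e, rfl⟩ : ∃ f, e = f + 1 := ⟨e - 1, by omega⟩
  rw [Finset.sum_Icc_succ_top (by omega), ← Finset.add_sum_Ioc_eq_sum_Icc (by omega),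
    ← Finset.Icc_add_one_left_eq_Ioc, show e + 1 + 1 - (e + 1) = 1 by omega,
    show e + 1 + 1 - 1 = e + 1 by omega, pow_one, pow_one, ← one_div_mul_one_div,
    ← one_div_mul_one_div] at h
  rw [Nat.add_sub_cancel]
  simp only [Nat.reduceAdd] at h
  linear_combination h

/-- Partial fractions of the summand of the weighted double sum; it is a geometric sum in `2n`
and `m`. -/
lemma sum_S (e m n : ℕ) (he : 3 ≤ e) (hm : 0 < m) (hmn : m < n) :
    ∑ k ∈ Finset.Icc 2 e, 2 / (2 : ℝ) ^ k * (1 / ((n : ℝ) ^ k * (m : ℝ) ^ (e + 1 - k)))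
      = 1 / (m : ℝ) ^ e * (2 / (2 * (n : ℝ) - m) - 1 / n)
        - 2 / (2 * (n : ℝ)) ^ e * (1 / (2 * (n : ℝ) - m)) := by
  have h0 : (m : ℝ) < n := by exact_mod_cast hmn
  have h1 : (0 : ℝ) < m := by exact_mod_cast hm
  have h := geom e m (2 * n) h1 (by linarith)
  rw [← Finset.add_sum_Ioc_eq_sum_Icc (by omega), ← Finset.Icc_add_one_left_eq_Ioc,
    show e + 1 - 1 = e by omega, pow_one, ← one_div_mul_one_div, ← one_div_mul_one_div] at h
  simp only [Nat.reduceAdd] at h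
  have h2 : ∑ k ∈ Finset.Icc 2 e, 2 / (2 : ℝ) ^ k * (1 / ((n : ℝ) ^ k * (m : ℝ) ^ (e + 1 - k)))
      = 2 * ∑ k ∈ Finset.Icc 2 e, 1 / ((2 * (n : ℝ)) ^ k * (m : ℝ) ^ (e + 1 - k)) := by
    rw [Finset.mul_sum]
    refine Finset.sum_congr rfl fun k _ => ?_
    rw [mul_pow, mul_assoc, ← one_div_mul_one_div (2 ^ k : ℝ)]
    ring
  rw [h2]
  linear_combination 2 * h
/-! ### Alternating harmonic numbers -/

/-- The alternating harmonic number `∑_{0<m<n} (-1)^m / m`. -/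
noncomputable def altH (n : ℕ) : ℝ := ∑ m ∈ Finset.Ioo 0 n, (-1 : ℝ) ^ m * (1 / (m : ℝ))

lemma altH_reflect (n : ℕ) :
    ∑ m ∈ Finset.Ioo 0 n, (-1 : ℝ) ^ (m + n) * (1 / ((n : ℝ) - m)) = altH n := by
  rw [altH]
  refine Finset.sum_bij (fun m _ => n - m) ?_ ?_ ?_ ?_
  · intro m hm
    rw [Finset.mem_Ioo] at *
    omega
  · intro m hm m' hm' h
    rw [Finset.mem_Ioo] at *
    omega
  · intro m hm
    rw [Finset.mem_Ioo] at hm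
    exact ⟨n - m, by rw [Finset.mem_Ioo]; omega, by omega⟩
  · intro m hm
    rw [Finset.mem_Ioo] at hm
    rw [Nat.cast_sub hm.2.le, show m + n = n - m + 2 * m by omega, pow_add,
      (even_two_mul m).neg_one_pow, mul_one]

lemma altH_abs_le (n : ℕ) : |altH n| ≤ n := by
  refine (Finset.abs_sum_le_sum_abs _ _).trans ?_
  refine (Finset.sum_le_card_nsmul _ _ 1 fun m hm => ?_).trans ?_
  · rw [Finset.mem_Ioo] at hm
    rw [abs_mul, abs_pow, abs_neg, abs_one, one_pow, one_mul, abs_of_nonneg (by positivity)]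
    rw [div_le_one (by exact_mod_cast hm.1)]
    exact_mod_cast hm.1
  · simp

/-- In terms of `N = n + 1`: `∑_{0<m<2N} (-1)^m/m + ∑_{0<m<N} 1/(2N-m) = -1/N`. -/
lemma altH_two_mul (n : ℕ) :
    altH (2 * n + 2) + ∑ m ∈ Finset.Ioo 0 (n + 1), 1 / (2 * ((n + 1 : ℕ) : ℝ) - m)
      = - (1 / ((n + 1 : ℕ) : ℝ)) := by
  have h1 : ∑ m ∈ Finset.Ioo 0 (n + 1), 1 / (2 * ((n + 1 : ℕ) : ℝ) - m)
      = ∑ i ∈ Finset.range n, 1 / (((n + 2 + i : ℕ) : ℝ)) := by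
    refine Finset.sum_bij (fun m _ => n - m) ?_ ?_ ?_ ?_
    · intro m hm
      rw [Finset.mem_Ioo] at hm
      rw [Finset.mem_range]
      omega
    · intro m hm m' hm' h
      rw [Finset.mem_Ioo] at *
      omega
    · intro m hm
      rw [Finset.mem_range] at hm
      exact ⟨n - m, by rw [Finset.mem_Ioo]; omega, by omega⟩
    · intro m hm
      rw [Finset.mem_Ioo] at hm
      push_cast [Nat.cast_sub (show m ≤ n by omega)]
      congr 1
      ring
  have h2 := Finset.sum_range_add (fun i : ℕ => 1 / (i : ℝ)) (n + 2) n
  rw [h1, altH, sum_Ioo_eq_range _ (by simp)]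
  rw [← sub_eq_iff_eq_add'] at h2
  rw [← h2, show n + 2 + n = 2 * n + 2 by ring]
  clear h1 h2
  induction n with
  | zero => norm_num [Finset.sum_range_succ]
  | succ n ih =>
    have e1 : (-1 : ℝ) ^ (2 * n + 2) = 1 := Even.neg_one_pow ⟨n + 1, by ring⟩
    rw [show 2 * (n + 1) + 2 = 2 * n + 2 + 1 + 1 by ring]
    rw [Finset.sum_range_succ _ (2 * n + 2 + 1), Finset.sum_range_succ _ (2 * n + 2),
      Finset.sum_range_succ _ (2 * n + 2 + 1), Finset.sum_range_succ _ (2 * n + 2),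
      show n + 1 + 2 = n + 2 + 1 by ring, Finset.sum_range_succ _ (n + 2), pow_succ (-1 : ℝ) (2 * n + 2), e1]
    have e2 : (1 : ℝ) / ((2 * n + 2 : ℕ) : ℝ) = 1 / 2 * (1 / ((n + 1 : ℕ) : ℝ)) := by
      push_cast
      rw [one_div_mul_one_div]
      congr 1
      ring
    rw [e2]
    push_cast at *
    rw [show (n : ℝ) + 1 + 1 = n + 2 by ring]
    linear_combination ih

/-! ### The weighted sum formula -/

/-- The weighted double sum plus the alternating one, in weight `e + 1`. After partial fractions the
terms with `m⁻ᵉ` cancel (`hasSum_U`), and those with `n⁻ᵉ` collapse by `altH_two_mul`. -/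
lemma core (e : ℕ) (he : 3 ≤ e) :
    (∑' n : ℕ, ∑ m ∈ Finset.Ioo 0 n,
        ∑ k ∈ Finset.Icc 2 e, 2 / (2 : ℝ) ^ k * (1 / ((n : ℝ) ^ k * (m : ℝ) ^ (e + 1 - k))))
      + (∑' n : ℕ, ∑ m ∈ Finset.Ioo 0 n, (-1 : ℝ) ^ (m + n) *
        ∑ k ∈ Finset.Icc 2 (e - 1), 1 / ((n : ℝ) ^ k * (m : ℝ) ^ (e + 1 - k)))
      = 4 / 2 ^ (e + 1) * rzeta (e + 1) := by
  have hS : Summable fun n : ℕ => ∑ m ∈ Finset.Ioo 0 n,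
      ∑ k ∈ Finset.Icc 2 e, 2 / (2 : ℝ) ^ k * (1 / ((n : ℝ) ^ k * (m : ℝ) ^ (e + 1 - k))) := by
    simp only [Finset.sum_comm (t := Finset.Icc 2 e), ← Finset.mul_sum]
    refine summable_sum fun k hk => Summable.mul_left _ ?_
    rw [Finset.mem_Icc] at hk
    simpa using summable_dbl k (e + 1 - k) (fun _ _ => 1) (by simp) hk.1 (by omega) (by omega)
  have hT : Summable fun n : ℕ => ∑ m ∈ Finset.Ioo 0 n, (-1 : ℝ) ^ (m + n) *
      ∑ k ∈ Finset.Icc 2 (e - 1), 1 / ((n : ℝ) ^ k * (m : ℝ) ^ (e + 1 - k)) := by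
    simp only [Finset.mul_sum, Finset.sum_comm (t := Finset.Icc 2 (e - 1))]
    refine summable_sum fun k hk => ?_
    rw [Finset.mem_Icc] at hk
    exact summable_dbl k (e + 1 - k) (fun m n => (-1) ^ (m + n)) (by simp) hk.1 (by omega) (by omega)
  -- The terms carrying `n⁻ᵉ` are what remains of `hasSum_U` after removing both double sums.
  have hW := ((hasSum_U e he).sub hS.hasSum).sub hT.hasSum
  have hWn : ∀ n : ℕ, (∑ m ∈ Finset.Ioo 0 n, 1 / (m : ℝ) ^ e * pairKer m (n - m))
      - (∑ m ∈ Finset.Ioo 0 n, ∑ k ∈ Finset.Icc 2 e,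
          2 / (2 : ℝ) ^ k * (1 / ((n : ℝ) ^ k * (m : ℝ) ^ (e + 1 - k))))
      - (∑ m ∈ Finset.Ioo 0 n, (-1 : ℝ) ^ (m + n) *
          ∑ k ∈ Finset.Icc 2 (e - 1), 1 / ((n : ℝ) ^ k * (m : ℝ) ^ (e + 1 - k)))
      = 1 / (n : ℝ) ^ e * (1 + (-1) ^ n) * altH n
        + 2 / (2 * (n : ℝ)) ^ e * ∑ m ∈ Finset.Ioo 0 n, 1 / (2 * (n : ℝ) - m) := by
    intro n
    have h1 : 1 / (n : ℝ) ^ e * (1 + (-1) ^ n) * altH n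
        = 1 / (n : ℝ) ^ e * ∑ m ∈ Finset.Ioo 0 n, (-1 : ℝ) ^ (m + n) * (1 / ((n : ℝ) - m))
          + 1 / (n : ℝ) ^ e * (-1) ^ n * ∑ m ∈ Finset.Ioo 0 n, (-1 : ℝ) ^ m * (1 / (m : ℝ)) := by
      rw [altH_reflect, ← altH]
      ring
    rw [h1, Finset.mul_sum, Finset.mul_sum, Finset.mul_sum, ← Finset.sum_sub_distrib,
      ← Finset.sum_sub_distrib, ← Finset.sum_add_distrib, ← Finset.sum_add_distrib]
    refine Finset.sum_congr rfl fun m hm => ?_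
    rw [Finset.mem_Ioo] at hm
    rw [sum_S e m n he hm.1 hm.2, sum_T e m n he hm.1 hm.2, pairKer, Nat.cast_sub hm.2.le,
      show m + n = n - m + 2 * m by omega, pow_add, (even_two_mul m).neg_one_pow, mul_one]
    have h2 : (-1 : ℝ) ^ (n - m) = (-1) ^ n * (-1) ^ m := by
      rw [← pow_add, show n + m = n - m + 2 * m by omega, pow_add, (even_two_mul m).neg_one_pow,
        mul_one]
    rw [h2, add_sub_cancel, show (m : ℝ) + 2 * (n - m) = 2 * n - m by ring]
    ring
  simp only [hWn] at hW
  have hW1 : Summable fun n : ℕ => 1 / (n : ℝ) ^ e * (1 + (-1) ^ n) * altH n := by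
    refine Summable.of_norm_bounded
      ((Real.summable_one_div_nat_pow.2 one_lt_two).mul_left 2) fun n => ?_
    rcases Nat.eq_zero_or_pos n with rfl | hn
    · simp [show e ≠ 0 by omega]
    have hn' : (1 : ℝ) ≤ n := by exact_mod_cast hn
    rw [norm_mul, norm_mul, Real.norm_of_nonneg (by positivity)]
    have h2 : ‖(1 : ℝ) + (-1) ^ n‖ ≤ 2 := (norm_add_le _ _).trans (by norm_num)
    calc _ ≤ 1 / (n : ℝ) ^ 3 * 2 * n := by
          refine mul_le_mul (mul_le_mul ?_ h2 (norm_nonneg _) (by positivity)) (altH_abs_le n)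
            (norm_nonneg _) (by positivity)
          exact one_div_le_one_div_of_le (by positivity) (pow_le_pow_right₀ hn' he)
      _ = _ := by field_simp
  have hW2 := hW.summable.sub hW1
  simp only [add_sub_cancel_left] at hW2
  have inj : Function.Injective fun n : ℕ => 2 * n := fun a b h => by simpa using h
  -- The factor `1 + (-1)^n` keeps only even indices, which match `(2n)⁻ᵉ` in the other part.
  have heven := inj.tsum_eq (f := fun n : ℕ => 1 / (n : ℝ) ^ e * (1 + (-1) ^ n) * altH n) (by
    intro n hn
    rcases Nat.even_or_odd n with ⟨c, hc⟩ | hc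
    · exact ⟨c, by simp; omega⟩
    · exact absurd (by simp only [hc.neg_one_pow]; ring) hn)
  have hcomb : ∀ n : ℕ, 1 / ((2 * n : ℕ) : ℝ) ^ e * (1 + (-1) ^ (2 * n)) * altH (2 * n)
      + 2 / (2 * (n : ℝ)) ^ e * ∑ m ∈ Finset.Ioo 0 n, 1 / (2 * (n : ℝ) - m)
      = -(4 / 2 ^ (e + 1)) * (1 / (n : ℝ) ^ (e + 1)) := by
    intro n
    rcases n with _ | n
    · simp [show e ≠ 0 by omega]
    rw [(even_two_mul _).neg_one_pow]
    have h := altH_two_mul n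
    rw [show 2 * (n + 1) = 2 * n + 2 by ring]
    have h3 : ((2 * n + 2 : ℕ) : ℝ) = 2 * ((n + 1 : ℕ) : ℝ) := by push_cast; ring
    rw [h3]
    have h4 : (4 / 2 ^ (e + 1)) * (1 / ((n + 1 : ℕ) : ℝ) ^ (e + 1))
        = 2 / (2 * ((n + 1 : ℕ) : ℝ)) ^ e * (1 / ((n + 1 : ℕ) : ℝ)) := by
      rw [mul_pow]
      field_simp
      ring
    linear_combination 2 / (2 * ((n + 1 : ℕ) : ℝ)) ^ e * h - h4
  have h5 := hW.tsum_eq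
  have hW1' := hW1.comp_injective inj
  simp only [Function.comp_def] at hW1'
  rw [hW1.tsum_add hW2, ← heven, ← hW1'.tsum_add hW2] at h5
  simp only [hcomb, tsum_mul_left] at h5
  unfold rzeta
  linarith

/-- The weighted sum formula in arbitrary weight `e + 1 ≥ 4`, with the products `η(k) η(e+1-k)`
summed over the full symmetric range; here `η(k) = (1 - 2^(1-k)) ζ(k)`. -/
lemma weighted_sum (e : ℕ) (he : 3 ≤ e) :
    ∑ j ∈ Finset.Icc 2 e, 2 / (2 : ℝ) ^ j * dzeta j (e + 1 - j)
      = (1 / 2) * ((8 / 2 ^ (e + 1) + (e - 2)) * rzeta (e + 1)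
        - ∑ k ∈ Finset.Icc 2 (e - 1), ((1 - 2 / 2 ^ k) * rzeta k)
            * ((1 - 2 / 2 ^ (e + 1 - k)) * rzeta (e + 1 - k))) := by
  have hc := core e he
  set D : ℕ → ℕ → ℝ := fun a b => ∑' n : ℕ, ∑ m ∈ Finset.Ioo 0 n,
    (-1 : ℝ) ^ (m + n) * (1 / ((n : ℝ) ^ a * (m : ℝ) ^ b)) with hDdef
  have h1 : ∑' n : ℕ, ∑ m ∈ Finset.Ioo 0 n,
        ∑ k ∈ Finset.Icc 2 e, 2 / (2 : ℝ) ^ k * (1 / ((n : ℝ) ^ k * (m : ℝ) ^ (e + 1 - k)))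
      = ∑ j ∈ Finset.Icc 2 e, 2 / (2 : ℝ) ^ j * dzeta j (e + 1 - j) := by
    simp only [Finset.sum_comm (t := Finset.Icc 2 e), ← Finset.mul_sum]
    rw [Summable.tsum_finsetSum]
    · simp only [tsum_mul_left, dzeta]
    · intro k hk
      refine Summable.mul_left _ ?_
      rw [Finset.mem_Icc] at hk
      simpa using summable_dbl k (e + 1 - k) (fun _ _ => 1) (by simp) hk.1 (by omega) (by omega)
  have h2 : ∑' n : ℕ, ∑ m ∈ Finset.Ioo 0 n, (-1 : ℝ) ^ (m + n) *
        ∑ k ∈ Finset.Icc 2 (e - 1), 1 / ((n : ℝ) ^ k * (m : ℝ) ^ (e + 1 - k))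
      = ∑ k ∈ Finset.Icc 2 (e - 1), D k (e + 1 - k) := by
    simp only [Finset.mul_sum, Finset.sum_comm (t := Finset.Icc 2 (e - 1))]
    rw [Summable.tsum_finsetSum]
    intro k hk
    rw [Finset.mem_Icc] at hk
    exact summable_dbl k (e + 1 - k) (fun m n => (-1) ^ (m + n)) (by simp) hk.1 (by omega) (by omega)
  have h3 : ∑ k ∈ Finset.Icc 2 (e - 1), D (e + 1 - k) k
      = ∑ k ∈ Finset.Icc 2 (e - 1), D k (e + 1 - k) := by
    refine Finset.sum_bij (fun k _ => e + 1 - k) ?_ ?_ ?_ ?_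
    · intro k hk
      rw [Finset.mem_Icc] at *
      omega
    · intro k hk l hl h
      rw [Finset.mem_Icc] at *
      omega
    · intro k hk
      rw [Finset.mem_Icc] at hk
      exact ⟨e + 1 - k, by rw [Finset.mem_Icc]; omega, by omega⟩
    · intro k hk
      rw [Finset.mem_Icc] at hk
      rw [show e + 1 - (e + 1 - k) = k by omega]
  have h4 : ∑ k ∈ Finset.Icc 2 (e - 1), ((1 - 2 / 2 ^ k) * rzeta k)
            * ((1 - 2 / 2 ^ (e + 1 - k)) * rzeta (e + 1 - k))
      = (e - 2) * rzeta (e + 1) + ∑ k ∈ Finset.Icc 2 (e - 1), D k (e + 1 - k)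
        + ∑ k ∈ Finset.Icc 2 (e - 1), D (e + 1 - k) k := by
    have hcard : ((e : ℝ) - 2) * rzeta (e + 1) = ∑ k ∈ Finset.Icc 2 (e - 1), rzeta (e + 1) := by
      rw [Finset.sum_const, Nat.card_Icc, nsmul_eq_mul, show e - 1 + 1 - 2 = e - 2 by omega,
        Nat.cast_sub (by omega)]
      norm_num
    rw [hcard, ← Finset.sum_add_distrib, ← Finset.sum_add_distrib]
    refine Finset.sum_congr rfl fun k hk => ?_
    rw [Finset.mem_Icc] at hk
    have h := stuffle k (e + 1 - k) hk.1 (by omega)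
    rw [alt_zeta k hk.1, alt_zeta (e + 1 - k) (by omega), neg_mul_neg,
      show k + (e + 1 - k) = e + 1 by omega] at h
    exact h
  rw [h1, h2] at hc
  rw [h4, h3]
  linear_combination hc

theorem stmt14 (s : ℕ) (hs : 2 ≤ s) :
    ∑ j ∈ Finset.Icc 2 (2 * s - 1), (2 : ℝ) ^ (1 - (j : ℤ)) * dzeta j (2 * s - j)
      = (1 / 2) * (1 - (2 : ℝ) ^ (1 - (s : ℤ))) ^ 2 * rzeta s ^ 2
        + (1 / 2) * ((2 : ℝ) ^ (3 - 2 * (s : ℤ)) + 2 * (s : ℝ) - 3) * rzeta (2 * s)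
        - ∑ k ∈ Finset.Icc 2 s,
            ((2 : ℝ) ^ ((k : ℤ) - 1) - 1) * ((2 : ℝ) ^ (1 - (k : ℤ)) - (4 : ℝ) ^ (1 - (s : ℤ)))
              * rzeta k * rzeta (2 * s - k) := by
  have h := weighted_sum (2 * s - 1) (by omega)
  rw [show 2 * s - 1 + 1 = 2 * s by omega, show 2 * s - 1 - 1 = 2 * s - 2 by omega] at h
  have z1 : ∀ k : ℕ, (2 : ℝ) ^ (1 - (k : ℤ)) = 2 / 2 ^ k := by
    intro k
    rw [zpow_sub₀ two_ne_zero, zpow_one, zpow_natCast]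
  have z3 : (2 : ℝ) ^ (3 - 2 * (s : ℤ)) = 8 / 2 ^ (2 * s) := by
    rw [show 2 * (s : ℤ) = ((2 * s : ℕ) : ℤ) by push_cast; ring, zpow_sub₀ two_ne_zero,
      zpow_natCast]
    norm_num
  have z4 : (4 : ℝ) ^ (1 - (s : ℤ)) = 4 / 2 ^ (2 * s) := by
    rw [zpow_sub₀ four_ne_zero, zpow_one, zpow_natCast, pow_mul]
    norm_num
  set F : ℕ → ℝ := fun k => ((1 - 2 / 2 ^ k) * rzeta k)
            * ((1 - 2 / 2 ^ (2 * s - k)) * rzeta (2 * s - k)) with hF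
  -- The coefficient `(2^(k-1) - 1)(2^(1-k) - 4^(1-s))` factors as `(1 - 2^(1-k))(1 - 2^(1-(2s-k)))`.
  have hterm : ∀ k ∈ Finset.Icc 2 s,
      ((2 : ℝ) ^ ((k : ℤ) - 1) - 1) * ((2 : ℝ) ^ (1 - (k : ℤ)) - (4 : ℝ) ^ (1 - (s : ℤ)))
              * rzeta k * rzeta (2 * s - k) = F k := by
    intro k hk
    rw [Finset.mem_Icc] at hk
    have z2 : (2 : ℝ) ^ ((k : ℤ) - 1) = 2 ^ k / 2 := by
      rw [zpow_sub₀ two_ne_zero, zpow_one, zpow_natCast]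
    have z5 : (2 : ℝ) ^ (2 * s) = 2 ^ k * 2 ^ (2 * s - k) := by
      rw [← pow_add, show k + (2 * s - k) = 2 * s by omega]
    simp only [hF]
    rw [z1, z2, z4, z5]
    field_simp
    ring
  rw [Finset.sum_congr rfl hterm, z1, z3]
  simp only [z1]
  rw [h]
  have hsplit : ∑ k ∈ Finset.Icc 2 (2 * s - 2), F k + F s = 2 * ∑ k ∈ Finset.Icc 2 s, F k := by
    have e1 : ∑ k ∈ Finset.Icc 2 (2 * s - 2), F k
        = ∑ k ∈ Finset.Icc 2 s, F k + ∑ k ∈ Finset.Ioc s (2 * s - 2), F k := by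
      rw [← Finset.sum_union]
      · congr 1
        ext k
        simp only [Finset.mem_union, Finset.mem_Icc, Finset.mem_Ioc]
        omega
      · rw [Finset.disjoint_left]
        intro k hk hk'
        rw [Finset.mem_Icc] at hk
        rw [Finset.mem_Ioc] at hk'
        omega
    have e2 : ∑ k ∈ Finset.Ioc s (2 * s - 2), F k = ∑ k ∈ Finset.Ico 2 s, F k := by
      refine Finset.sum_bij (fun k _ => 2 * s - k) ?_ ?_ ?_ ?_
      · intro k hk
        rw [Finset.mem_Ioc] at hk
        rw [Finset.mem_Ico]
        omega
      · intro k hk l hl h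
        rw [Finset.mem_Ioc] at *
        omega
      · intro k hk
        rw [Finset.mem_Ico] at hk
        exact ⟨2 * s - k, by rw [Finset.mem_Ioc]; omega, by omega⟩
      · intro k hk
        rw [Finset.mem_Ioc] at hk
        simp only [hF]
        rw [show 2 * s - (2 * s - k) = k by omega, mul_comm]
    have e3 : ∑ k ∈ Finset.Ico 2 s, F k + F s = ∑ k ∈ Finset.Icc 2 s, F k :=
      Finset.sum_Ico_add_eq_sum_Icc hs
    linarith
  have hFs : F s = ((1 - 2 / 2 ^ s) * rzeta s) ^ 2 := by
    simp only [hF]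
    rw [show 2 * s - s = s by omega, sq]
  have hcast : ((2 * s - 1 : ℕ) : ℝ) = 2 * s - 1 := by
    rw [Nat.cast_sub (by omega)]
    norm_num
  rw [hcast]
  linear_combination (-1 / 2) * hsplit + (1 / 2) * hFs
end
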